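/- Let S = {S_i(x,y) = (c_i x + u_i, d_i x + b_i y + v_i)}_{i=1}^N be a triangular self-affine IFS on ℝ² with 0 < c_i < 1, 0 < b_i < 1, attractor Λ. Let s_x solve Σ_{i=1}^N c_i^{s_x} = 1 and s_y solve Σ_{i=1}^N b_i^{s_y} = 1; set ŝ_x = min(s_x,1), ŝ_y = min(s_y,1), and let d_x, d_y solve Σ c_i^{ŝ_x} b_i^{d_x−ŝ_x} = 1 and Σ b_i^{ŝ_y} c_i^{d_y−ŝ_y} = 1. Assume direction-x dominates, i.e. d_x ≥ d_y, assume Σ_{i=1}^N c_i < 1, and assume the horizontal IFS H = {h_i(x) = c_i x + u_i}_{i=1}^N satisfies Hochman's exponential separation condition. Then dim_H Λ = s_x. -/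

import Mathlib

/-!
Upper bound. Deep compositions of the triangular maps have diagonal entries `∏ cᵢ` and `∏ bᵢ`, and
a linear rescaling of the second coordinate makes their off-diagonal entries as small as we like.
So the images of `Λ` under words of a fixed large length behave as if their diameters were
`max (∏ cᵢ) (∏ bᵢ)`, and the natural cover gives `dim Λ ≤ s` as soon as both `∑ cᵢ ^ s < 1` and
`∑ bᵢ ^ s < 1`. Dominance of direction `x` together with `∑ cᵢ < 1` forces `s_y ≤ s_x = d_x < 1`, so
every `s > s_x` qualifies.

Lower bound. The projection of `Λ` to the `x`-axis is invariant under the horizontal system, so it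
is enough to bound the dimension of that projection from below. Words with a common letter count
have equal contraction ratios, and by pigeonhole some letter count retains almost all of the
dimension `s_x < 1`; this reduces the claim to homogeneous systems. If the entropy of the
self-similar measure of such a system grew at less than the full rate `log card`, exponential
separation would leave a definite amount of entropy at finer scales, and convolving with it would
raise the entropy of the measure at a positive proportion of scales (Hochman's inverse theorem),
which is impossible for a self-similar measure of dimension less than one. Full entropy produces
words in almost the full number whose images are separated, and these carry a Cantor subset of
almost full dimension.
-/

open MeasureTheory Filter Set Topology
open scoped ENNReal

noncomputable section

/-- Composition of the affine maps `x ↦ λᵢ x + tᵢ` along a finite word. -/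
def psiWord {N : ℕ} (lam t : Fin N → ℝ) : List (Fin N) → ℝ → ℝ
  | [] => id
  | i :: w => fun x => lam i * psiWord lam t w x + t i

/-- Hochman's exponential separation condition for the self-similar IFS `{x ↦ λᵢ x + tᵢ}`:
there are `ε > 0` and `n_k ↑ ∞` such that any two distinct words of length `n_k` whose
compositions have equal derivative have translation parts at distance `> ε^{n_k}`. -/
def HochmanESC (N : ℕ) (lam t : Fin N → ℝ) : Prop :=
  ∃ ε > (0 : ℝ), ∃ nk : ℕ → ℕ, StrictMono nk ∧
    ∀ k, ∀ w1 w2 : Fin (nk k) → Fin N, w1 ≠ w2 →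
      (∏ m, lam (w1 m)) = (∏ m, lam (w2 m)) →
        ε ^ (nk k) < |psiWord lam t (List.ofFn w1) 0 - psiWord lam t (List.ofFn w2) 0|

/-- A general (non-homogeneous) triangular affine map
`S_i(x,y) = (cᵢ x + uᵢ, dᵢ x + bᵢ y + vᵢ)`. -/
def SmapGen {N : ℕ} (cv bv u v d : Fin N → ℝ) (i : Fin N) (p : ℝ × ℝ) : ℝ × ℝ :=
  (cv i * p.1 + u i, d i * p.1 + bv i * p.2 + v i)

section

open Real

/-! ### Entropy of finitely supported distributions -/

section Distribution

variable {α ι κ : Type*} {s : Finset ι} {w : ι → ℝ}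

/-- The finitely supported probability distributions on `α`, as elements of the real algebra of
`α`: when `α` is a group, the product of this algebra is the convolution of distributions, so that
the law of a sum of independent random variables is a product. -/
structure IsProb (p : AddMonoidAlgebra ℝ α) : Prop where
  coeff_nonneg : ∀ x, 0 ≤ p.coeff x
  sum_coeff : p.coeff.sum (fun _ v => v) = 1

/-- The Shannon entropy, in natural logarithms. -/
def entropy (p : AddMonoidAlgebra ℝ α) : ℝ := p.coeff.sum fun _ v => negMulLog v

/-- The law of a random variable equal to `a`. -/
def pointMass (a : α) : AddMonoidAlgebra ℝ α := AddMonoidAlgebra.single a 1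

lemma coeff_pointMass [DecidableEq α] (a x : α) :
    (pointMass a).coeff x = if a = x then 1 else 0 := by
  rw [pointMass, AddMonoidAlgebra.coeff_single, Finsupp.single_apply]

lemma IsProb.pointMass (a : α) : IsProb (pointMass a) where
  coeff_nonneg x := by classical rw [coeff_pointMass]; split_ifs <;> norm_num
  sum_coeff := by
    rw [_root_.pointMass, AddMonoidAlgebra.coeff_single, Finsupp.sum_single_index rfl]

lemma entropy_pointMass (a : α) : entropy (pointMass a) = 0 := by
  rw [entropy, pointMass, AddMonoidAlgebra.coeff_single,
    Finsupp.sum_single_index negMulLog_zero, negMulLog_one]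

lemma entropy_eq_sum (p : AddMonoidAlgebra ℝ α) {S : Finset α} (hS : p.coeff.support ⊆ S) :
    entropy p = ∑ x ∈ S, negMulLog (p.coeff x) :=
  Finsupp.sum_of_support_subset _ hS _ fun _ _ => negMulLog_zero

lemma IsProb.sum_eq_one {p : AddMonoidAlgebra ℝ α} (hp : IsProb p) {S : Finset α}
    (hS : p.coeff.support ⊆ S) : ∑ x ∈ S, p.coeff x = 1 := by
  rw [← hp.sum_coeff]
  exact (Finsupp.sum_of_support_subset _ hS (fun _ v => v) fun _ _ => rfl).symm

lemma IsProb.coeff_le_one {p : AddMonoidAlgebra ℝ α} (hp : IsProb p) (x : α) :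
    p.coeff x ≤ 1 := by
  by_cases hx : x ∈ p.coeff.support
  · rw [← hp.sum_eq_one Subset.rfl]
    exact Finset.single_le_sum (f := fun x => p.coeff x) (fun i _ => hp.coeff_nonneg i) hx
  · rw [Finsupp.notMem_support_iff.1 hx]
    exact zero_le_one

lemma IsProb.entropy_nonneg {p : AddMonoidAlgebra ℝ α} (hp : IsProb p) : 0 ≤ entropy p :=
  Finset.sum_nonneg fun x _ => negMulLog_nonneg (hp.coeff_nonneg x) (hp.coeff_le_one x)

lemma coeff_sum_smul (s : Finset ι) (w : ι → ℝ) (p : ι → AddMonoidAlgebra ℝ α) (x : α) :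
    (∑ i ∈ s, w i • p i).coeff x = ∑ i ∈ s, w i * (p i).coeff x := by
  simp [Finsupp.finsetSum_apply]

lemma eq_sum_smul_pointMass (p : AddMonoidAlgebra ℝ α) :
    p = ∑ z ∈ p.coeff.support, p.coeff z • pointMass z := by
  classical
  ext x
  rw [coeff_sum_smul]
  simp [coeff_pointMass]

lemma exists_support_subset (s : Finset ι) (p : ι → AddMonoidAlgebra ℝ α) :
    ∃ S : Finset α, ∀ i ∈ s, (p i).coeff.support ⊆ S := by
  classical
  exact ⟨s.biUnion fun i => (p i).coeff.support, fun i hi =>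
    Finset.subset_biUnion_of_mem (fun i => (p i).coeff.support) hi⟩

lemma support_sum_smul_subset {p : ι → AddMonoidAlgebra ℝ α} {S : Finset α}
    (hS : ∀ i ∈ s, (p i).coeff.support ⊆ S) : (∑ i ∈ s, w i • p i).coeff.support ⊆ S := by
  intro x hx
  rw [Finsupp.mem_support_iff, coeff_sum_smul] at hx
  obtain ⟨i, hi, h⟩ := Finset.exists_ne_zero_of_sum_ne_zero hx
  exact hS i hi (Finsupp.mem_support_iff.2 (right_ne_zero_of_mul h))

lemma IsProb.sum_smul {p : ι → AddMonoidAlgebra ℝ α} (hw : ∀ i ∈ s, 0 ≤ w i)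
    (hw1 : ∑ i ∈ s, w i = 1) (hp : ∀ i ∈ s, IsProb (p i)) : IsProb (∑ i ∈ s, w i • p i) := by
  obtain ⟨S, hS⟩ := exists_support_subset s p
  refine ⟨fun x => ?_, ?_⟩
  · rw [coeff_sum_smul]
    exact Finset.sum_nonneg fun i hi => mul_nonneg (hw i hi) ((hp i hi).coeff_nonneg x)
  · rw [Finsupp.sum_of_support_subset _ (support_sum_smul_subset hS) _ fun _ _ => rfl]
    simp_rw [coeff_sum_smul]
    rw [Finset.sum_comm, ← hw1]
    refine Finset.sum_congr rfl fun i hi => ?_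
    rw [← Finset.mul_sum, (hp i hi).sum_eq_one (hS i hi), mul_one]

/-! ### The log-sum inequality and mutual information -/

lemma mul_log_add_sub_le {u v t : ℝ} (hu : 0 ≤ u) (hv : 0 ≤ v) (huv : v = 0 → u = 0)
    (ht : 0 < t) : u * log t + u - t * v ≤ u * log u - u * log v := by
  rcases hu.eq_or_lt with rfl | hu
  · simpa using mul_nonneg ht.le hv
  have hv : 0 < v := hv.lt_of_ne fun h => hu.ne' (huv h.symm)
  have hlog : log t + log v - log u ≤ t * v / u - 1 := by
    rw [← log_mul ht.ne' hv.ne', ← log_div (by positivity) hu.ne']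
    exact log_le_sub_one_of_pos (by positivity)
  have hmul : u * (t * v / u - 1) = t * v - u := by field_simp
  linarith [mul_le_mul_of_nonneg_left hlog hu.le]

lemma log_sum_inequality (s : Finset ι) (u v : ι → ℝ) (hu : ∀ i ∈ s, 0 ≤ u i)
    (hv : ∀ i ∈ s, 0 ≤ v i) (huv : ∀ i ∈ s, v i = 0 → u i = 0) :
    (∑ i ∈ s, u i) * log (∑ i ∈ s, u i) - (∑ i ∈ s, u i) * log (∑ i ∈ s, v i) ≤
      ∑ i ∈ s, (u i * log (u i) - u i * log (v i)) := by
  rcases (Finset.sum_nonneg hu).eq_or_lt with h | h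
  · have hu0 := (Finset.sum_eq_zero_iff_of_nonneg hu).1 h.symm
    have hzero : ∑ i ∈ s, (u i * log (u i) - u i * log (v i)) = 0 :=
      Finset.sum_eq_zero fun i hi => by simp [hu0 i hi]
    simp [← h, hzero]
  have hV : 0 < ∑ i ∈ s, v i := by
    obtain ⟨i, hi, hui⟩ := Finset.exists_ne_zero_of_sum_ne_zero h.ne'
    exact Finset.sum_pos' hv ⟨i, hi, (hv i hi).lt_of_ne fun h' => hui (huv i hi h'.symm)⟩
  set U := ∑ i ∈ s, u i
  set V := ∑ i ∈ s, v i
  calc U * log U - U * log V = U * log (U / V) + U - U / V * V := by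
        rw [log_div h.ne' hV.ne', div_mul_cancel₀ _ hV.ne']
        ring
    _ = ∑ i ∈ s, (u i * log (U / V) + u i - U / V * v i) := by
        rw [Finset.sum_sub_distrib, Finset.sum_add_distrib, ← Finset.sum_mul, ← Finset.mul_sum]
    _ ≤ _ := Finset.sum_le_sum fun i hi =>
        mul_log_add_sub_le (hu i hi) (hv i hi) (huv i hi) (div_pos h hV)

/-- The defect in Jensen's inequality for `-x log x` at the points `a i` with weights `w i`. It is
a sublinear function of `a`. -/
def jensenGap (s : Finset ι) (w a : ι → ℝ) : ℝ :=
  negMulLog (∑ i ∈ s, w i * a i) - ∑ i ∈ s, w i * negMulLog (a i)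

lemma jensenGap_const_mul (s : Finset ι) (w a : ι → ℝ) (c : ℝ) :
    jensenGap s w (fun i => c * a i) = c * jensenGap s w a := by
  have hsum : ∑ i ∈ s, w i * (c * a i) = c * ∑ i ∈ s, w i * a i := by
    rw [Finset.mul_sum]
    exact Finset.sum_congr rfl fun i _ => mul_left_comm _ _ _
  have hlog : ∑ i ∈ s, w i * negMulLog (c * a i) =
      (∑ i ∈ s, w i * a i) * negMulLog c + c * ∑ i ∈ s, w i * negMulLog (a i) := by
    rw [Finset.sum_mul, Finset.mul_sum, ← Finset.sum_add_distrib]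
    exact Finset.sum_congr rfl fun i _ => by rw [negMulLog_mul]; ring
  rw [jensenGap, jensenGap, hsum, hlog, negMulLog_mul]
  ring

lemma jensenGap_eq_sum (s : Finset ι) (w a : ι → ℝ) :
    jensenGap s w a =
      ∑ i ∈ s, w i * (a i * log (a i) - a i * log (∑ j ∈ s, w j * a j)) := by
  simp only [jensenGap, negMulLog, mul_sub, neg_mul, mul_neg, Finset.sum_sub_distrib,
    Finset.sum_neg_distrib, sub_neg_eq_add, ← mul_assoc, ← Finset.sum_mul]
  ring

lemma jensenGap_sum_le {t : Finset κ} {a : ι → κ → ℝ} (hw : ∀ i ∈ s, 0 ≤ w i)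
    (ha : ∀ i ∈ s, ∀ z ∈ t, 0 ≤ a i z) :
    jensenGap s w (fun i => ∑ z ∈ t, a i z) ≤ ∑ z ∈ t, jensenGap s w fun i => a i z := by
  have hsum : ∑ i ∈ s, w i * ∑ z ∈ t, a i z = ∑ z ∈ t, ∑ i ∈ s, w i * a i z := by
    simp_rw [Finset.mul_sum]
    exact Finset.sum_comm
  have hcomm : ∑ z ∈ t, jensenGap s w (fun i => a i z) = ∑ i ∈ s, w i *
      ∑ z ∈ t, (a i z * log (a i z) - a i z * log (∑ j ∈ s, w j * a j z)) := by
    simp_rw [jensenGap_eq_sum, Finset.mul_sum]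
    exact Finset.sum_comm
  rw [hcomm, jensenGap_eq_sum, hsum]
  refine Finset.sum_le_sum fun i hi => ?_
  rcases (hw i hi).eq_or_lt with h | hwi
  · simp [← h]
  have hnn : ∀ z ∈ t, ∀ j ∈ s, 0 ≤ w j * a j z := fun z hz j hj =>
    mul_nonneg (hw j hj) (ha j hj z hz)
  refine mul_le_mul_of_nonneg_left (log_sum_inequality t _ _ (ha i hi)
    (fun z hz => Finset.sum_nonneg (hnn z hz)) fun z hz h0 => ?_) hwi.le
  have := (Finset.sum_eq_zero_iff_of_nonneg (hnn z hz)).1 h0 i hi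
  exact (mul_eq_zero.1 this).resolve_left hwi.ne'

/-- The mutual information between an index drawn with probabilities `w i` and a variable whose
conditional law given the index `i` is `p i`. -/
def mixInfo (s : Finset ι) (w : ι → ℝ) (p : ι → AddMonoidAlgebra ℝ α) : ℝ :=
  entropy (∑ i ∈ s, w i • p i) - ∑ i ∈ s, w i * entropy (p i)

lemma mixInfo_eq_sum_jensenGap {p : ι → AddMonoidAlgebra ℝ α} {S : Finset α}
    (hS : ∀ i ∈ s, (p i).coeff.support ⊆ S) :
    mixInfo s w p = ∑ x ∈ S, jensenGap s w fun i => (p i).coeff x := by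
  have hcond : ∑ i ∈ s, w i * entropy (p i) =
      ∑ x ∈ S, ∑ i ∈ s, w i * negMulLog ((p i).coeff x) := by
    rw [Finset.sum_comm]
    exact Finset.sum_congr rfl fun i hi => by rw [entropy_eq_sum _ (hS i hi), Finset.mul_sum]
  rw [mixInfo, hcond, entropy_eq_sum _ (support_sum_smul_subset hS), ← Finset.sum_sub_distrib]
  simp_rw [coeff_sum_smul]
  rfl

lemma mixInfo_nonneg {p : ι → AddMonoidAlgebra ℝ α} (hw : ∀ i ∈ s, 0 ≤ w i)
    (hw1 : ∑ i ∈ s, w i = 1) (hp : ∀ i ∈ s, IsProb (p i)) : 0 ≤ mixInfo s w p := by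
  obtain ⟨S, hS⟩ := exists_support_subset s p
  rw [mixInfo_eq_sum_jensenGap hS]
  refine Finset.sum_nonneg fun x _ => sub_nonneg.2 ?_
  simpa using concaveOn_negMulLog.le_map_sum hw hw1 (p := fun i => (p i).coeff x)
    fun i hi => (hp i hi).coeff_nonneg x

lemma sum_mul_entropy_le {p : ι → AddMonoidAlgebra ℝ α} (hw : ∀ i ∈ s, 0 ≤ w i)
    (hw1 : ∑ i ∈ s, w i = 1) (hp : ∀ i ∈ s, IsProb (p i)) :
    ∑ i ∈ s, w i * entropy (p i) ≤ entropy (∑ i ∈ s, w i • p i) :=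
  sub_nonneg.1 (mixInfo_nonneg hw hw1 hp)

lemma mixInfo_sum_smul_le {t : Finset κ} {r : κ → ℝ} {p : ι → κ → AddMonoidAlgebra ℝ α}
    (hw : ∀ i ∈ s, 0 ≤ w i) (hr : ∀ z ∈ t, 0 ≤ r z) (hp : ∀ i ∈ s, ∀ z ∈ t, IsProb (p i z)) :
    mixInfo s w (fun i => ∑ z ∈ t, r z • p i z) ≤
      ∑ z ∈ t, r z * mixInfo s w fun i => p i z := by
  obtain ⟨S, hS⟩ := exists_support_subset (s ×ˢ t) fun iz => p iz.1 iz.2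
  have hS' : ∀ z ∈ t, ∀ i ∈ s, (p i z).coeff.support ⊆ S := fun z hz i hi =>
    hS (i, z) (Finset.mem_product.2 ⟨hi, hz⟩)
  calc mixInfo s w (fun i => ∑ z ∈ t, r z • p i z)
      = ∑ x ∈ S, jensenGap s w fun i => ∑ z ∈ t, r z * (p i z).coeff x := by
        rw [mixInfo_eq_sum_jensenGap fun i hi =>
          support_sum_smul_subset fun z hz => hS' z hz i hi]
        simp_rw [coeff_sum_smul]
    _ ≤ ∑ x ∈ S, ∑ z ∈ t, jensenGap s w fun i => r z * (p i z).coeff x :=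
        Finset.sum_le_sum fun x _ => jensenGap_sum_le hw fun i hi z hz =>
          mul_nonneg (hr z hz) ((hp i hi z hz).coeff_nonneg x)
    _ = ∑ z ∈ t, r z * mixInfo s w fun i => p i z := by
        rw [Finset.sum_comm]
        refine Finset.sum_congr rfl fun z hz => ?_
        simp_rw [mixInfo_eq_sum_jensenGap (hS' z hz), jensenGap_const_mul, Finset.mul_sum]

lemma IsProb.entropy_le_sum_mul_neg_log {p : AddMonoidAlgebra ℝ α} (hp : IsProb p)
    {S : Finset α} (hS : p.coeff.support ⊆ S) {q : α → ℝ} (hq : ∀ x ∈ S, 0 < q x)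
    (hq1 : ∑ x ∈ S, q x ≤ 1) : entropy p ≤ ∑ x ∈ S, p.coeff x * -log (q x) := by
  have h := log_sum_inequality S (fun x => p.coeff x) q (fun x _ => hp.coeff_nonneg x)
    (fun x hx => (hq x hx).le) fun x hx h => absurd h (hq x hx).ne'
  have hlog : log (∑ x ∈ S, q x) ≤ 0 :=
    log_nonpos (Finset.sum_nonneg fun x hx => (hq x hx).le) hq1
  rw [hp.sum_eq_one hS, log_one, Finset.sum_sub_distrib] at h
  rw [entropy_eq_sum p hS]
  simp only [negMulLog, mul_neg, neg_mul, Finset.sum_neg_distrib]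
  linarith

lemma IsProb.entropy_le_log_card {p : AddMonoidAlgebra ℝ α} (hp : IsProb p) {S : Finset α}
    (hS : p.coeff.support ⊆ S) : entropy p ≤ log S.card := by
  have hne : (S.card : ℝ) ≠ 0 := by
    rw [Nat.cast_ne_zero, Finset.card_ne_zero]
    exact Finset.nonempty_of_sum_ne_zero (hp.sum_eq_one hS ▸ one_ne_zero)
  refine (hp.entropy_le_sum_mul_neg_log hS (q := fun _ => (S.card : ℝ)⁻¹)
    (fun _ _ => by positivity) (by simp [hne])).trans_eq ?_
  rw [← Finset.sum_mul, hp.sum_eq_one hS, one_mul, log_inv, neg_neg]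

lemma negMulLog_sum_le {a : ι → ℝ} (ha : ∀ i ∈ s, 0 ≤ a i) :
    negMulLog (∑ i ∈ s, a i) ≤ ∑ i ∈ s, negMulLog (a i) := by
  simp only [negMulLog, neg_mul, Finset.sum_neg_distrib, Finset.sum_mul, neg_le_neg_iff]
  refine Finset.sum_le_sum fun i hi => ?_
  rcases (ha i hi).eq_or_lt with h | h
  · simp [← h]
  exact mul_le_mul_of_nonneg_left (log_le_log h (Finset.single_le_sum ha hi)) h.le

lemma sum_negMulLog_le {a : ι → ℝ} (ha : ∀ i ∈ s, 0 ≤ a i) {C : ℝ}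
    (hC : ((s.filter fun i => a i ≠ 0).card : ℝ) ≤ C) :
    ∑ i ∈ s, negMulLog (a i) ≤ negMulLog (∑ i ∈ s, a i) + (∑ i ∈ s, a i) * log C := by
  set s' := s.filter fun i => a i ≠ 0
  have ha' : ∀ i ∈ s', 0 ≤ a i := fun i hi => ha i (Finset.mem_of_mem_filter i hi)
  have hlog : ∑ i ∈ s, negMulLog (a i) = ∑ i ∈ s', negMulLog (a i) :=
    (Finset.sum_filter_of_ne fun i _ h =>
      ne_of_apply_ne negMulLog (h.trans_eq negMulLog_zero.symm)).symm
  have hsum : ∑ i ∈ s, a i = ∑ i ∈ s', a i := (Finset.sum_filter_ne_zero s).symm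
  rw [hlog, hsum]
  rcases s'.eq_empty_or_nonempty with h0 | h0
  · simp [h0]
  have hcard : log s'.card ≤ log C := log_le_log (by exact_mod_cast h0.card_pos) hC
  have h := log_sum_inequality s' a (fun _ => 1) ha' (fun _ _ => zero_le_one)
    fun _ _ h => absurd h one_ne_zero
  simp only [log_one, mul_zero, sub_zero, Finset.sum_const, nsmul_eq_mul, mul_one] at h
  simp only [negMulLog, neg_mul, Finset.sum_neg_distrib]
  linarith [mul_le_mul_of_nonneg_left hcard (Finset.sum_nonneg ha')]

lemma sum_negMulLog_add_sum_mul_entropy {p : ι → AddMonoidAlgebra ℝ α} {S : Finset α}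
    (hp : ∀ i ∈ s, IsProb (p i)) (hS : ∀ i ∈ s, (p i).coeff.support ⊆ S) :
    ∑ i ∈ s, negMulLog (w i) + ∑ i ∈ s, w i * entropy (p i) =
      ∑ x ∈ S, ∑ i ∈ s, negMulLog (w i * (p i).coeff x) := by
  rw [Finset.sum_comm, ← Finset.sum_add_distrib]
  refine Finset.sum_congr rfl fun i hi => ?_
  simp_rw [negMulLog_mul]
  rw [Finset.sum_add_distrib, ← Finset.sum_mul, (hp i hi).sum_eq_one (hS i hi), ← Finset.mul_sum,
    ← entropy_eq_sum _ (hS i hi), one_mul]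

lemma entropy_sum_smul_le {p : ι → AddMonoidAlgebra ℝ α} (hw : ∀ i ∈ s, 0 ≤ w i)
    (hp : ∀ i ∈ s, IsProb (p i)) :
    entropy (∑ i ∈ s, w i • p i) ≤
      ∑ i ∈ s, negMulLog (w i) + ∑ i ∈ s, w i * entropy (p i) := by
  obtain ⟨S, hS⟩ := exists_support_subset s p
  rw [sum_negMulLog_add_sum_mul_entropy hp hS, entropy_eq_sum _ (support_sum_smul_subset hS)]
  refine Finset.sum_le_sum fun x _ => ?_
  rw [coeff_sum_smul]
  exact negMulLog_sum_le fun i hi => mul_nonneg (hw i hi) ((hp i hi).coeff_nonneg x)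

lemma le_entropy_sum_smul_add_log {p : ι → AddMonoidAlgebra ℝ α} (hw : ∀ i ∈ s, 0 ≤ w i)
    (hw1 : ∑ i ∈ s, w i = 1) (hp : ∀ i ∈ s, IsProb (p i)) {C : ℝ}
    (hC : ∀ x, ((s.filter fun i => (p i).coeff x ≠ 0).card : ℝ) ≤ C) :
    ∑ i ∈ s, negMulLog (w i) + ∑ i ∈ s, w i * entropy (p i) ≤
      entropy (∑ i ∈ s, w i • p i) + log C := by
  obtain ⟨S, hS⟩ := exists_support_subset s p
  have hlog : log C = ∑ x ∈ S, (∑ i ∈ s, w i • p i).coeff x * log C := by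
    rw [← Finset.sum_mul, (IsProb.sum_smul hw hw1 hp).sum_eq_one (support_sum_smul_subset hS),
      one_mul]
  rw [sum_negMulLog_add_sum_mul_entropy hp hS, entropy_eq_sum _ (support_sum_smul_subset hS),
    hlog, ← Finset.sum_add_distrib]
  refine Finset.sum_le_sum fun x _ => ?_
  rw [coeff_sum_smul]
  refine sum_negMulLog_le (fun i hi => mul_nonneg (hw i hi) ((hp i hi).coeff_nonneg x))
    (le_trans ?_ (hC x))
  exact Nat.cast_le.2 (Finset.card_le_card
    (Finset.monotone_filter_right s fun i _ => right_ne_zero_of_mul))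

end Distribution

/-! ### Entropy of convolutions -/

section Convolution

variable {G ι : Type*} [AddCommGroup G] {p q r y : AddMonoidAlgebra ℝ G}

lemma pointMass_zero : pointMass (0 : G) = 1 := rfl

lemma pointMass_add (a b : G) : pointMass (a + b) = pointMass a * pointMass b := by
  rw [pointMass, pointMass, pointMass, AddMonoidAlgebra.single_mul_single, mul_one]

lemma coeff_mul_pointMass (p : AddMonoidAlgebra ℝ G) (a x : G) :
    (p * pointMass a).coeff x = p.coeff (x - a) := by
  rw [pointMass, AddMonoidAlgebra.coeff_mul_single_apply, mul_one, sub_eq_add_neg]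

lemma sum_coeff_mul_pointMass (p : AddMonoidAlgebra ℝ G) (a : G) (g : ℝ → ℝ) :
    (p * pointMass a).coeff.sum (fun _ v => g v) = p.coeff.sum fun _ v => g v := by
  simp only [Finsupp.sum, coeff_mul_pointMass]
  rw [pointMass, AddMonoidAlgebra.support_coeff_mul_single p 1 (by simp), Finset.sum_map]
  simp

lemma entropy_mul_pointMass (p : AddMonoidAlgebra ℝ G) (a : G) :
    entropy (p * pointMass a) = entropy p :=
  sum_coeff_mul_pointMass p a negMulLog

lemma IsProb.mul_pointMass (hp : IsProb p) (a : G) : IsProb (p * _root_.pointMass a) where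
  coeff_nonneg x := by rw [coeff_mul_pointMass]; exact hp.coeff_nonneg _
  sum_coeff := (sum_coeff_mul_pointMass p a id).trans hp.sum_coeff

lemma IsProb.one : IsProb (1 : AddMonoidAlgebra ℝ G) := IsProb.pointMass 0

lemma mul_eq_sum_smul (p r : AddMonoidAlgebra ℝ G) :
    p * r = ∑ z ∈ r.coeff.support, r.coeff z • (p * pointMass z) := by
  conv_lhs => rw [eq_sum_smul_pointMass r]
  simp [Finset.mul_sum]

lemma exists_coeff_ne_zero_of_mul {x : G} (h : (p * q).coeff x ≠ 0) :
    ∃ z, q.coeff z ≠ 0 ∧ p.coeff (x - z) ≠ 0 := by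
  rw [mul_eq_sum_smul, coeff_sum_smul] at h
  obtain ⟨z, -, h⟩ := Finset.exists_ne_zero_of_sum_ne_zero h
  exact ⟨z, left_ne_zero_of_mul h, coeff_mul_pointMass p z x ▸ right_ne_zero_of_mul h⟩

lemma IsProb.mul (hp : IsProb p) (hq : IsProb q) : IsProb (p * q) := by
  rw [mul_eq_sum_smul]
  exact IsProb.sum_smul (fun i _ => hq.coeff_nonneg i) (hq.sum_eq_one Subset.rfl)
    fun i _ => hp.mul_pointMass i

lemma IsProb.pow (hp : IsProb p) (k : ℕ) : IsProb (p ^ k) := by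
  induction k with
  | zero => simpa using IsProb.one
  | succ k ih => rw [pow_succ]; exact ih.mul hp

/-- Convolution is a noisy channel, so this is the data processing inequality. -/
lemma mixInfo_mul_le {s : Finset ι} {w : ι → ℝ} {p : ι → AddMonoidAlgebra ℝ G}
    (hw : ∀ i ∈ s, 0 ≤ w i) (hp : ∀ i ∈ s, IsProb (p i)) (hr : IsProb r) :
    mixInfo s w (fun i => p i * r) ≤ mixInfo s w p := by
  have htranslate : ∀ z, mixInfo s w (fun i => p i * pointMass z) = mixInfo s w p := by
    intro z
    simp_rw [mixInfo, ← smul_mul_assoc, ← Finset.sum_mul, entropy_mul_pointMass]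
  calc mixInfo s w (fun i => p i * r)
      ≤ ∑ z ∈ r.coeff.support, r.coeff z * mixInfo s w fun i => p i * pointMass z := by
        simp_rw [mul_eq_sum_smul _ r]
        exact mixInfo_sum_smul_le hw (fun z _ => hr.coeff_nonneg z)
          fun i hi z _ => (hp i hi).mul_pointMass z
    _ = mixInfo s w p := by
        simp_rw [htranslate, ← Finset.sum_mul, hr.sum_eq_one Subset.rfl, one_mul]

lemma mixInfo_translates (hy : IsProb y) (q : AddMonoidAlgebra ℝ G) :
    mixInfo y.coeff.support (fun z => y.coeff z) (fun z => q * pointMass z) =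
      entropy (q * y) - entropy q := by
  simp_rw [mixInfo, ← mul_eq_sum_smul, entropy_mul_pointMass, ← Finset.sum_mul,
    hy.sum_eq_one Subset.rfl, one_mul]

lemma entropy_mul_submodular (hq : IsProb q) (hy : IsProb y) (hr : IsProb r) :
    entropy (q * y * r) - entropy (q * r) ≤ entropy (q * y) - entropy q := by
  rw [mul_right_comm, ← mixInfo_translates hy q, ← mixInfo_translates hy (q * r)]
  simp_rw [mul_right_comm q r]
  exact mixInfo_mul_le (fun z _ => hy.coeff_nonneg z) (fun z _ => hq.mul_pointMass z) hr

lemma entropy_le_entropy_mul_right (hq : IsProb q) (hy : IsProb y) :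
    entropy q ≤ entropy (q * y) := by
  rw [← sub_nonneg, ← mixInfo_translates hy q]
  exact mixInfo_nonneg (fun z _ => hy.coeff_nonneg z) (hy.sum_eq_one Subset.rfl)
    fun z _ => hq.mul_pointMass z

lemma entropy_le_entropy_mul_left (hq : IsProb q) (hy : IsProb y) :
    entropy q ≤ entropy (y * q) := by
  rw [mul_comm]
  exact entropy_le_entropy_mul_right hq hy

/-- An inequality of Kaimanovich and Vershik. -/
lemma entropy_mul_pow_sub_le (hq : IsProb q) (hy : IsProb y) (k : ℕ) :
    entropy (q * y ^ k) - entropy q ≤ k * (entropy (q * y) - entropy q) := by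
  induction k with
  | zero => simp
  | succ k ih =>
    have hsub := entropy_mul_submodular hq hy (hy.pow k)
    rw [mul_assoc, ← pow_succ'] at hsub
    push_cast
    linarith

end Convolution

/-! ### Laws of random variables on a finite uniform space -/

section UniformLaw

variable {Ω Ω' α β G : Type*} {s : Finset Ω} {t : Finset Ω'}

/-- The law of `F` when the argument is uniformly distributed in the finite set `s`. -/
def uniformLaw (s : Finset Ω) (F : Ω → α) : AddMonoidAlgebra ℝ α :=
  ∑ ω ∈ s, (s.card : ℝ)⁻¹ • pointMass (F ω)

lemma sum_inv_card (hs : s.Nonempty) : ∑ _ω ∈ s, (s.card : ℝ)⁻¹ = 1 := by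
  simp [hs.card_pos.ne']

lemma isProb_uniformLaw (hs : s.Nonempty) (F : Ω → α) : IsProb (uniformLaw s F) :=
  IsProb.sum_smul (fun _ _ => by positivity) (sum_inv_card hs) fun _ _ => IsProb.pointMass _

lemma uniformLaw_const (hs : s.Nonempty) (a : α) : uniformLaw s (fun _ => a) = pointMass a := by
  rw [uniformLaw, ← Finset.sum_smul, sum_inv_card hs, one_smul]

lemma exists_of_coeff_uniformLaw_ne_zero {F : Ω → α} {x : α}
    (h : (uniformLaw s F).coeff x ≠ 0) : ∃ ω ∈ s, F ω = x := by
  classical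
  rw [uniformLaw, coeff_sum_smul] at h
  obtain ⟨ω, hω, h⟩ := Finset.exists_ne_zero_of_sum_ne_zero h
  refine ⟨ω, hω, ?_⟩
  simpa [coeff_pointMass] using right_ne_zero_of_mul h

lemma support_uniformLaw_subset {F : Ω → α} {S : Finset α} (hF : ∀ ω ∈ s, F ω ∈ S) :
    (uniformLaw s F).coeff.support ⊆ S := fun x hx => by
  obtain ⟨ω, hω, rfl⟩ := exists_of_coeff_uniformLaw_ne_zero (Finsupp.mem_support_iff.1 hx)
  exact hF ω hω

lemma uniformLaw_univ_comp_equiv [Fintype Ω] [Fintype Ω'] (e : Ω ≃ Ω') (F : Ω' → α) :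
    uniformLaw Finset.univ (F ∘ e) = uniformLaw Finset.univ F := by
  simp only [uniformLaw, Finset.card_univ, Fintype.card_congr e]
  exact Fintype.sum_equiv e _ _ fun _ => rfl

lemma coeff_uniformLaw [DecidableEq α] (F : Ω → α) (x : α) :
    (uniformLaw s F).coeff x = ((s.filter fun ω => F ω = x).card : ℝ) / s.card := by
  simp only [uniformLaw, coeff_sum_smul, coeff_pointMass, mul_ite, mul_one, mul_zero]
  rw [← Finset.sum_filter, Finset.sum_const, nsmul_eq_mul, div_eq_mul_inv]

lemma sum_coeff_uniformLaw_mul {F : Ω → α} {S : Finset α} (hF : ∀ ω ∈ s, F ω ∈ S) (g : α → ℝ) :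
    ∑ x ∈ S, (uniformLaw s F).coeff x * g x = ∑ ω ∈ s, (s.card : ℝ)⁻¹ * g (F ω) := by
  classical
  simp only [uniformLaw, coeff_sum_smul, Finset.sum_mul]
  rw [Finset.sum_comm]
  refine Finset.sum_congr rfl fun ω hω => ?_
  simp only [coeff_pointMass, mul_ite, mul_one, mul_zero, ite_mul, zero_mul]
  rw [Finset.sum_ite_eq, if_pos (hF ω hω)]

lemma entropy_uniformLaw_of_injOn {F : Ω → α} (hs : s.Nonempty) (hF : Set.InjOn F s) :
    entropy (uniformLaw s F) = log s.card := by
  classical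
  have hcard : (s.card : ℝ) ≠ 0 := by exact_mod_cast hs.card_pos.ne'
  have hcoeff : ∀ ω ∈ s, (uniformLaw s F).coeff (F ω) = (s.card : ℝ)⁻¹ := by
    intro ω hω
    have hfilter : (s.filter fun ω' => F ω' = F ω) = {ω} := by
      ext ω'
      simp only [Finset.mem_filter, Finset.mem_singleton]
      exact ⟨fun h => hF h.1 hω h.2, fun h => by simp [h, hω]⟩
    rw [coeff_uniformLaw, hfilter, Finset.card_singleton, Nat.cast_one, one_div]
  rw [entropy_eq_sum _ (support_uniformLaw_subset fun ω => Finset.mem_image_of_mem F),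
    Finset.sum_image hF, Finset.sum_congr rfl fun ω hω => by rw [hcoeff ω hω]]
  simp [negMulLog, hcard]

section Fiber

variable [DecidableEq β]

/-- The part of `s` where the random variable `J` takes the value `j`; the uniform law on it is the
conditional law given `J = j`. -/
def fiber (s : Finset Ω) (J : Ω → β) (j : β) : Finset Ω := s.filter fun ω => J ω = j

lemma mem_fiber {J : Ω → β} {j : β} {ω : Ω} : ω ∈ fiber s J j ↔ ω ∈ s ∧ J ω = j :=
  Finset.mem_filter

lemma fiber_nonempty {J : Ω → β} {j : β} (hj : j ∈ s.image J) : (fiber s J j).Nonempty := by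
  obtain ⟨ω, hω, h⟩ := Finset.mem_image.1 hj
  exact ⟨ω, mem_fiber.2 ⟨hω, h⟩⟩

lemma uniformLaw_eq_sum_fiber (F : Ω → α) (J : Ω → β) :
    uniformLaw s F =
      ∑ j ∈ s.image J, (uniformLaw s J).coeff j • uniformLaw (fiber s J j) F := by
  rw [uniformLaw, ← Finset.sum_fiberwise_of_maps_to (t := s.image J) (g := J)
    fun ω => Finset.mem_image_of_mem J]
  refine Finset.sum_congr rfl fun j hj => ?_
  have hcard : ((fiber s J j).card : ℝ) ≠ 0 := by
    exact_mod_cast (fiber_nonempty hj).card_pos.ne'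
  rw [coeff_uniformLaw, uniformLaw, Finset.smul_sum]
  refine Finset.sum_congr rfl fun ω _ => ?_
  rw [smul_smul]
  congr 1
  rw [fiber] at hcard ⊢
  field_simp

lemma coeff_uniformLaw_nonneg (hs : s.Nonempty) (J : Ω → α) (j : α) :
    0 ≤ (uniformLaw s J).coeff j := (isProb_uniformLaw hs J).coeff_nonneg j

lemma sum_image_coeff_uniformLaw (hs : s.Nonempty) (J : Ω → β) :
    ∑ j ∈ s.image J, (uniformLaw s J).coeff j = 1 :=
  (isProb_uniformLaw hs J).sum_eq_one (support_uniformLaw_subset fun _ => Finset.mem_image_of_mem J)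

lemma entropy_uniformLaw_eq_sum_image (J : Ω → β) :
    entropy (uniformLaw s J) = ∑ j ∈ s.image J, negMulLog ((uniformLaw s J).coeff j) :=
  entropy_eq_sum _ (support_uniformLaw_subset fun _ => Finset.mem_image_of_mem J)

lemma entropy_uniformLaw_le_add_sum_fiber (hs : s.Nonempty) (F : Ω → α) (J : Ω → β) :
    entropy (uniformLaw s F) ≤ entropy (uniformLaw s J) +
      ∑ j ∈ s.image J, (uniformLaw s J).coeff j * entropy (uniformLaw (fiber s J j) F) := by
  conv_lhs => rw [uniformLaw_eq_sum_fiber F J]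
  rw [entropy_uniformLaw_eq_sum_image J]
  exact entropy_sum_smul_le (fun j _ => coeff_uniformLaw_nonneg hs J j) fun j hj =>
    isProb_uniformLaw (fiber_nonempty hj) F

end Fiber

lemma entropy_uniformLaw_le_add_log {F : Ω → α} {J : Ω → β} (hs : s.Nonempty) (N : β → Finset α)
    {C : ℝ} (hN : ∀ j, ((N j).card : ℝ) ≤ C) (hF : ∀ ω ∈ s, F ω ∈ N (J ω)) :
    entropy (uniformLaw s F) ≤ entropy (uniformLaw s J) + log C := by
  classical
  refine (entropy_uniformLaw_le_add_sum_fiber hs F J).trans ?_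
  have hfiber : ∀ j ∈ s.image J, entropy (uniformLaw (fiber s J j) F) ≤ log C := by
    intro j hj
    have hFN : ∀ ω ∈ fiber s J j, F ω ∈ N j := fun ω hω => by
      obtain ⟨hωs, rfl⟩ := mem_fiber.1 hω
      exact hF ω hωs
    obtain ⟨ω, hω⟩ := fiber_nonempty hj
    have hpos : 0 < ((N j).card : ℝ) := by
      exact_mod_cast Finset.card_pos.2 ⟨F ω, hFN ω hω⟩
    exact ((isProb_uniformLaw ⟨ω, hω⟩ F).entropy_le_log_card
      (support_uniformLaw_subset hFN)).trans (log_le_log hpos (hN j))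
  gcongr
  calc _ ≤ ∑ j ∈ s.image J, (uniformLaw s J).coeff j * log C :=
        Finset.sum_le_sum fun j hj =>
          mul_le_mul_of_nonneg_left (hfiber j hj) (coeff_uniformLaw_nonneg hs J j)
    _ = log C := by rw [← Finset.sum_mul, sum_image_coeff_uniformLaw hs, one_mul]

section Convolution

variable [AddCommGroup G]

lemma uniformLaw_mul_uniformLaw (F : Ω → G) (F' : Ω' → G) :
    uniformLaw s F * uniformLaw t F' = uniformLaw (s ×ˢ t) fun x => F x.1 + F' x.2 := by
  rw [uniformLaw, uniformLaw, uniformLaw, Finset.sum_mul_sum, Finset.sum_product]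
  refine Finset.sum_congr rfl fun i _ => Finset.sum_congr rfl fun j _ => ?_
  rw [pointMass_add, smul_mul_smul_comm, Finset.card_product, Nat.cast_mul, mul_inv]

lemma uniformLaw_product_fst (ht : t.Nonempty) (F : Ω → G) :
    uniformLaw (s ×ˢ t) (fun x => F x.1) = uniformLaw s F := by
  simpa [uniformLaw_const ht, pointMass_zero] using
    (uniformLaw_mul_uniformLaw (s := s) (t := t) F fun _ => 0).symm

lemma uniformLaw_product_snd (hs : s.Nonempty) (F : Ω' → G) :
    uniformLaw (s ×ˢ t) (fun x => F x.2) = uniformLaw t F := by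
  simpa [uniformLaw_const hs, pointMass_zero] using
    (uniformLaw_mul_uniformLaw (s := s) (t := t) (fun _ => 0) F).symm

/-- The conditional laws of `A + Z` given `J` have overlap at most `C` when `A + Z` determines `J`
up to `C` possibilities. -/
lemma entropy_add_sum_fiber_mul_le [DecidableEq β] {A : Ω → G} {J : Ω → β} (hs : s.Nonempty)
    {Z : AddMonoidAlgebra ℝ G} (hZ : IsProb Z) (N : G → Finset β) {C : ℝ}
    (hN : ∀ x, ((N x).card : ℝ) ≤ C)
    (hJ : ∀ ω ∈ s, ∀ z, Z.coeff z ≠ 0 → J ω ∈ N (A ω + z)) :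
    entropy (uniformLaw s J) +
        ∑ j ∈ s.image J, (uniformLaw s J).coeff j * entropy (uniformLaw (fiber s J j) A * Z) ≤
      entropy (uniformLaw s A * Z) + log C := by
  have hmix : uniformLaw s A * Z =
      ∑ j ∈ s.image J, (uniformLaw s J).coeff j • (uniformLaw (fiber s J j) A * Z) := by
    conv_lhs => rw [uniformLaw_eq_sum_fiber A J, Finset.sum_mul]
    simp only [smul_mul_assoc]
  rw [hmix, entropy_uniformLaw_eq_sum_image J]
  refine le_entropy_sum_smul_add_log (fun j _ => coeff_uniformLaw_nonneg hs J j)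
    (sum_image_coeff_uniformLaw hs J)
    (fun j hj => (isProb_uniformLaw (fiber_nonempty hj) A).mul hZ) fun x => ?_
  refine le_trans (Nat.cast_le.2 (Finset.card_le_card fun j hj => ?_)) (hN x)
  obtain ⟨z, hz, hxz⟩ := exists_coeff_ne_zero_of_mul (Finset.mem_filter.1 hj).2
  obtain ⟨ω, hω, hA⟩ := exists_of_coeff_uniformLaw_ne_zero hxz
  obtain ⟨hωs, rfl⟩ := mem_fiber.1 hω
  simpa [hA] using hJ ω hωs z hz

lemma entropy_add_entropy_le_entropy_mul {A : Ω → G} {J : Ω → β} (hs : s.Nonempty)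
    {Z : AddMonoidAlgebra ℝ G} (hZ : IsProb Z) (N : G → Finset β) {C : ℝ}
    (hN : ∀ x, ((N x).card : ℝ) ≤ C)
    (hJ : ∀ ω ∈ s, ∀ z, Z.coeff z ≠ 0 → J ω ∈ N (A ω + z)) :
    entropy (uniformLaw s J) + entropy Z ≤ entropy (uniformLaw s A * Z) + log C := by
  classical
  refine le_trans (add_le_add_right ?_ _) (entropy_add_sum_fiber_mul_le hs hZ N hN hJ)
  calc entropy Z = ∑ j ∈ s.image J, (uniformLaw s J).coeff j * entropy Z := by
        rw [← Finset.sum_mul, sum_image_coeff_uniformLaw hs, one_mul]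
    _ ≤ _ := Finset.sum_le_sum fun j hj => mul_le_mul_of_nonneg_left
        (entropy_le_entropy_mul_left hZ (isProb_uniformLaw (fiber_nonempty hj) A))
        (coeff_uniformLaw_nonneg hs J j)

lemma entropy_uniformLaw_mul_uniformLaw_le {F F' : Ω → G} (hs : s.Nonempty) (ht : t.Nonempty)
    (f : Ω' → G) {D : Finset G} (hD : ∀ ω ∈ s, F ω - F' ω ∈ D) :
    entropy (uniformLaw s F * uniformLaw t f) ≤
      entropy (uniformLaw s F' * uniformLaw t f) + log D.card := by
  classical
  rw [uniformLaw_mul_uniformLaw, uniformLaw_mul_uniformLaw]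
  refine entropy_uniformLaw_le_add_log (hs.product ht) (fun x => D.image (· + x))
    (fun x => by exact_mod_cast Finset.card_image_le) fun ω hω => ?_
  exact Finset.mem_image.2 ⟨_, hD ω.1 (Finset.mem_product.1 hω).1, by abel⟩

end Convolution

end UniformLaw

/-! ### Uniform laws on arithmetic progressions -/

section UnifAP

variable {G : Type*} [AddCommGroup G] {q : AddMonoidAlgebra ℝ G}

/-- The uniform law on the arithmetic progression `0, D, …, (2 ^ l - 1) D`. -/
def unifAP (D : G) (l : ℕ) : AddMonoidAlgebra ℝ G :=
  uniformLaw (Finset.range (2 ^ l)) fun i => i • D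

lemma range_two_pow_nonempty (l : ℕ) : (Finset.range (2 ^ l)).Nonempty :=
  Finset.nonempty_range_iff.2 (by positivity)

lemma isProb_unifAP (D : G) (l : ℕ) : IsProb (unifAP D l) :=
  isProb_uniformLaw (range_two_pow_nonempty l) _

lemma unifAP_zero (D : G) : unifAP D 0 = 1 := by
  simp [unifAP, uniformLaw, pointMass_zero]

lemma unifAP_one (D : G) : unifAP D 1 = (1 / 2 : ℝ) • (1 + pointMass D) := by
  simp [unifAP, uniformLaw, Finset.sum_range_succ, pointMass_zero]

lemma unifAP_one_sq (D : G) :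
    unifAP D 1 ^ 2 = (1 / 2 : ℝ) • (unifAP (2 • D) 1 + pointMass D) := by
  have hsq : (1 + pointMass D) * (1 + pointMass D) =
      (1 + pointMass D * pointMass D) + (2 : ℝ) • pointMass D := by
    rw [two_smul]
    ring
  rw [unifAP_one, unifAP_one, sq, smul_mul_smul_comm, hsq, two_nsmul, pointMass_add]
  simp only [smul_add, smul_smul]
  norm_num

/-- Binary expansion with `a + b` digits splits into the lower `a` and the upper `b` digits. -/
lemma unifAP_add (D : G) (a b : ℕ) :
    unifAP D (a + b) = unifAP D a * unifAP (2 ^ a • D) b := by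
  rw [unifAP, unifAP, unifAP, uniformLaw_mul_uniformLaw, uniformLaw, uniformLaw]
  symm
  refine Finset.sum_nbij' (fun x => x.1 + 2 ^ a * x.2) (fun n => (n % 2 ^ a, n / 2 ^ a))
    ?_ ?_ ?_ (fun n _ => Nat.mod_add_div n _) ?_
  · rintro ⟨i, j⟩ h
    simp only [Finset.mem_product, Finset.mem_range] at h ⊢
    calc i + 2 ^ a * j < 2 ^ a * (j + 1) := by linarith
      _ ≤ 2 ^ a * 2 ^ b := Nat.mul_le_mul_left _ h.2
      _ = 2 ^ (a + b) := (pow_add 2 a b).symm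
  · intro n h
    simp only [Finset.mem_product, Finset.mem_range] at h ⊢
    refine ⟨Nat.mod_lt _ (by positivity), ?_⟩
    rwa [Nat.div_lt_iff_lt_mul (by positivity), mul_comm, ← pow_add]
  · rintro ⟨i, j⟩ h
    simp only [Finset.mem_product, Finset.mem_range] at h
    simp [Nat.add_mul_div_left, Nat.mod_eq_of_lt h.1, Nat.div_eq_of_lt h.1]
  · rintro ⟨i, j⟩ -
    rw [Finset.card_product, Finset.card_range, Finset.card_range, Finset.card_range, pow_add,
      add_smul, mul_smul, smul_comm]

/-- The increase of the entropy of `q` under convolution with a fair coin of values `0` and `D`. -/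
def coinGain (q : AddMonoidAlgebra ℝ G) (D : G) : ℝ := entropy (q * unifAP D 1) - entropy q

lemma coinGain_nonneg (hq : IsProb q) (D : G) : 0 ≤ coinGain q D :=
  sub_nonneg.2 (entropy_le_entropy_mul_right hq (isProb_unifAP _ _))

lemma coinGain_neg (q : AddMonoidAlgebra ℝ G) (D : G) : coinGain q (-D) = coinGain q D := by
  have hneg : unifAP D 1 = unifAP (-D) 1 * pointMass D := by
    rw [unifAP_one, unifAP_one, smul_mul_assoc, add_mul, one_mul, ← pointMass_add, neg_add_cancel,
      pointMass_zero, add_comm]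
  rw [coinGain, coinGain, hneg, ← mul_assoc, entropy_mul_pointMass]

lemma coinGain_two_nsmul_le (hq : IsProb q) (D : G) :
    coinGain q (2 • D) ≤ 4 * coinGain q D := by
  have hkv := entropy_mul_pow_sub_le hq (isProb_unifAP D 1) 2
  have hconc := sum_mul_entropy_le (s := Finset.univ) (w := fun _ : Bool => (1 / 2 : ℝ))
    (p := fun i => if i then q * unifAP (2 • D) 1 else q * pointMass D) (by simp) (by simp)
    fun i _ => by
      split_ifs
      exacts [hq.mul (isProb_unifAP _ _), hq.mul_pointMass _]
  simp only [Fintype.sum_bool, if_true, Bool.false_eq_true, if_false,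
    entropy_mul_pointMass] at hconc
  rw [← smul_add, ← mul_add q, ← mul_smul_comm, ← unifAP_one_sq] at hconc
  simp only [coinGain]
  push_cast at hkv
  linarith

lemma coinGain_two_pow_nsmul_le (hq : IsProb q) (D : G) (l : ℕ) :
    coinGain q (2 ^ l • D) ≤ 4 ^ l * coinGain q D := by
  induction l with
  | zero => simp
  | succ l ih =>
    calc coinGain q (2 ^ (l + 1) • D) = coinGain q (2 • 2 ^ l • D) := by
          rw [pow_succ', mul_smul]
      _ ≤ 4 * coinGain q (2 ^ l • D) := coinGain_two_nsmul_le hq _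
      _ ≤ 4 * (4 ^ l * coinGain q D) := by gcongr
      _ = 4 ^ (l + 1) * coinGain q D := by ring

lemma entropy_mul_unifAP_sub_le (hq : IsProb q) (D : G) (l : ℕ) :
    entropy (q * unifAP D l) - entropy q ≤ 4 ^ l * coinGain q D := by
  have hnonneg := coinGain_nonneg hq D
  induction l with
  | zero => simpa [unifAP_zero] using hnonneg
  | succ l ih =>
    have hsub := entropy_mul_submodular hq (isProb_unifAP (2 ^ l • D) 1) (isProb_unifAP D l)
    rw [mul_assoc, mul_comm (unifAP _ 1), ← unifAP_add] at hsub
    have hcoin : entropy (q * unifAP (2 ^ l • D) 1) - entropy q ≤ 4 ^ l * coinGain q D :=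
      coinGain_two_pow_nsmul_le hq D l
    have hpos : 0 ≤ 4 ^ l * coinGain q D := by positivity
    rw [pow_succ]
    linarith

lemma average_pointMass_eq (a b : G) :
    (1 / 2 : ℝ) • (pointMass a + pointMass b) = unifAP (a - b) 1 * pointMass b := by
  rw [unifAP_one, smul_mul_assoc, add_mul, ← pointMass_add, one_mul, sub_add_cancel, add_comm]

/-- The law of `F` is an average of laws of fair coins on the pairs of values of `F`. -/
lemma average_coinGain_le {Ω : Type*} {t : Finset Ω} (ht : t.Nonempty) (F : Ω → G)
    (hq : IsProb q) :
    ∑ x ∈ t ×ˢ t, ((t ×ˢ t).card : ℝ)⁻¹ * coinGain q (F x.1 - F x.2) ≤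
      entropy (q * uniformLaw t F) - entropy q := by
  have htt := ht.product ht
  have hhalf : uniformLaw t F = (1 / 2 : ℝ) •
      (uniformLaw (t ×ˢ t) (fun x => F x.1) + uniformLaw (t ×ˢ t) fun x => F x.2) := by
    rw [uniformLaw_product_fst ht, uniformLaw_product_snd ht, ← two_smul ℝ (uniformLaw t F),
      smul_smul]
    norm_num
  have hmix : q * uniformLaw t F = ∑ x ∈ t ×ˢ t, ((t ×ˢ t).card : ℝ)⁻¹ •
      (q * unifAP (F x.1 - F x.2) 1 * pointMass (F x.2)) := by
    rw [hhalf, uniformLaw, uniformLaw, ← Finset.sum_add_distrib, Finset.smul_sum, Finset.mul_sum]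
    refine Finset.sum_congr rfl fun x _ => ?_
    rw [← smul_add, smul_comm, average_pointMass_eq, mul_smul_comm, mul_assoc]
  have hconc := sum_mul_entropy_le (s := t ×ˢ t) (w := fun _ => ((t ×ˢ t).card : ℝ)⁻¹)
    (p := fun x => q * unifAP (F x.1 - F x.2) 1 * pointMass (F x.2))
    (fun _ _ => by positivity) (sum_inv_card htt)
    fun x _ => (hq.mul (isProb_unifAP _ _)).mul_pointMass _
  rw [← hmix] at hconc
  simp only [entropy_mul_pointMass] at hconc
  simp only [coinGain, mul_sub, Finset.sum_sub_distrib, ← Finset.sum_mul]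
  rw [sum_inv_card htt]
  linarith

end UnifAP

section Integers

variable {p q : AddMonoidAlgebra ℝ ℤ}

lemma coinGain_abs (q : AddMonoidAlgebra ℝ ℤ) (D : ℤ) : coinGain q |D| = coinGain q D := by
  rcases abs_choice D with h | h <;> rw [h]
  exact coinGain_neg q D

lemma support_mul_subset_Ico {M N : ℤ} (hp : p.coeff.support ⊆ Finset.Ico 0 M)
    (hq : q.coeff.support ⊆ Finset.Ico 0 N) : (p * q).coeff.support ⊆ Finset.Ico 0 (M + N) := by
  intro x hx
  obtain ⟨z, hz, hz'⟩ := exists_coeff_ne_zero_of_mul (Finsupp.mem_support_iff.1 hx)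
  have hqz := Finset.mem_Ico.1 (hq (Finsupp.mem_support_iff.2 hz))
  have hpz := Finset.mem_Ico.1 (hp (Finsupp.mem_support_iff.2 hz'))
  exact Finset.mem_Ico.2 ⟨by omega, by omega⟩

lemma IsProb.entropy_le_log_of_support_subset_Ico (hp : IsProb p) {M : ℤ}
    (hM : p.coeff.support ⊆ Finset.Ico 0 M) : entropy p ≤ log M := by
  have hpos : 0 ≤ M := by
    by_contra! h
    simpa [Finset.Ico_eq_empty_of_le h.le] using hp.sum_eq_one hM
  refine (hp.entropy_le_log_card hM).trans_eq ?_
  rw [Int.card_Ico, sub_zero, ← Int.cast_natCast, Int.toNat_of_nonneg hpos]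

lemma support_unifAP_subset {D : ℤ} (hD : 0 < D) (l : ℕ) :
    (unifAP D l).coeff.support ⊆ Finset.Ico 0 (2 ^ l * D) := by
  refine support_uniformLaw_subset fun i hi => Finset.mem_Ico.2 ⟨by positivity, ?_⟩
  rw [nsmul_eq_mul]
  exact mul_lt_mul_of_pos_right (by exact_mod_cast Finset.mem_range.1 hi) hD

/-- The uniform law on the integers `0, …, 2 ^ a - 1`. -/
def dyadicUnif (a : ℕ) : AddMonoidAlgebra ℝ ℤ := unifAP 1 a

lemma isProb_dyadicUnif (a : ℕ) : IsProb (dyadicUnif a) := isProb_unifAP _ _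

lemma dyadicUnif_zero : dyadicUnif 0 = 1 := unifAP_zero 1

lemma dyadicUnif_add (a b : ℕ) : dyadicUnif (a + b) = dyadicUnif a * unifAP (2 ^ a) b := by
  rw [dyadicUnif, unifAP_add, dyadicUnif, nsmul_one, Nat.cast_pow, Nat.cast_ofNat]

lemma support_dyadicUnif_subset (a : ℕ) : (dyadicUnif a).coeff.support ⊆ Finset.Ico 0 (2 ^ a) := by
  simpa [dyadicUnif] using support_unifAP_subset one_pos a

lemma entropy_dyadicUnif (a : ℕ) : entropy (dyadicUnif a) = a * log 2 := by
  rw [dyadicUnif, unifAP, entropy_uniformLaw_of_injOn (range_two_pow_nonempty a)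
    fun x _ y _ h => by simpa using h]
  simp

lemma entropy_dyadicUnif_mul_unifAP {a : ℕ} {D : ℤ} (h : 2 ^ a ≤ D) (l : ℕ) :
    entropy (dyadicUnif a * unifAP D l) = log (2 ^ a * 2 ^ l) := by
  rw [dyadicUnif, unifAP, unifAP, uniformLaw_mul_uniformLaw, entropy_uniformLaw_of_injOn
    ((range_two_pow_nonempty a).product (range_two_pow_nonempty l))]
  · simp
  · rintro ⟨i, j⟩ hij ⟨i', j'⟩ hij' e
    simp only [Finset.coe_product, Set.mem_prod, Finset.mem_coe, Finset.mem_range, nsmul_eq_mul,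
      mul_one] at hij hij' e
    have hi : (i : ℤ) < 2 ^ a := by exact_mod_cast hij.1
    have hi' : (i' : ℤ) < 2 ^ a := by exact_mod_cast hij'.1
    have hj : (j : ℤ) = j' := by
      rcases lt_trichotomy (j : ℤ) j' with hlt | heq | hlt
      · nlinarith
      · exact heq
      · nlinarith
    rw [hj] at e
    exact Prod.ext (by simpa using e) (by exact_mod_cast hj)

lemma log_sub_le_entropy_dyadicUnif_mul_unifAP {b : ℕ} {D : ℤ} (hD : 0 < D) (hDb : D ≤ 2 ^ b)
    (l : ℕ) : log (2 ^ l * D) - log 2 ≤ entropy (dyadicUnif b * unifAP D l) := by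
  obtain ⟨n, rfl⟩ := Int.eq_ofNat_of_zero_le hD.le
  have hn : n ≠ 0 := by omega
  have hle : 2 ^ Nat.log 2 n ≤ n := Nat.pow_log_le_self 2 hn
  have hlt : (n : ℝ) < 2 ^ Nat.log 2 n * 2 := by
    rw [← pow_succ]
    exact_mod_cast Nat.lt_pow_succ_log_self one_lt_two n
  have hb : Nat.log 2 n ≤ b :=
    (Nat.pow_le_pow_iff_right one_lt_two).1 (hle.trans (by exact_mod_cast hDb))
  obtain ⟨c, rfl⟩ := Nat.exists_eq_add_of_le hb
  calc log (2 ^ l * (n : ℤ)) - log 2 = log (2 ^ l * n / 2) := by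
        rw [Int.cast_natCast, log_div (by positivity) two_ne_zero]
    _ ≤ log (2 ^ Nat.log 2 n * 2 ^ l) := by
        refine log_le_log (by positivity) ?_
        rw [div_le_iff₀ two_pos, mul_comm ((2 : ℝ) ^ l), mul_right_comm]
        gcongr
    _ = entropy (dyadicUnif (Nat.log 2 n) * unifAP (n : ℤ) l) :=
        (entropy_dyadicUnif_mul_unifAP (by exact_mod_cast hle) l).symm
    _ ≤ entropy (dyadicUnif (Nat.log 2 n + c) * unifAP (n : ℤ) l) := by
        rw [dyadicUnif_add, mul_right_comm]
        exact entropy_le_entropy_mul_right ((isProb_dyadicUnif _).mul (isProb_unifAP _ _))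
          (isProb_unifAP _ _)

/-- A law on which a coin of step `D` has little effect is nearly invariant under `D`, hence, by
iteration, under a progression of step `D` reaching up to scale `2 ^ b'`. -/
lemma entropy_mul_dyadicUnif_sub_le (hq : IsProb q) {b b' l : ℕ} {D : ℤ} (hD : 0 < D)
    (hDb : D ≤ 2 ^ b) (hbb : b ≤ b') (hl : 2 * 2 ^ b' ≤ 2 ^ l * D) :
    entropy (q * dyadicUnif b') - entropy (q * dyadicUnif b) ≤
      log 4 + 4 ^ l * coinGain (q * dyadicUnif b) D := by
  have hU := isProb_dyadicUnif b
  have hU' := isProb_dyadicUnif b'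
  have hP := isProb_unifAP D l
  have hmono := entropy_le_entropy_mul_right (hq.mul hU') (hU.mul hP)
  have hsub := entropy_mul_submodular (hU.mul hP) hU' hq
  rw [show dyadicUnif b * unifAP D l * dyadicUnif b' * q =
      q * dyadicUnif b' * (dyadicUnif b * unifAP D l) by ring,
    show dyadicUnif b * unifAP D l * q = q * dyadicUnif b * unifAP D l by ring] at hsub
  have hAP := entropy_mul_unifAP_sub_le (hq.mul hU) D l
  have hupper := ((hU.mul hP).mul hU').entropy_le_log_of_support_subset_Ico
    (support_mul_subset_Ico (support_mul_subset_Ico (support_dyadicUnif_subset b)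
      (support_unifAP_subset hD l)) (support_dyadicUnif_subset b'))
  have hlower := log_sub_le_entropy_dyadicUnif_mul_unifAP hD hDb l
  have hlog : log ((2 ^ b + 2 ^ l * D + 2 ^ b' : ℤ) : ℝ) ≤ log 2 + log (2 ^ l * D) := by
    have : (0 : ℝ) < D := by exact_mod_cast hD
    rw [← log_mul two_ne_zero (by positivity)]
    refine log_le_log (by push_cast; positivity) ?_
    have hpow : (2 ^ b : ℤ) ≤ 2 ^ b' := pow_le_pow_right₀ one_le_two hbb
    have : (2 ^ b + 2 ^ l * D + 2 ^ b' : ℤ) ≤ 2 * (2 ^ l * D) := by linarith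
    exact_mod_cast this
  have hfour : log 4 = log 2 + log 2 := by
    rw [← log_mul two_ne_zero two_ne_zero]
    norm_num
  linarith

end Integers

/-! ### Random walks on the space of distributions -/

section AvgOp

variable {G ι : Type*} [AddCommGroup G] {s : Finset ι} {w : ι → ℝ} {Y : ι → AddMonoidAlgebra ℝ G}
  {φ ψ : AddMonoidAlgebra ℝ G → ℝ} {q : AddMonoidAlgebra ℝ G}

/-- The Markov operator of the random walk on distributions which multiplies the current
distribution by `Y c` with probability `w c`. -/
def avgOp (s : Finset ι) (w : ι → ℝ) (Y : ι → AddMonoidAlgebra ℝ G) :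
    Module.End ℝ (AddMonoidAlgebra ℝ G → ℝ) :=
  ∑ c ∈ s, w c • LinearMap.funLeft ℝ ℝ fun q => q * Y c

lemma avgOp_apply (s : Finset ι) (w : ι → ℝ) (Y : ι → AddMonoidAlgebra ℝ G)
    (φ : AddMonoidAlgebra ℝ G → ℝ) (q : AddMonoidAlgebra ℝ G) :
    avgOp s w Y φ q = ∑ c ∈ s, w c * φ (q * Y c) := by
  simp [avgOp, LinearMap.sum_apply, Finset.sum_apply, LinearMap.funLeft_apply]

lemma avgOp_pow_succ_apply (k : ℕ) :
    (avgOp s w Y ^ (k + 1)) φ q = ∑ c ∈ s, w c * (avgOp s w Y ^ k) φ (q * Y c) := by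
  rw [pow_succ', Module.End.mul_apply, avgOp_apply]

lemma avgOp_pow_mono (hw : ∀ c ∈ s, 0 ≤ w c) (hY : ∀ c ∈ s, IsProb (Y c))
    (h : ∀ q, IsProb q → φ q ≤ ψ q) (k : ℕ) (hq : IsProb q) :
    (avgOp s w Y ^ k) φ q ≤ (avgOp s w Y ^ k) ψ q := by
  induction k generalizing q with
  | zero => exact h q hq
  | succ k ih =>
    rw [avgOp_pow_succ_apply, avgOp_pow_succ_apply]
    exact Finset.sum_le_sum fun c hc =>
      mul_le_mul_of_nonneg_left (ih (hq.mul (hY c hc))) (hw c hc)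

lemma avgOp_pow_const (hw1 : ∑ c ∈ s, w c = 1) (a : ℝ) (k : ℕ) :
    (avgOp s w Y ^ k) (fun _ => a) = fun _ => a := by
  induction k with
  | zero => rfl
  | succ k ih =>
    ext q
    rw [avgOp_pow_succ_apply, ih, ← Finset.sum_mul, hw1, one_mul]

lemma avgOp_pow_add_mul (hw1 : ∑ c ∈ s, w c = 1) (a b : ℝ) (k : ℕ) :
    (avgOp s w Y ^ k) (fun q => a + b * φ q) q = a + b * (avgOp s w Y ^ k) φ q := by
  have haffine : (fun q => a + b * φ q) = (fun _ => a) + b • φ := rfl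
  rw [haffine, map_add, map_smul, avgOp_pow_const hw1]
  rfl

lemma avgOp_pow_comp_mul_right (r : AddMonoidAlgebra ℝ G) (k : ℕ) :
    (avgOp s w Y ^ k) (fun q => φ (q * r)) q = (avgOp s w Y ^ k) φ (q * r) := by
  induction k generalizing q with
  | zero => rfl
  | succ k ih => simp_rw [avgOp_pow_succ_apply, ih, mul_right_comm]

/-- The mean increase of entropy in the first step of the walk started at `q`. -/
def avgGain (s : Finset ι) (w : ι → ℝ) (Y : ι → AddMonoidAlgebra ℝ G) :
    AddMonoidAlgebra ℝ G → ℝ :=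
  avgOp s w Y entropy - entropy

lemma avgGain_eq_sum (hw1 : ∑ c ∈ s, w c = 1) (q : AddMonoidAlgebra ℝ G) :
    avgGain s w Y q = ∑ c ∈ s, w c * (entropy (q * Y c) - entropy q) := by
  simp only [avgGain, Pi.sub_apply, avgOp_apply, mul_sub, Finset.sum_sub_distrib, ← Finset.sum_mul,
    hw1, one_mul]

lemma avgGain_mul_le (hw : ∀ c ∈ s, 0 ≤ w c) (hw1 : ∑ c ∈ s, w c = 1)
    (hY : ∀ c ∈ s, IsProb (Y c)) (hq : IsProb q) {r : AddMonoidAlgebra ℝ G} (hr : IsProb r) :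
    avgGain s w Y (q * r) ≤ avgGain s w Y q := by
  rw [avgGain_eq_sum hw1, avgGain_eq_sum hw1]
  refine Finset.sum_le_sum fun c hc => mul_le_mul_of_nonneg_left ?_ (hw c hc)
  rw [mul_right_comm]
  exact entropy_mul_submodular hq (hY c hc) hr

lemma avgOp_avgGain_le (hw : ∀ c ∈ s, 0 ≤ w c) (hw1 : ∑ c ∈ s, w c = 1)
    (hY : ∀ c ∈ s, IsProb (Y c)) (hq : IsProb q) :
    avgOp s w Y (avgGain s w Y) q ≤ avgGain s w Y q := by
  calc avgOp s w Y (avgGain s w Y) q ≤ ∑ c ∈ s, w c * avgGain s w Y q := by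
        rw [avgOp_apply]
        exact Finset.sum_le_sum fun c hc =>
          mul_le_mul_of_nonneg_left (avgGain_mul_le hw hw1 hY hq (hY c hc)) (hw c hc)
    _ = avgGain s w Y q := by rw [← Finset.sum_mul, hw1, one_mul]

/-- The mean increments of entropy along the walk are nonincreasing. -/
lemma mul_avgOp_pow_avgGain_le (hw : ∀ c ∈ s, 0 ≤ w c) (hw1 : ∑ c ∈ s, w c = 1)
    (hY : ∀ c ∈ s, IsProb (Y c)) (k : ℕ) (hq : IsProb q) :
    k * (avgOp s w Y ^ k) (avgGain s w Y) q ≤ (avgOp s w Y ^ k) entropy q - entropy q := by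
  induction k with
  | zero => simp
  | succ k ih =>
    have hanti : (avgOp s w Y ^ (k + 1)) (avgGain s w Y) q ≤
        (avgOp s w Y ^ k) (avgGain s w Y) q := by
      rw [pow_succ, Module.End.mul_apply]
      exact avgOp_pow_mono hw hY (fun q hq => avgOp_avgGain_le hw hw1 hY hq) k hq
    have hstep : (avgOp s w Y ^ (k + 1)) entropy q - (avgOp s w Y ^ k) entropy q =
        (avgOp s w Y ^ k) (avgGain s w Y) q := by
      rw [avgGain, map_sub, pow_succ, Module.End.mul_apply, Pi.sub_apply]
    have hmul := mul_le_mul_of_nonneg_left hanti (Nat.cast_add_one_pos (α := ℝ) k).le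
    push_cast
    linarith

end AvgOp

lemma avgOp_pow_entropy_le_log {ι : Type*} {s : Finset ι} {w : ι → ℝ}
    {Y : ι → AddMonoidAlgebra ℝ ℤ} (hw : ∀ c ∈ s, 0 ≤ w c) (hw1 : ∑ c ∈ s, w c = 1)
    (hY : ∀ c ∈ s, IsProb (Y c)) {R : ℤ} (hR : ∀ c ∈ s, (Y c).coeff.support ⊆ Finset.Ico 0 R)
    (k : ℕ) {q : AddMonoidAlgebra ℝ ℤ} (hq : IsProb q) {M : ℤ}
    (hM : q.coeff.support ⊆ Finset.Ico 0 M) :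
    (avgOp s w Y ^ k) entropy q ≤ log ((M + k * R : ℤ)) := by
  induction k generalizing q M with
  | zero => simpa using hq.entropy_le_log_of_support_subset_Ico hM
  | succ k ih =>
    have hsplit : M + ((k + 1 : ℕ) : ℤ) * R = M + R + k * R := by push_cast; ring
    calc (avgOp s w Y ^ (k + 1)) entropy q
        ≤ ∑ c ∈ s, w c * log ((M + (k + 1 : ℕ) * R : ℤ)) := by
          rw [avgOp_pow_succ_apply, hsplit]
          exact Finset.sum_le_sum fun c hc => mul_le_mul_of_nonneg_left
            (ih (hq.mul (hY c hc)) (support_mul_subset_Ico hM (hR c hc))) (hw c hc)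
      _ = log ((M + (k + 1 : ℕ) * R : ℤ)) := by rw [← Finset.sum_mul, hw1, one_mul]

/-! ### Pairs of values at distance at least two -/

section FarFrac

variable {Ω : Type*} {t : Finset Ω}

/-- The proportion of pairs of points of `t` whose images under `f` are neither equal nor
adjacent. -/
def farFrac (t : Finset Ω) (f : Ω → ℤ) : ℝ :=
  ((t ×ˢ t).filter fun x => 2 ≤ |f x.1 - f x.2|).card / (t ×ˢ t).card

lemma farFrac_mul (t : Finset Ω) (f : Ω → ℤ) (a : ℝ) :
    farFrac t f * a =
      ∑ x ∈ t ×ˢ t, ((t ×ˢ t).card : ℝ)⁻¹ * if 2 ≤ |f x.1 - f x.2| then a else 0 := by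
  rw [← Finset.mul_sum, ← Finset.sum_filter, Finset.sum_const, nsmul_eq_mul, farFrac]
  ring

/-- A subprobability on each interval of length `2 ^ m`, used to encode integers: those close to
`b` are given short codes. -/
def nearWeight (m : ℕ) (b x : ℤ) : ℝ := if 2 ≤ |x - b| then (2 * 2 ^ m)⁻¹ else 6⁻¹

lemma nearWeight_pos (m : ℕ) (b x : ℤ) : 0 < nearWeight m b x := by
  rw [nearWeight]
  split_ifs <;> positivity

lemma card_Ico_add_two_pow (a : ℤ) (m : ℕ) : (Finset.Ico a (a + 2 ^ m)).card = 2 ^ m := by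
  rw [Int.card_Ico, add_sub_cancel_left, ← Nat.cast_ofNat, ← Nat.cast_pow, Int.toNat_natCast]

lemma card_Icc_add (a : ℤ) (N : ℕ) : ((Finset.Icc a (a + N)).card : ℝ) = N + 1 := by
  rw [Int.card_Icc, show a + N + 1 - a = ((N + 1 : ℕ) : ℤ) by push_cast; ring, Int.toNat_natCast]
  push_cast
  rfl

lemma card_Icc_sub_add (a : ℤ) (K : ℕ) : ((Finset.Icc (a - K) (a + K)).card : ℝ) = 2 * K + 1 := by
  have := card_Icc_add (a - K) (2 * K)
  push_cast at this
  rwa [show a - K + 2 * K = a + K by ring] at this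

lemma sum_nearWeight_le_one (m : ℕ) (a b : ℤ) :
    ∑ x ∈ Finset.Ico a (a + 2 ^ m), nearWeight m b x ≤ 1 := by
  have hle : ∀ x, nearWeight m b x ≤
      (2 * 2 ^ m)⁻¹ + if x ∈ Finset.Icc (b - 1) (b + 1) then (6 : ℝ)⁻¹ else 0 := by
    intro x
    have : (0 : ℝ) ≤ (2 * 2 ^ m)⁻¹ := by positivity
    by_cases hx : 2 ≤ |x - b|
    · rw [nearWeight, if_pos hx]
      split_ifs <;> linarith
    · rw [nearWeight, if_neg hx, if_pos]
      · linarith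
      · rw [not_le, abs_lt] at hx
        exact Finset.mem_Icc.2 ⟨by omega, by omega⟩
  have hnear : (((Finset.Ico a (a + 2 ^ m)).filter
      fun x => x ∈ Finset.Icc (b - 1) (b + 1)).card : ℝ) ≤ 3 := by
    have hcard : (Finset.Icc (b - 1) (b + 1)).card = 3 := by
      rw [Int.card_Icc]
      omega
    exact_mod_cast hcard ▸ Finset.card_le_card fun x hx => (Finset.mem_filter.1 hx).2
  have hfar : ((Finset.Ico a (a + 2 ^ m)).card : ℝ) * (2 * 2 ^ m)⁻¹ = 1 / 2 := by
    rw [card_Ico_add_two_pow]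
    push_cast
    field_simp
  calc ∑ x ∈ Finset.Ico a (a + 2 ^ m), nearWeight m b x
      ≤ ∑ x ∈ Finset.Ico a (a + 2 ^ m),
          ((2 * 2 ^ m)⁻¹ + if x ∈ Finset.Icc (b - 1) (b + 1) then (6 : ℝ)⁻¹ else 0) :=
        Finset.sum_le_sum fun x _ => hle x
    _ ≤ 1 / 2 + 3 * 6⁻¹ := by
        rw [Finset.sum_add_distrib, Finset.sum_const, ← Finset.sum_filter, Finset.sum_const,
          nsmul_eq_mul, nsmul_eq_mul, hfar]
        gcongr
    _ = 1 := by norm_num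

lemma neg_log_nearWeight_le (m : ℕ) (b x : ℤ) :
    -log (nearWeight m b x) ≤ log 6 + if 2 ≤ |x - b| then m * log 2 else 0 := by
  have hlog : log 2 ≤ log 6 := log_le_log two_pos (by norm_num)
  rw [nearWeight]
  split_ifs
  · rw [log_inv, neg_neg, log_mul two_ne_zero (by positivity), log_pow]
    linarith
  · rw [log_inv, neg_neg, add_zero]

lemma entropy_uniformLaw_le_average_far (ht : t.Nonempty) {f : Ω → ℤ} {a : ℤ} {m : ℕ}
    (hf : ∀ ω ∈ t, f ω ∈ Finset.Ico a (a + 2 ^ m)) (b : ℤ) :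
    entropy (uniformLaw t f) ≤
      log 6 + ∑ ω ∈ t, (t.card : ℝ)⁻¹ * if 2 ≤ |f ω - b| then m * log 2 else 0 := by
  calc entropy (uniformLaw t f)
      ≤ ∑ ω ∈ t, (t.card : ℝ)⁻¹ * -log (nearWeight m b (f ω)) := by
        rw [← sum_coeff_uniformLaw_mul hf fun x => -log (nearWeight m b x)]
        exact (isProb_uniformLaw ht f).entropy_le_sum_mul_neg_log (support_uniformLaw_subset hf)
          (fun x _ => nearWeight_pos m b x) (sum_nearWeight_le_one m a b)
    _ ≤ ∑ ω ∈ t, (t.card : ℝ)⁻¹ * (log 6 + if 2 ≤ |f ω - b| then m * log 2 else 0) := by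
        gcongr
        exact neg_log_nearWeight_le m b _
    _ = _ := by
        simp only [mul_add, Finset.sum_add_distrib, ← Finset.sum_mul, sum_inv_card ht, one_mul]

lemma entropy_uniformLaw_le_farFrac (ht : t.Nonempty) {f : Ω → ℤ} {a : ℤ} {m : ℕ}
    (hf : ∀ ω ∈ t, f ω ∈ Finset.Ico a (a + 2 ^ m)) :
    entropy (uniformLaw t f) ≤ log 6 + farFrac t f * (m * log 2) := by
  calc entropy (uniformLaw t f)
      = ∑ _ω' ∈ t, (t.card : ℝ)⁻¹ * entropy (uniformLaw t f) := by
        rw [← Finset.sum_mul, sum_inv_card ht, one_mul]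
    _ ≤ ∑ ω' ∈ t, (t.card : ℝ)⁻¹ * (log 6 +
          ∑ ω ∈ t, (t.card : ℝ)⁻¹ * if 2 ≤ |f ω - f ω'| then m * log 2 else 0) := by
        gcongr
        exact entropy_uniformLaw_le_average_far ht hf _
    _ = log 6 + farFrac t f * (m * log 2) := by
        simp only [mul_add, Finset.sum_add_distrib, ← Finset.sum_mul, sum_inv_card ht, one_mul,
          farFrac_mul, Finset.sum_product_right, Finset.card_product, Nat.cast_mul, mul_inv,
          Finset.mul_sum, mul_assoc]

end FarFrac

/-! ### Entropy increments at successive scales -/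

section ScaleGain

variable {ι : Type*} {p q r : AddMonoidAlgebra ℝ ℤ}

/-- The increase of the entropy of `q` smoothed at scale `2 ^ (b * m)` when the smoothing scale
becomes `2 ^ ((b + 1) * m)`. It is small when `q` is close to uniform between these two scales. -/
def scaleGain (m b : ℕ) (q : AddMonoidAlgebra ℝ ℤ) : ℝ :=
  entropy (q * dyadicUnif ((b + 1) * m)) - entropy (q * dyadicUnif (b * m))

lemma scaleGain_eq (m b : ℕ) (q : AddMonoidAlgebra ℝ ℤ) :
    scaleGain m b q = entropy (q * dyadicUnif (b * m) * unifAP (2 ^ (b * m)) m) -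
      entropy (q * dyadicUnif (b * m)) := by
  rw [scaleGain, add_mul, one_mul, dyadicUnif_add, mul_assoc]

lemma sum_scaleGain (m B : ℕ) (q : AddMonoidAlgebra ℝ ℤ) :
    ∑ b ∈ Finset.range B, scaleGain m b q = entropy (q * dyadicUnif (B * m)) - entropy q := by
  simp_rw [scaleGain, Finset.sum_range_sub fun b => entropy (q * dyadicUnif (b * m)), zero_mul,
    dyadicUnif_zero, mul_one]

lemma scaleGain_mul_le (hq : IsProb q) (hr : IsProb r) (m b : ℕ) :
    scaleGain m b (q * r) ≤ scaleGain m b q := by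
  rw [scaleGain_eq, scaleGain_eq, mul_right_comm q r, mul_right_comm _ r]
  exact entropy_mul_submodular (hq.mul (isProb_dyadicUnif _)) (isProb_unifAP _ _) hr

lemma scaleGain_mul_pointMass (m b : ℕ) (q : AddMonoidAlgebra ℝ ℤ) (a : ℤ) :
    scaleGain m b (q * pointMass a) = scaleGain m b q := by
  simp only [scaleGain, mul_right_comm q (pointMass a), entropy_mul_pointMass]

lemma scaleGain_mul_sum_smul_le (m b : ℕ) {s : Finset ι} {w : ι → ℝ}
    {Y : ι → AddMonoidAlgebra ℝ ℤ} (hw : ∀ c ∈ s, 0 ≤ w c) (hY : ∀ c ∈ s, IsProb (Y c))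
    (hq : IsProb q) :
    scaleGain m b (q * ∑ c ∈ s, w c • Y c) ≤ ∑ c ∈ s, w c * scaleGain m b (q * Y c) := by
  have hmix : q * ∑ c ∈ s, w c • Y c = ∑ c ∈ s, w c • q * Y c := by
    simp only [Finset.mul_sum, mul_smul_comm, smul_mul_assoc]
  have hdata := mixInfo_mul_le hw (fun c hc => (hq.mul (hY c hc)).mul (isProb_dyadicUnif (b * m)))
    (isProb_unifAP (2 ^ (b * m)) m)
  simp only [mixInfo, ← smul_mul_assoc, ← Finset.sum_mul] at hdata
  rw [← hmix] at hdata
  simp only [scaleGain_eq, mul_sub, Finset.sum_sub_distrib]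
  linarith

lemma scaleGain_mul_pow_le (m b : ℕ) {s : Finset ι} {w : ι → ℝ} {Y : ι → AddMonoidAlgebra ℝ ℤ}
    {a : ι → ℤ} (hw : ∀ c ∈ s, 0 ≤ w c) (hY : ∀ c ∈ s, IsProb (Y c)) (hp : IsProb p)
    (hmix : p = ∑ c ∈ s, w c • (Y c * pointMass (a c))) (k : ℕ) (hq : IsProb q) :
    scaleGain m b (q * p ^ k) ≤ (avgOp s w Y ^ k) (scaleGain m b) q := by
  induction k generalizing q with
  | zero => simp
  | succ k ih =>
    calc scaleGain m b (q * p ^ (k + 1))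
        = scaleGain m b (q * p ^ k * ∑ c ∈ s, w c • (Y c * pointMass (a c))) := by
          rw [← hmix, pow_succ, mul_assoc]
      _ ≤ ∑ c ∈ s, w c * scaleGain m b (q * p ^ k * (Y c * pointMass (a c))) :=
          scaleGain_mul_sum_smul_le m b hw (fun c hc => (hY c hc).mul_pointMass _)
            (hq.mul (hp.pow k))
      _ = ∑ c ∈ s, w c * scaleGain m b (q * Y c * p ^ k) := by
          simp_rw [← mul_assoc, scaleGain_mul_pointMass, mul_right_comm q]
      _ ≤ (avgOp s w Y ^ (k + 1)) (scaleGain m b) q := by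
          rw [avgOp_pow_succ_apply]
          exact Finset.sum_le_sum fun c hc =>
            mul_le_mul_of_nonneg_left (ih (hq.mul (hY c hc))) (hw c hc)

lemma avgOp_pow_avgGain_dyadicUnif_le {s : Finset ι} {w : ι → ℝ} {Y : ι → AddMonoidAlgebra ℝ ℤ}
    (hw : ∀ c ∈ s, 0 ≤ w c) (hw1 : ∑ c ∈ s, w c = 1) (hY : ∀ c ∈ s, IsProb (Y c)) {n : ℕ}
    (hsupp : ∀ c ∈ s, (Y c).coeff.support ⊆ Finset.Ico 0 (2 ^ n)) {k : ℕ} (hk : 0 < k) :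
    (avgOp s w Y ^ k) (avgGain s w Y) (dyadicUnif n) ≤ log (k + 1) / k := by
  have hgain := mul_avgOp_pow_avgGain_le hw hw1 hY k (isProb_dyadicUnif n)
  have hupper := avgOp_pow_entropy_le_log hw hw1 hY hsupp k (isProb_dyadicUnif n)
    (support_dyadicUnif_subset n)
  have hlog : log ((2 ^ n + k * 2 ^ n : ℤ)) = log (k + 1) + entropy (dyadicUnif n) := by
    rw [entropy_dyadicUnif, ← log_pow, ← log_mul (by positivity) (by positivity)]
    push_cast
    congr 1
    ring
  rw [le_div_iff₀ (by exact_mod_cast hk)]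
  linarith

end ScaleGain

/-! ### A scale at which a random variable has entropy -/

section GoodScale

variable {Ω : Type*} {s : Finset Ω}

lemma abs_sub_mem_Icc_of_ediv_eq {x y r R : ℤ} (hr : 0 < r) (hR : 0 < R) (heq : x / R = y / R)
    (hfar : 2 ≤ |x / r - y / r|) : |x - y| ∈ Finset.Icc r R := by
  have hxR := Int.mul_ediv_self_le (x := x) hR.ne'
  have hyR := Int.mul_ediv_self_le (x := y) hR.ne'
  have hxR' := Int.lt_mul_ediv_self_add (x := x) hR
  have hyR' := Int.lt_mul_ediv_self_add (x := y) hR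
  have hxr := Int.mul_ediv_self_le (x := x) hr.ne'
  have hyr := Int.mul_ediv_self_le (x := y) hr.ne'
  have hxr' := Int.lt_mul_ediv_self_add (x := x) hr
  have hyr' := Int.lt_mul_ediv_self_add (x := y) hr
  rw [heq] at hxR hxR'
  refine Finset.mem_Icc.2 ⟨?_, abs_le.2 ⟨by linarith, by linarith⟩⟩
  rcases le_abs.1 hfar with h | h
  · exact le_abs.2 (Or.inl (by nlinarith))
  · exact le_abs.2 (Or.inr (by nlinarith))

lemma ediv_two_pow_mem_Ico (x : ℤ) (b m : ℕ) : x / 2 ^ (b * m) ∈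
    Finset.Ico (2 ^ m * (x / 2 ^ ((b + 1) * m))) (2 ^ m * (x / 2 ^ ((b + 1) * m)) + 2 ^ m) := by
  rw [add_mul, one_mul, pow_add, ← Int.ediv_ediv_of_nonneg (by positivity), Finset.mem_Ico]
  exact ⟨Int.mul_ediv_self_le (by positivity), Int.lt_mul_ediv_self_add (by positivity)⟩

/-- The conditional law of `F` modulo `R` given that the integer part of `F / R` is `c`. -/
def remLaw (s : Finset Ω) (F : Ω → ℤ) (R c : ℤ) : AddMonoidAlgebra ℝ ℤ :=
  uniformLaw (fiber s (fun ω => F ω / R) c) fun ω => F ω % R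

lemma isProb_remLaw (F : Ω → ℤ) (R : ℤ) {c : ℤ} (hc : c ∈ s.image fun ω => F ω / R) :
    IsProb (remLaw s F R c) :=
  isProb_uniformLaw (fiber_nonempty hc) _

lemma support_remLaw_subset (F : Ω → ℤ) {R : ℤ} (hR : 0 < R) (c : ℤ) :
    (remLaw s F R c).coeff.support ⊆ Finset.Ico 0 R :=
  support_uniformLaw_subset fun _ _ =>
    Finset.mem_Ico.2 ⟨Int.emod_nonneg _ hR.ne', Int.emod_lt_of_pos _ hR⟩

lemma uniformLaw_eq_sum_remLaw (F : Ω → ℤ) (R : ℤ) :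
    uniformLaw s F = ∑ c ∈ s.image fun ω => F ω / R,
      (uniformLaw s fun ω => F ω / R).coeff c • (remLaw s F R c * pointMass (R * c)) := by
  rw [uniformLaw_eq_sum_fiber F fun ω => F ω / R]
  refine Finset.sum_congr rfl fun c _ => ?_
  congr 1
  rw [remLaw, uniformLaw, uniformLaw, Finset.sum_mul]
  refine Finset.sum_congr rfl fun ω hω => ?_
  rw [smul_mul_assoc, ← pointMass_add, ← (mem_fiber.1 hω).2, Int.emod_add_mul_ediv]

/-- The mean entropy gain of a step of the walk which draws a value of the integer part of `F / R`
and moves by the conditional law of `F` modulo `R`. -/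
def remGain (s : Finset Ω) (F : Ω → ℤ) (R : ℤ) : AddMonoidAlgebra ℝ ℤ → ℝ :=
  avgGain (s.image fun ω => F ω / R) (fun c => (uniformLaw s fun ω => F ω / R).coeff c)
    (remLaw s F R)

/-- The probability that two random variables, independent with the law of `f` conditionally on `J`,
are at distance at least two. -/
def condFar (s : Finset Ω) (J f : Ω → ℤ) : ℝ :=
  ∑ c ∈ s.image J, (uniformLaw s J).coeff c * farFrac (fiber s J c) f

lemma exists_condFar_mul_coinGain_le (hs : s.Nonempty) (F : Ω → ℤ) {r R : ℤ} (hr : 0 < r)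
    (hrR : r ≤ R) {q : AddMonoidAlgebra ℝ ℤ} (hq : IsProb q) :
    ∃ D ∈ Finset.Icc r R,
      condFar s (fun ω => F ω / R) (fun ω => F ω / r) * coinGain q D ≤ remGain s F R q := by
  obtain ⟨D, hD, hmin⟩ := Finset.exists_min_image (Finset.Icc r R) (coinGain q)
    ⟨r, Finset.mem_Icc.2 ⟨le_rfl, hrR⟩⟩
  refine ⟨D, hD, ?_⟩
  rw [condFar, Finset.sum_mul, remGain, avgGain_eq_sum (sum_image_coeff_uniformLaw hs _)]
  refine Finset.sum_le_sum fun c hc => ?_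
  rw [mul_assoc]
  refine mul_le_mul_of_nonneg_left ?_ (coeff_uniformLaw_nonneg hs _ c)
  refine le_trans ?_ (average_coinGain_le (fiber_nonempty hc) _ hq)
  rw [farFrac_mul]
  refine Finset.sum_le_sum fun x hx => mul_le_mul_of_nonneg_left ?_ (by positivity)
  have hx₁ := (mem_fiber.1 (Finset.mem_product.1 hx).1).2
  have hx₂ := (mem_fiber.1 (Finset.mem_product.1 hx).2).2
  have hrem : F x.1 % R - F x.2 % R = F x.1 - F x.2 := by
    rw [Int.emod_def, Int.emod_def, hx₁, hx₂]
    ring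
  rw [hrem]
  split_ifs with h
  · rw [← coinGain_abs q (F x.1 - F x.2)]
    exact hmin _ (abs_sub_mem_Icc_of_ediv_eq hr (hr.trans_le hrR) (hx₁.trans hx₂.symm) h)
  · exact coinGain_nonneg hq _

/-- The decrease of the entropy of `F` from the scale `2 ^ (b * m)` to the scale
`2 ^ ((b + 1) * m)`. -/
def scaleDrop (s : Finset Ω) (F : Ω → ℤ) (m b : ℕ) : ℝ :=
  entropy (uniformLaw s fun ω => F ω / 2 ^ (b * m)) -
    entropy (uniformLaw s fun ω => F ω / 2 ^ ((b + 1) * m))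

lemma scaleDrop_le (hs : s.Nonempty) (F : Ω → ℤ) (m b : ℕ) :
    scaleDrop s F m b ≤ m * log 2 := by
  have hwindow := entropy_uniformLaw_le_add_log (F := fun ω => F ω / 2 ^ (b * m))
    (J := fun ω => F ω / 2 ^ ((b + 1) * m)) (C := 2 ^ m) hs
    (fun j => Finset.Ico (2 ^ m * j) (2 ^ m * j + 2 ^ m))
    (fun j => by exact_mod_cast (card_Ico_add_two_pow _ m).le)
    fun ω _ => ediv_two_pow_mem_Ico (F ω) b m
  rw [log_pow] at hwindow
  rw [scaleDrop]
  linarith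

lemma scaleDrop_le_condFar (hs : s.Nonempty) (F : Ω → ℤ) (m b : ℕ) :
    scaleDrop s F m b ≤ log 6 + condFar s (fun ω => F ω / 2 ^ ((b + 1) * m))
      (fun ω => F ω / 2 ^ (b * m)) * (m * log 2) := by
  set J : Ω → ℤ := fun ω => F ω / 2 ^ ((b + 1) * m)
  have hchain := entropy_uniformLaw_le_add_sum_fiber hs (fun ω => F ω / 2 ^ (b * m)) J
  have hfiber : ∑ c ∈ s.image J, (uniformLaw s J).coeff c *
      entropy (uniformLaw (fiber s J c) fun ω => F ω / 2 ^ (b * m)) ≤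
      ∑ c ∈ s.image J, (uniformLaw s J).coeff c *
        (log 6 + farFrac (fiber s J c) (fun ω => F ω / 2 ^ (b * m)) * (m * log 2)) := by
    refine Finset.sum_le_sum fun c hc =>
      mul_le_mul_of_nonneg_left ?_ (coeff_uniformLaw_nonneg hs J c)
    refine entropy_uniformLaw_le_farFrac (fiber_nonempty hc) (a := 2 ^ m * c) fun ω hω => ?_
    rw [← (mem_fiber.1 hω).2]
    exact ediv_two_pow_mem_Ico (F ω) b m
  simp only [mul_add, Finset.sum_add_distrib, ← Finset.sum_mul, sum_image_coeff_uniformLaw hs J,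
    one_mul, ← mul_assoc] at hfiber
  rw [scaleDrop, condFar, ← mul_assoc]
  linarith

lemma div_le_condFar_of_le_scaleDrop (hs : s.Nonempty) (F : Ω → ℤ) {m b : ℕ} (hm : 0 < m) {δ : ℝ}
    (hδm : 2 * log 6 ≤ δ * m) (hdrop : δ * m ≤ scaleDrop s F m b) :
    δ / (2 * log 2) ≤
      condFar s (fun ω => F ω / 2 ^ ((b + 1) * m)) fun ω => F ω / 2 ^ (b * m) := by
  have hfar := hdrop.trans (scaleDrop_le_condFar hs F m b)
  have hm' : (0 : ℝ) < m := by exact_mod_cast hm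
  have : 0 < log 2 := log_pos one_lt_two
  rw [div_le_iff₀ (by positivity)]
  refine le_of_mul_le_mul_right ?_ hm'
  linarith

lemma scaleGain_succ_le_remGain (hs : s.Nonempty) (F : Ω → ℤ) {m b : ℕ} {c : ℝ} (hc : 0 < c)
    (hfar : c ≤ condFar s (fun ω => F ω / 2 ^ ((b + 1) * m)) fun ω => F ω / 2 ^ (b * m))
    {q : AddMonoidAlgebra ℝ ℤ} (hq : IsProb q) :
    scaleGain m (b + 1) q ≤ log 4 + 4 ^ (2 * m + 1) / c *
      remGain s F (2 ^ ((b + 1) * m)) (q * dyadicUnif ((b + 1) * m)) := by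
  have hle : b * m ≤ (b + 1) * m := by gcongr; omega
  obtain ⟨D, hD, hgain⟩ := exists_condFar_mul_coinGain_le hs F (r := 2 ^ (b * m))
    (by positivity) (pow_le_pow_right₀ one_le_two hle) (hq.mul (isProb_dyadicUnif ((b + 1) * m)))
  obtain ⟨hrD, hDR⟩ := Finset.mem_Icc.1 hD
  have hreach : (2 : ℤ) * 2 ^ ((b + 1 + 1) * m) ≤ 2 ^ (2 * m + 1) * D := by
    rw [show (2 : ℤ) * 2 ^ ((b + 1 + 1) * m) = 2 ^ (2 * m + 1) * 2 ^ (b * m) by ring]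
    gcongr
  have hcoin := entropy_mul_dyadicUnif_sub_le hq ((by positivity : (0 : ℤ) < _).trans_le hrD) hDR
    (by gcongr; omega) hreach
  refine hcoin.trans ?_
  rw [div_mul_eq_mul_div, mul_div_assoc]
  gcongr
  rw [le_div_iff₀ hc, mul_comm]
  exact (mul_le_mul_of_nonneg_right hfar
    (coinGain_nonneg (hq.mul (isProb_dyadicUnif _)) D)).trans hgain

lemma scaleGain_uniformLaw_pow_le (hs : s.Nonempty) (F : Ω → ℤ) {m b : ℕ} (hm : 0 < m) {δ : ℝ}
    (hδ : 0 < δ) (hδm : 2 * log 6 ≤ δ * m) (hdrop : δ * m ≤ scaleDrop s F m b) {k : ℕ}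
    (hk : 0 < k) :
    scaleGain m (b + 1) (uniformLaw s F ^ k) ≤
      log 4 + 4 ^ (2 * m + 1) / (δ / (2 * log 2)) * (log (k + 1) / k) := by
  have : 0 < log 2 := log_pos one_lt_two
  set R : ℤ := 2 ^ ((b + 1) * m)
  set J : Ω → ℤ := fun ω => F ω / R
  set w : ℤ → ℝ := fun c => (uniformLaw s J).coeff c
  have hw : ∀ c ∈ s.image J, 0 ≤ w c := fun c _ => coeff_uniformLaw_nonneg hs J c
  have hw1 : ∑ c ∈ s.image J, w c = 1 := sum_image_coeff_uniformLaw hs J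
  have hY : ∀ c ∈ s.image J, IsProb (remLaw s F R c) := fun c => isProb_remLaw F R
  have hc : 0 < δ / (2 * log 2) := by positivity
  have hfar := div_le_condFar_of_le_scaleDrop hs F hm hδm hdrop
  calc scaleGain m (b + 1) (uniformLaw s F ^ k)
      ≤ (avgOp (s.image J) w (remLaw s F R) ^ k) (scaleGain m (b + 1)) 1 := by
        simpa only [one_mul] using scaleGain_mul_pow_le m (b + 1) hw hY (isProb_uniformLaw hs F)
          (uniformLaw_eq_sum_remLaw F R) k IsProb.one
    _ ≤ (avgOp (s.image J) w (remLaw s F R) ^ k) (fun q => log 4 + 4 ^ (2 * m + 1) /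
          (δ / (2 * log 2)) * remGain s F R (q * dyadicUnif ((b + 1) * m))) 1 :=
        avgOp_pow_mono hw hY (fun q => scaleGain_succ_le_remGain hs F hc hfar) k IsProb.one
    _ = log 4 + 4 ^ (2 * m + 1) / (δ / (2 * log 2)) *
          (avgOp (s.image J) w (remLaw s F R) ^ k) (remGain s F R) (dyadicUnif ((b + 1) * m)) := by
        rw [avgOp_pow_add_mul hw1, avgOp_pow_comp_mul_right _ k (φ := remGain s F R), one_mul]
    _ ≤ log 4 + 4 ^ (2 * m + 1) / (δ / (2 * log 2)) * (log (k + 1) / k) := by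
        gcongr
        exact avgOp_pow_avgGain_dyadicUnif_le hw hw1 hY
          (fun c _ => support_remLaw_subset F (by positivity) c) hk

end GoodScale

/-! ### Entropy growth under convolution -/

section EntropyGrowth

variable {Ω : Type*} {s : Finset Ω}

lemma sum_range_scaleDrop (F : Ω → ℤ) (m B : ℕ) : ∑ b ∈ Finset.range B, scaleDrop s F m b =
    entropy (uniformLaw s F) - entropy (uniformLaw s fun ω => F ω / 2 ^ (B * m)) :=
  (Finset.sum_range_sub' (fun b => entropy (uniformLaw s fun ω => F ω / 2 ^ (b * m))) B).trans <| by
    simp only [zero_mul, pow_zero, Int.ediv_one]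

lemma sum_le_add_card_filter_mul {B : ℕ} {h : ℕ → ℝ} {a c : ℝ} (ha : 0 ≤ a)
    (hc : ∀ b < B, h b ≤ c) :
    ∑ b ∈ Finset.range B, h b ≤ B * a + ((Finset.range B).filter fun b => a ≤ h b).card * c := by
  have hle : ∀ b ∈ Finset.range B, h b ≤ a + if a ≤ h b then c else 0 := by
    intro b hb
    have := hc b (Finset.mem_range.1 hb)
    split_ifs <;> linarith
  refine (Finset.sum_le_sum hle).trans_eq ?_
  rw [Finset.sum_add_distrib, ← Finset.sum_filter, Finset.sum_const, Finset.sum_const,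
    Finset.card_range, nsmul_eq_mul, nsmul_eq_mul]

lemma sum_le_sub_card_mul {B : ℕ} {g : ℕ → ℝ} {T : Finset ℕ} {a c : ℝ} (hc : 0 ≤ c)
    (hT : T ⊆ Finset.range B) (hg : ∀ b < B, g b ≤ a)
    (hgT : ∀ b ∈ T, b + 1 < B → g (b + 1) ≤ a - c) :
    ∑ b ∈ Finset.range B, g b ≤ B * a - (T.card - 1) * c := by
  cases B with
  | zero => simp [Finset.subset_empty.1 hT, hc]
  | succ B =>
    have hcard : (T.card : ℝ) ≤ ((Finset.range B).filter (· ∈ T)).card + 1 := by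
      have hsub : T ⊆ insert B ((Finset.range B).filter (· ∈ T)) := fun b hb => by
        have := Finset.mem_range.1 (hT hb)
        simp only [Finset.mem_insert, Finset.mem_filter, Finset.mem_range, hb, and_true]
        omega
      exact_mod_cast (Finset.card_le_card hsub).trans (Finset.card_insert_le _ _)
    have hle : ∀ b ∈ Finset.range B, g (b + 1) ≤ a - if b ∈ T then c else 0 := by
      intro b hb
      have hb' := Nat.succ_lt_succ (Finset.mem_range.1 hb)
      split_ifs with hbT
      · exact hgT b hbT hb'
      · simpa using hg _ hb'
    have hsum := Finset.sum_le_sum hle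
    rw [Finset.sum_sub_distrib, ← Finset.sum_filter, Finset.sum_const, Finset.sum_const,
      Finset.card_range, nsmul_eq_mul, nsmul_eq_mul] at hsum
    rw [Finset.sum_range_succ']
    have hzero := hg 0 B.succ_pos
    have hmul := mul_le_mul_of_nonneg_right hcard hc
    push_cast
    linarith

lemma entropy_uniformLaw_le_card_scaleDrop (hs : s.Nonempty) {F : Ω → ℤ} {m B : ℕ} {δ : ℝ}
    (hδ : 0 ≤ δ) {a : ℤ} (hF : ∀ ω ∈ s, F ω / 2 ^ (B * m) = a) :
    entropy (uniformLaw s F) ≤ B * (δ * m) +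
      ((Finset.range B).filter fun b => δ * m ≤ scaleDrop s F m b).card * (m * log 2) := by
  have hzero : entropy (uniformLaw s fun ω => F ω / 2 ^ (B * m)) = 0 := by
    have hconst : (uniformLaw s fun ω => F ω / 2 ^ (B * m)) = pointMass a := by
      rw [← uniformLaw_const hs a]
      exact Finset.sum_congr rfl fun ω hω => by simp only [hF ω hω]
    rw [hconst, entropy_pointMass]
  have hsum := sum_range_scaleDrop (s := s) F m B
  rw [hzero, sub_zero] at hsum
  rw [← hsum]
  exact sum_le_add_card_filter_mul (by positivity) fun b _ => scaleDrop_le hs F m b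

/-- A power of the law of `F` has almost full entropy at each scale following one at which `F` has
entropy, whereas `Z` is short of full entropy by `g` at every scale. -/
lemma le_mul_entropy_mul_uniformLaw_sub (hs : s.Nonempty) {F : Ω → ℤ} {m B k : ℕ} {δ g β : ℝ}
    {Z : AddMonoidAlgebra ℝ ℤ} (hZ : IsProb Z) (hm : 0 < m) (hk : 0 < k) (hδ : 0 < δ) (hg : 0 < g)
    (hδm : 2 * log 6 ≤ δ * m) (hgm : 6 * log 2 ≤ g * m)
    (hkm : 4 ^ (2 * m + 1) / (δ / (2 * log 2)) * (log (k + 1) / k) ≤ log 2)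
    (hβ : β ≤ log 2 - g) (hgain : ∀ b < B, scaleGain m b Z ≤ m * log 2 - β * m)
    {a : ℤ} (hF : ∀ ω ∈ s, F ω / 2 ^ (B * m) = a) :
    B * β * m + (entropy (uniformLaw s F) - (δ * B + log 2) * m) * (g / (2 * log 2)) - entropy Z ≤
      k * (entropy (Z * uniformLaw s F) - entropy Z) := by
  have : 0 < log 2 := log_pos one_lt_two
  have hm' : (0 : ℝ) < m := by exact_mod_cast hm
  have hP := isProb_uniformLaw hs F
  have hW := hP.pow k
  set W := uniformLaw s F ^ k
  set T := (Finset.range B).filter fun b => δ * m ≤ scaleDrop s F m b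
  have hdrop : ∀ b ∈ T, scaleGain m (b + 1) (Z * W) ≤ m * log 2 - β * m - g * m / 2 := by
    intro b hb
    have hgood := scaleGain_uniformLaw_pow_le hs F hm hδ hδm (Finset.mem_filter.1 hb).2 hk
    have hmono : scaleGain m (b + 1) (Z * W) ≤ scaleGain m (b + 1) W := by
      rw [mul_comm]
      exact scaleGain_mul_le hW hZ m (b + 1)
    have hfour : log 4 = 2 * log 2 := by
      rw [show (4 : ℝ) = 2 ^ 2 by norm_num, log_pow, Nat.cast_ofNat]
    have hβm := mul_le_mul_of_nonneg_right hβ hm'.le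
    linarith
  have hsum := sum_le_sub_card_mul (g := fun b => scaleGain m b (Z * W)) (by positivity)
    (Finset.filter_subset _ _)
    (fun b hb => (scaleGain_mul_le hZ hW m b).trans (hgain b hb)) fun b hb _ => hdrop b hb
  rw [sum_scaleGain] at hsum
  have hsmooth : B * m * log 2 ≤ entropy (Z * W * dyadicUnif (B * m)) := by
    have := entropy_le_entropy_mul_left (isProb_dyadicUnif (B * m)) (hZ.mul hW)
    rwa [entropy_dyadicUnif, Nat.cast_mul] at this
  have hcard : (entropy (uniformLaw s F) - (δ * B + log 2) * m) * (g / (2 * log 2)) ≤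
      (T.card - 1) * (g * m / 2) := by
    have := entropy_uniformLaw_le_card_scaleDrop hs hδ.le hF
    calc (entropy (uniformLaw s F) - (δ * B + log 2) * m) * (g / (2 * log 2))
        ≤ ((T.card - 1) * (m * log 2)) * (g / (2 * log 2)) := by gcongr; linarith
      _ = (T.card - 1) * (g * m / 2) := by field_simp
  have hkv := entropy_mul_pow_sub_le hZ hP k
  linarith

lemma ediv_mem_Icc_of_abs_le {a z R : ℤ} (hR : 0 < R) {K : ℕ} (hz : |z| ≤ K * R) :
    a / R ∈ Finset.Icc ((a + z) / R - K) ((a + z) / R + K) := by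
  rw [abs_le] at hz
  rw [Finset.mem_Icc, sub_le_iff_le_add, ← Int.add_mul_ediv_right _ _ hR.ne',
    ← Int.add_mul_ediv_right _ _ hR.ne']
  exact ⟨Int.ediv_le_ediv hR (by linarith), Int.ediv_le_ediv hR (by linarith)⟩

lemma sum_entropy_fiber_mul_le (hs : s.Nonempty) (A : Ω → ℤ) {R : ℤ} (hR : 0 < R)
    {Z : AddMonoidAlgebra ℝ ℤ} (hZ : IsProb Z) {K : ℕ} (hK : ∀ z, Z.coeff z ≠ 0 → |z| ≤ K * R) :
    ∑ j ∈ s.image fun ω => A ω / R, (uniformLaw s fun ω => A ω / R).coeff j *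
        entropy (uniformLaw (fiber s (fun ω => A ω / R) j) A * Z) ≤
      entropy (uniformLaw s A * Z) + log (2 * K + 1) - entropy (uniformLaw s fun ω => A ω / R) := by
  have := entropy_add_sum_fiber_mul_le (A := A) (C := 2 * K + 1) hs hZ
    (fun x => Finset.Icc (x / R - K) (x / R + K)) (fun x => le_of_eq (card_Icc_sub_add _ K))
    fun ω _ z hz => ediv_mem_Icc_of_abs_le hR (hK z hz)
  linarith

lemma sum_mul_affine {s : Finset Ω} {w : Ω → ℝ} (hw1 : ∑ j ∈ s, w j = 1) (f : Ω → ℝ) (a c : ℝ) :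
    ∑ j ∈ s, w j * (a * f j + c) = a * ∑ j ∈ s, w j * f j + c := by
  simp only [mul_add, Finset.sum_add_distrib, ← Finset.sum_mul, hw1, one_mul, mul_left_comm _ a,
    ← Finset.mul_sum]

/-- Conditioning on the integer part of `A / R`, where `R = 2 ^ (B * m)` is the scale of `Z`, brings
`A` down to a single cell of that scale. -/
lemma le_mul_entropy_mul_uniformLaw_sub_ediv (hs : s.Nonempty) (A : Ω → ℤ) {m B k : ℕ}
    {δ g β : ℝ} {Z : AddMonoidAlgebra ℝ ℤ} (hZ : IsProb Z) (hm : 0 < m) (hk : 0 < k) (hδ : 0 < δ)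
    (hg : 0 < g) (hδm : 2 * log 6 ≤ δ * m) (hgm : 6 * log 2 ≤ g * m)
    (hkm : 4 ^ (2 * m + 1) / (δ / (2 * log 2)) * (log (k + 1) / k) ≤ log 2)
    (hβ : β ≤ log 2 - g) (hgain : ∀ b < B, scaleGain m b Z ≤ m * log 2 - β * m)
    {K : ℕ} (hK : ∀ z, Z.coeff z ≠ 0 → |z| ≤ K * 2 ^ (B * m)) :
    B * β * m + (entropy (uniformLaw s A) - entropy (uniformLaw s fun ω => A ω / 2 ^ (B * m)) -
        (δ * B + log 2) * m) * (g / (2 * log 2)) - entropy Z ≤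
      k * (entropy (uniformLaw s A * Z) + log (2 * K + 1) -
        entropy (uniformLaw s fun ω => A ω / 2 ^ (B * m)) - entropy Z) := by
  have : 0 < log 2 := log_pos one_lt_two
  have hchain := entropy_uniformLaw_le_add_sum_fiber hs A fun ω => A ω / 2 ^ (B * m)
  have hoverlap := sum_entropy_fiber_mul_le hs A (by positivity : (0 : ℤ) < 2 ^ (B * m)) hZ hK
  set J : Ω → ℤ := fun ω => A ω / 2 ^ (B * m)
  have hw1 := sum_image_coeff_uniformLaw hs J
  have hfiber : ∀ j ∈ s.image J,
      g / (2 * log 2) * entropy (uniformLaw (fiber s J j) A) +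
          (B * β * m - (δ * B + log 2) * m * (g / (2 * log 2)) - entropy Z) ≤
        k * entropy (uniformLaw (fiber s J j) A * Z) + -(k * entropy Z) := by
    intro j hj
    have := le_mul_entropy_mul_uniformLaw_sub (fiber_nonempty hj) hZ hm hk hδ hg hδm hgm hkm hβ
      hgain fun ω hω => (mem_fiber.1 hω).2
    rw [mul_comm Z] at this
    linarith
  have hsum := Finset.sum_le_sum fun j hj =>
    mul_le_mul_of_nonneg_left (hfiber j hj) (coeff_uniformLaw_nonneg hs J j)
  rw [sum_mul_affine hw1, sum_mul_affine hw1] at hsum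
  have hlower := mul_le_mul_of_nonneg_left (sub_le_iff_le_add'.2 hchain)
    (by positivity : 0 ≤ g / (2 * log 2))
  have hupper := mul_le_mul_of_nonneg_left hoverlap (Nat.cast_nonneg (α := ℝ) k)
  linarith

lemma exists_mul_log_div_le (A : ℝ) {c : ℝ} (hc : 0 < c) :
    ∃ k : ℕ, 0 < k ∧ A * (log (k + 1) / k) ≤ c := by
  have hlim := (tendsto_pow_log_div_mul_add_atTop 1 (-1) 1 one_ne_zero).comp
    (tendsto_atTop_add_const_right _ (1 : ℝ) tendsto_natCast_atTop_atTop)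
  have hlim' := hlim.const_mul A
  rw [mul_zero] at hlim'
  obtain ⟨k, hk, hk0⟩ := ((hlim'.eventually (gt_mem_nhds hc)).and (eventually_gt_atTop 0)).exists
  refine ⟨k, hk0, le_of_lt ?_⟩
  simpa using hk

end EntropyGrowth

/-! ### Homogeneous self-similar sets -/

section HomogeneousIFS

variable {ι : Type*} {y : ℝ} {t : ι → ℝ}

lemma abs_floor_le (x : ℝ) : |(⌊x⌋ : ℝ)| ≤ |x| + 1 := by
  have h₁ := Int.floor_le x
  have h₂ := Int.lt_floor_add_one x
  rw [abs_le]
  constructor <;> linarith [neg_abs_le x, le_abs_self x]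

lemma floor_mem_Icc_of_abs_sub_le {x z : ℝ} {K : ℕ} (h : |x - z| ≤ K) :
    ⌊x⌋ ∈ Finset.Icc (⌊z⌋ - K) (⌊z⌋ + K) := by
  rw [abs_le] at h
  rw [Finset.mem_Icc, sub_le_iff_le_add, ← Int.floor_add_natCast, ← Int.floor_add_natCast]
  exact ⟨Int.floor_le_floor (by linarith), Int.floor_le_floor (by linarith)⟩

lemma entropy_uniformLaw_floor_mul_le {Ω : Type*} {s : Finset Ω} (hs : s.Nonempty) (f : Ω → ℝ)
    {κ : ℝ} (hκ : 0 ≤ κ) {N : ℕ} (hN : κ ≤ N) :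
    entropy (uniformLaw s fun ω => ⌊f ω * κ⌋) ≤
      entropy (uniformLaw s fun ω => ⌊f ω⌋) + log (N + 1) := by
  refine entropy_uniformLaw_le_add_log (F := fun ω => ⌊f ω * κ⌋) (J := fun ω => ⌊f ω⌋) hs
    (fun j : ℤ => Finset.Icc ⌊j * κ⌋ (⌊j * κ⌋ + N)) (fun j => (card_Icc_add _ N).le) fun ω _ => ?_
  have h₁ := mul_le_mul_of_nonneg_right (Int.floor_le (f ω)) hκ
  have h₂ := mul_le_mul_of_nonneg_right (Int.lt_floor_add_one (f ω)).le hκ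
  rw [Finset.mem_Icc, ← Int.floor_add_natCast]
  exact ⟨Int.floor_le_floor h₁, Int.floor_le_floor (by linarith)⟩

lemma entropy_uniformLaw_mul_dyadicUnif_le {Ω : Type*} {s : Finset Ω} (hs : s.Nonempty)
    {F F' : Ω → ℤ} {D : Finset ℤ} (hD : ∀ ω ∈ s, F ω - F' ω ∈ D) (a : ℕ) :
    entropy (uniformLaw s F * dyadicUnif a) ≤
      entropy (uniformLaw s F' * dyadicUnif a) + log D.card :=
  entropy_uniformLaw_mul_uniformLaw_le hs (range_two_pow_nonempty a) _ hD

/-- The point coded by the finite word `ω` for the self-similar system of the maps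
`x ↦ y⁻¹ * x + t i`. -/
def homPoint (y : ℝ) (t : ι → ℝ) {n : ℕ} (ω : Fin n → ι) : ℝ :=
  ∑ k : Fin n, (y ^ (k : ℕ))⁻¹ * t (ω k)

/-- The point coded by a word of length `n`, measured in units of `y⁻¹ ^ (n + m)` and rounded
down. -/
def homFloor (y : ℝ) (t : ι → ℝ) {n : ℕ} (m : ℕ) (ω : Fin n → ι) : ℤ :=
  ⌊homPoint y t ω * y ^ (n + m)⌋

lemma homPoint_append {n m : ℕ} (a : Fin n → ι) (b : Fin m → ι) :
    homPoint y t (Fin.append a b) = homPoint y t a + (y ^ n)⁻¹ * homPoint y t b := by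
  simp only [homPoint, Fin.sum_univ_add, Fin.append_left, Fin.append_right, Fin.val_castAdd,
    Fin.val_natAdd, Finset.mul_sum, pow_add, mul_inv, mul_assoc]

lemma exists_abs_homPoint_le [Finite ι] (hy : 1 < y) (t : ι → ℝ) :
    ∃ T : ℕ, ∀ n (ω : Fin n → ι), |homPoint y t ω| ≤ T := by
  have := Fintype.ofFinite ι
  have : 0 < y := by linarith
  have hsum : Summable fun n : ℕ => y⁻¹ ^ n :=
    summable_geometric_of_lt_one (by positivity) (inv_lt_one_of_one_lt₀ hy)
  obtain ⟨T, hT⟩ := exists_nat_ge ((∑' n : ℕ, y⁻¹ ^ n) * ∑ i, |t i|)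
  refine ⟨T, fun n ω => le_trans ?_ hT⟩
  calc |homPoint y t ω|
      ≤ ∑ k : Fin n, |(y ^ (k : ℕ))⁻¹ * t (ω k)| := Finset.abs_sum_le_sum_abs _ _
    _ ≤ ∑ k : Fin n, y⁻¹ ^ (k : ℕ) * ∑ i, |t i| := by
        refine Finset.sum_le_sum fun k _ => ?_
        rw [abs_mul, abs_of_nonneg (by positivity), inv_pow]
        gcongr
        exact Finset.single_le_sum (f := fun i => |t i|) (fun i _ => abs_nonneg _)
          (Finset.mem_univ (ω k))
    _ = (∑ k ∈ Finset.range n, y⁻¹ ^ k) * ∑ i, |t i| := by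
        rw [← Finset.sum_mul, Finset.sum_range]
    _ ≤ (∑' n : ℕ, y⁻¹ ^ n) * ∑ i, |t i| := by
        gcongr
        exact hsum.sum_le_tsum _ fun _ _ => by positivity

lemma homFloor_append_sub_mem_Icc (hy : y ≠ 0) {n m : ℕ} (a : Fin n → ι) (b : Fin m → ι) :
    homFloor y t 0 (Fin.append a b) - (homFloor y t m a + homFloor y t 0 b) ∈
      Finset.Icc (0 : ℤ) 1 := by
  have happend : homPoint y t (Fin.append a b) * y ^ (n + m + 0) =
      homPoint y t a * y ^ (n + m) + homPoint y t b * y ^ (m + 0) := by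
    rw [homPoint_append, add_zero, add_zero, pow_add]
    field_simp
  have hle := Int.le_floor_add (homPoint y t a * y ^ (n + m)) (homPoint y t b * y ^ (m + 0))
  have hge := Int.le_floor_add_floor (homPoint y t a * y ^ (n + m))
    (homPoint y t b * y ^ (m + 0))
  rw [homFloor, homFloor, homFloor, happend, Finset.mem_Icc]
  constructor <;> linarith

lemma abs_homFloor_zero_le (hy : 0 < y) {T : ℕ} (hT : ∀ n (ω : Fin n → ι), |homPoint y t ω| ≤ T)
    {n : ℕ} (ω : Fin n → ι) : |(homFloor y t 0 ω : ℝ)| ≤ T * y ^ n + 1 := by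
  refine (abs_floor_le _).trans ?_
  rw [abs_mul, add_zero, abs_of_pos (by positivity : 0 < y ^ n)]
  gcongr
  exact hT n ω

variable [Fintype ι]

/-- The law, at scale `y⁻¹ ^ (n + m)`, of the point coded by a uniformly random word of length
`n`. -/
def homLaw (y : ℝ) (t : ι → ℝ) (n m : ℕ) : AddMonoidAlgebra ℝ ℤ :=
  uniformLaw (Finset.univ : Finset (Fin n → ι)) (homFloor y t m)

/-- The entropy at scale `y⁻¹ ^ n` of the point coded by a uniformly random word of length `n`. -/
def homEntropy (y : ℝ) (t : ι → ℝ) (n : ℕ) : ℝ := entropy (homLaw y t n 0)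

lemma abs_le_of_coeff_homLaw_zero_ne_zero (hy : 0 < y) {T : ℕ}
    (hT : ∀ n (ω : Fin n → ι), |homPoint y t ω| ≤ T) {n : ℕ} {z : ℤ}
    (hz : (homLaw y t n 0).coeff z ≠ 0) : |(z : ℝ)| ≤ T * y ^ n + 1 := by
  obtain ⟨ω, -, rfl⟩ := exists_of_coeff_uniformLaw_ne_zero hz
  exact abs_homFloor_zero_le hy hT ω

lemma homLaw_mul_homLaw (n m : ℕ) : homLaw y t n m * homLaw y t m 0 =
    uniformLaw Finset.univ fun x : (Fin n → ι) × (Fin m → ι) =>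
      homFloor y t m x.1 + homFloor y t 0 x.2 := by
  rw [homLaw, homLaw, uniformLaw_mul_uniformLaw, Finset.univ_product_univ]

lemma homLaw_add_zero (n m : ℕ) : homLaw y t (n + m) 0 =
    uniformLaw Finset.univ fun x : (Fin n → ι) × (Fin m → ι) =>
      homFloor y t 0 (Fin.append x.1 x.2) :=
  (uniformLaw_univ_comp_equiv (Fin.appendEquiv n m) _).symm

lemma abs_le_of_coeff_mul_dyadicUnif_ne_zero {p : AddMonoidAlgebra ℝ ℤ} {r : ℝ}
    (hp : ∀ z, p.coeff z ≠ 0 → |(z : ℝ)| ≤ r) {a : ℕ} {z : ℤ}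
    (hz : (p * dyadicUnif a).coeff z ≠ 0) : |(z : ℝ)| ≤ r + 2 ^ a := by
  obtain ⟨u, hu, hzu⟩ := exists_coeff_ne_zero_of_mul hz
  have hu' := Finset.mem_Ico.1 (support_dyadicUnif_subset a (Finsupp.mem_support_iff.2 hu))
  have hu₀ : (0 : ℝ) ≤ u := by exact_mod_cast hu'.1
  have hu₁ : (u : ℝ) < 2 ^ a := by exact_mod_cast hu'.2
  have hzu' := abs_le.1 (hp _ hzu)
  push_cast at hzu'
  rw [abs_le]
  constructor <;> linarith [hzu'.1, hzu'.2]

variable [Nonempty ι]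

lemma isProb_homLaw (n m : ℕ) : IsProb (homLaw y t n m) :=
  isProb_uniformLaw Finset.univ_nonempty _

lemma entropy_homLaw_add_mul_le (hy : y ≠ 0) (n m a : ℕ) :
    entropy (homLaw y t (n + m) 0 * dyadicUnif a) ≤
      entropy (homLaw y t n m * homLaw y t m 0 * dyadicUnif a) + log 2 := by
  rw [homLaw_mul_homLaw, homLaw_add_zero]
  have h := entropy_uniformLaw_mul_dyadicUnif_le Finset.univ_nonempty
    (fun (x : (Fin n → ι) × (Fin m → ι)) _ => homFloor_append_sub_mem_Icc (t := t) hy x.1 x.2) a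
  simpa using h

lemma entropy_homLaw_mul_homLaw_mul_le (hy : y ≠ 0) (n m a : ℕ) :
    entropy (homLaw y t n m * homLaw y t m 0 * dyadicUnif a) ≤
      entropy (homLaw y t (n + m) 0 * dyadicUnif a) + log 2 := by
  rw [homLaw_mul_homLaw, homLaw_add_zero]
  have hD : ∀ x : (Fin n → ι) × (Fin m → ι), homFloor y t m x.1 + homFloor y t 0 x.2 -
      homFloor y t 0 (Fin.append x.1 x.2) ∈ Finset.Icc (-1 : ℤ) 0 := fun x => by
    have := Finset.mem_Icc.1 (homFloor_append_sub_mem_Icc (t := t) hy x.1 x.2)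
    rw [Finset.mem_Icc]
    constructor <;> linarith [this.1, this.2]
  simpa using entropy_uniformLaw_mul_dyadicUnif_le Finset.univ_nonempty (fun x _ => hD x) a

lemma homEntropy_add_entropy_le (hy : 0 < y) {T : ℕ}
    (hT : ∀ n (ω : Fin n → ι), |homPoint y t ω| ≤ T) (n : ℕ) {m a K : ℕ}
    (hK : T * y ^ m + 2 + 2 ^ a ≤ K * y ^ m) :
    homEntropy y t n + entropy (homLaw y t m 0 * dyadicUnif a) ≤
      entropy (homLaw y t n m * homLaw y t m 0 * dyadicUnif a) + log (2 * K + 1) := by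
  rw [mul_assoc]
  refine entropy_add_entropy_le_entropy_mul Finset.univ_nonempty
    ((isProb_homLaw m 0).mul (isProb_dyadicUnif a))
    (fun x => Finset.Icc (⌊x / y ^ m⌋ - K) (⌊x / y ^ m⌋ + K))
    (fun x => (card_Icc_sub_add _ K).le) fun ω _ z hz => floor_mem_Icc_of_abs_sub_le ?_
  have hz' := abs_le_of_coeff_mul_dyadicUnif_ne_zero
    (fun _ => abs_le_of_coeff_homLaw_zero_ne_zero hy hT) hz
  have hp : 0 < y ^ m := by positivity
  have hle := Int.floor_le (homPoint y t ω * y ^ (n + m))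
  have hlt := Int.lt_floor_add_one (homPoint y t ω * y ^ (n + m))
  rw [abs_le] at hz'
  rw [← mul_le_mul_iff_left₀ hp, ← abs_of_pos hp, ← abs_mul, sub_mul, abs_of_pos hp,
    div_mul_cancel₀ _ hp.ne', add_zero, mul_assoc, ← pow_add, homFloor, abs_le]
  push_cast
  constructor <;> linarith [hz'.1, hz'.2]

lemma entropy_homLaw_mul_homLaw_le (hy : y ≠ 0) (n m : ℕ) :
    entropy (homLaw y t n m * homLaw y t m 0) ≤ homEntropy y t (n + m) + log 2 := by
  simpa only [dyadicUnif_zero, mul_one, homEntropy] using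
    entropy_homLaw_mul_homLaw_mul_le (t := t) hy n m 0

lemma exists_homEntropy_add_le (hy : 1 < y) (t : ι → ℝ) :
    ∃ C, ∀ n m, homEntropy y t n + homEntropy y t m ≤ homEntropy y t (n + m) + C := by
  obtain ⟨T, hT⟩ := exists_abs_homPoint_le hy t
  have hy₀ : 0 < y := by linarith
  refine ⟨log (2 * (T + 3 : ℕ) + 1) + log 2, fun n m => ?_⟩
  have hadd := homEntropy_add_entropy_le hy₀ hT n (m := m) (a := 0) (K := T + 3) (by
    push_cast
    linarith [one_le_pow₀ (n := m) hy.le])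
  have hsplit := entropy_homLaw_mul_homLaw_le (t := t) hy₀.ne' n m
  rw [dyadicUnif_zero, mul_one, mul_one, ← homEntropy] at hadd
  linarith

lemma homEntropy_le_log_card_image (n : ℕ) : homEntropy y t n ≤
    log (Finset.univ.image (homFloor (n := n) y t 0)).card :=
  (isProb_homLaw n 0).entropy_le_log_card <|
    support_uniformLaw_subset fun _ hω => Finset.mem_image_of_mem _ hω

lemma homEntropy_div_le (n : ℕ) : homEntropy y t n / n ≤ log (Fintype.card ι) := by
  classical
  refine div_le_of_le_mul₀ n.cast_nonneg (log_natCast_nonneg _) ?_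
  refine (homEntropy_le_log_card_image n).trans ?_
  rw [mul_comm, ← log_pow]
  refine log_le_log ?_ ?_
  · exact_mod_cast Finset.card_pos.2 (Finset.univ_nonempty.image _)
  · exact_mod_cast Finset.card_image_le.trans (by simp)

lemma exists_tendsto_homEntropy_div (hy : 1 < y) (t : ι → ℝ) :
    ∃ α, Tendsto (fun n : ℕ => homEntropy y t n / n) atTop (𝓝 α) := by
  obtain ⟨C, hC⟩ := exists_homEntropy_add_le hy t
  have hsub : Subadditive fun n => C - homEntropy y t n := fun m n => by linarith [hC m n]
  have hbdd : BddBelow (range fun n : ℕ => (C - homEntropy y t n) / n) := by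
    refine ⟨-log (Fintype.card ι), ?_⟩
    rintro _ ⟨n, rfl⟩
    have hC₀ : 0 ≤ C := by
      have : 0 ≤ homEntropy y t 0 := (isProb_homLaw 0 0).entropy_nonneg
      have := hC 0 0
      linarith
    have : 0 ≤ C / n := by positivity
    simp only [sub_div]
    linarith [homEntropy_div_le (y := y) (t := t) n]
  refine ⟨0 - hsub.lim, Tendsto.congr (fun n => ?_)
    ((tendsto_const_div_atTop_nhds_zero_nat C).sub (hsub.tendsto_lim hbdd))⟩
  ring

lemma IsProb.entropy_le_log_of_abs_le {p : AddMonoidAlgebra ℝ ℤ} (hp : IsProb p) {K : ℕ}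
    (hK : ∀ z, p.coeff z ≠ 0 → |(z : ℝ)| ≤ K) : entropy p ≤ log (2 * K + 1) := by
  refine (hp.entropy_le_log_card (S := Finset.Icc (0 - K : ℤ) (0 + K)) fun z hz => ?_).trans_eq ?_
  · have := abs_le.1 (hK z (Finsupp.mem_support_iff.1 hz))
    rw [Finset.mem_Icc, zero_sub, zero_add]
    exact ⟨by exact_mod_cast this.1, by exact_mod_cast this.2⟩
  · rw [card_Icc_sub_add]

lemma entropy_homLaw_mul_dyadicUnif_le (hy : 0 < y) {T : ℕ}
    (hT : ∀ n (ω : Fin n → ι), |homPoint y t ω| ≤ T) {i a : ℕ} (h : y ^ i ≤ 2 ^ a) :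
    entropy (homLaw y t i 0 * dyadicUnif a) ≤ a * log 2 + log (2 * T + 5) := by
  have hone : (1 : ℝ) ≤ 2 ^ a := one_le_pow₀ (by norm_num)
  have habs : ∀ z, (homLaw y t i 0 * dyadicUnif a).coeff z ≠ 0 →
      |(z : ℝ)| ≤ ((T + 2) * 2 ^ a : ℕ) := fun z hz => by
    have hz' := abs_le_of_coeff_mul_dyadicUnif_ne_zero
      (fun _ => abs_le_of_coeff_homLaw_zero_ne_zero hy hT) hz
    have hTy : T * y ^ i ≤ T * 2 ^ a := by gcongr
    push_cast
    linarith
  refine (((isProb_homLaw i 0).mul (isProb_dyadicUnif a)).entropy_le_log_of_abs_le habs).trans ?_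
  rw [← log_pow, ← log_mul (by positivity) (by positivity)]
  refine log_le_log (by positivity) ?_
  push_cast
  linarith

lemma scaleGain_homLaw_add_le (hy : y ≠ 0) (j i m b : ℕ) :
    scaleGain m b (homLaw y t (j + i) 0) ≤ scaleGain m b (homLaw y t i 0) + 2 * log 2 := by
  have hupper := entropy_homLaw_add_mul_le (t := t) hy j i ((b + 1) * m)
  have hlower := entropy_homLaw_mul_homLaw_mul_le (t := t) hy j i (b * m)
  have hmul := scaleGain_mul_le (isProb_homLaw (y := y) (t := t) i 0)
    (isProb_homLaw (y := y) (t := t) j i) m b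
  rw [mul_comm (homLaw y t i 0)] at hmul
  simp only [scaleGain] at hmul ⊢
  linarith

lemma homEntropy_add_le_entropy_homLaw_mul_dyadicUnif (hy : 0 < y) {T : ℕ}
    (hT : ∀ n (ω : Fin n → ι), |homPoint y t ω| ≤ T) (p : ℕ) {l a K : ℕ}
    (hK : T * y ^ l + 2 + 2 ^ a ≤ K * y ^ l) :
    homEntropy y t p + a * log 2 ≤
      entropy (homLaw y t (p + l) 0 * dyadicUnif a) + log (2 * K + 1) + log 2 := by
  have hadd := homEntropy_add_entropy_le hy hT p hK
  have hsplit := entropy_homLaw_mul_homLaw_mul_le (t := t) hy.ne' p l a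
  have hunif := entropy_le_entropy_mul_left (isProb_dyadicUnif a)
    (isProb_homLaw (y := y) (t := t) l 0)
  rw [entropy_dyadicUnif] at hunif
  linarith

lemma exists_scaleGain_homLaw_le (hy : 1 < y) (t : ι → ℝ) :
    ∃ C, ∀ m p b N : ℕ, y ^ p ≤ 2 ^ m → (2 : ℝ) ^ ((b + 1) * m) ≤ y ^ N →
      scaleGain m b (homLaw y t N 0) ≤ m * log 2 - homEntropy y t p + C := by
  obtain ⟨T, hT⟩ := exists_abs_homPoint_le hy t
  obtain ⟨Y, hY⟩ := exists_nat_ge y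
  have hy₀ : 0 < y := by linarith
  refine ⟨log (2 * T + 5) + log (2 * (T + 2 + Y : ℕ) + 1) + 3 * log 2, fun m p b N hp hN => ?_⟩
  obtain ⟨i, hi, hi'⟩ := exists_nat_pow_near (x := (2 : ℝ) ^ ((b + 1) * m)) (y := y)
    (one_le_pow₀ (by norm_num)) hy
  obtain ⟨j, rfl⟩ := Nat.exists_eq_add_of_le' ((pow_le_pow_iff_right₀ hy).1 (hi.trans hN))
  rw [add_one_mul b m, pow_add] at hi'
  have hpi : p < i + 1 := (pow_lt_pow_iff_right₀ hy).1 <| hp.trans_lt <|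
    (le_mul_of_one_le_left (by positivity) (one_le_pow₀ (by norm_num))).trans_lt hi'
  obtain ⟨l, rfl⟩ := Nat.exists_eq_add_of_le (Nat.lt_succ_iff.1 hpi)
  have hl : (2 : ℝ) ^ (b * m) ≤ y ^ l * Y := by
    refine le_of_mul_le_mul_right (a := (2 : ℝ) ^ m) ?_ (by positivity)
    calc (2 : ℝ) ^ (b * m) * 2 ^ m ≤ y ^ (p + l + 1) := hi'.le
      _ = y ^ l * y * y ^ p := by ring
      _ ≤ y ^ l * Y * 2 ^ m := by gcongr
  have hreduce := scaleGain_homLaw_add_le (t := t) hy₀.ne' j (p + l) m b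
  have hupper := entropy_homLaw_mul_dyadicUnif_le hy₀ hT hi
  have hlower := homEntropy_add_le_entropy_homLaw_mul_dyadicUnif hy₀ hT p (l := l) (a := b * m)
    (K := T + 2 + Y) (by
      push_cast
      linarith [one_le_pow₀ (n := l) hy.le])
  rw [scaleGain, scaleGain] at hreduce
  push_cast at hupper hlower ⊢
  rw [scaleGain]
  linarith

end HomogeneousIFS

lemma exists_two_pow_mul_near {y : ℝ} (hy : 1 < y) {m : ℕ} (hm : 0 < m) (N : ℕ) :
    ∃ B : ℕ, 2 ^ (B * m) ≤ y ^ N ∧ y ^ N ≤ 2 ^ (B * m) * 2 ^ m ∧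
      |B * m - N * (log y / log 2)| ≤ m := by
  have hlog : 0 < log 2 := log_pos one_lt_two
  have hyN : 0 < y ^ N := by positivity
  obtain ⟨B, hlo, hhi⟩ := exists_nat_pow_near (one_le_pow₀ hy.le (n := N))
    (one_lt_pow₀ (one_lt_two (α := ℝ)) hm.ne')
  rw [pow_succ] at hhi
  rw [← pow_mul, mul_comm m B] at hlo hhi
  refine ⟨B, hlo, hhi.le, ?_⟩
  have hlo' := log_le_log (by positivity) hlo
  have hhi' := log_le_log hyN hhi.le
  rw [log_mul (by positivity) (by positivity)] at hhi'
  simp only [log_pow] at hlo' hhi'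
  push_cast at hlo' hhi'
  rw [mul_div_assoc', abs_le]
  constructor
  · rw [neg_le_sub_iff_le_add, div_le_iff₀ hlog]
    linarith
  · rw [sub_le_iff_le_add, ← sub_le_iff_le_add', le_div_iff₀ hlog]
    nlinarith [m.cast_nonneg (α := ℝ)]

section EntropyGrowth

variable {ι : Type*} {y : ℝ} {t : ι → ℝ}

lemma homFloor_ediv_two_pow (n N a : ℕ) (ω : Fin n → ι) :
    homFloor y t N ω / 2 ^ a = ⌊homPoint y t ω * y ^ n * (y ^ N / 2 ^ a)⌋ := by
  have h := Int.floor_div_natCast (homPoint y t ω * y ^ (n + N)) (2 ^ a)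
  push_cast at h
  rw [homFloor, ← h, pow_add]
  ring_nf

lemma homFloor_injective {n N : ℕ}
    (hsep : ∀ ω ω' : Fin n → ι, ω ≠ ω' →
      1 ≤ |homPoint y t ω * y ^ (n + N) - homPoint y t ω' * y ^ (n + N)|) :
    Function.Injective (homFloor (n := n) y t N) := fun ω ω' h => by
  by_contra hne
  exact (hsep ω ω' hne).not_gt (Int.abs_sub_lt_one_of_floor_eq_floor h)

variable [Fintype ι]

lemma abs_le_mul_of_coeff_homLaw_zero_ne_zero (hy : 0 < y) {T : ℕ}
    (hT : ∀ n (ω : Fin n → ι), |homPoint y t ω| ≤ T) {N a m : ℕ} (h : y ^ N ≤ 2 ^ a * 2 ^ m)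
    {z : ℤ} (hz : (homLaw y t N 0).coeff z ≠ 0) : |z| ≤ (T * 2 ^ m + 1 : ℕ) * 2 ^ a := by
  have hone : (1 : ℝ) ≤ 2 ^ a := one_le_pow₀ (by norm_num)
  have hTy : T * y ^ N ≤ T * (2 ^ a * 2 ^ m) := by gcongr
  have := abs_le_of_coeff_homLaw_zero_ne_zero hy hT hz
  have hreal : |(z : ℝ)| ≤ (T * 2 ^ m + 1) * 2 ^ a := by linarith
  exact_mod_cast hreal

variable [Nonempty ι]

lemma entropy_homLaw_of_injective {n N : ℕ}
    (h : Function.Injective (homFloor (n := n) y t N)) :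
    entropy (homLaw y t n N) = n * log (Fintype.card ι) := by
  rw [homLaw, entropy_uniformLaw_of_injOn Finset.univ_nonempty h.injOn]
  simp

lemma entropy_homFloor_ediv_le {n N a m : ℕ} (hy : 0 < y) (h : y ^ N ≤ 2 ^ a * 2 ^ m) :
    entropy (uniformLaw Finset.univ fun ω : Fin n → ι => homFloor y t N ω / 2 ^ a) ≤
      homEntropy y t n + log (2 ^ m + 1) := by
  simp_rw [homFloor_ediv_two_pow]
  have := entropy_uniformLaw_floor_mul_le (s := (Finset.univ : Finset (Fin n → ι)))
    Finset.univ_nonempty (fun ω => homPoint y t ω * y ^ n) (κ := y ^ N / 2 ^ a) (N := 2 ^ m)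
    (by positivity) (by
      push_cast
      rwa [div_le_iff₀' (by positivity)])
  exact_mod_cast this

lemma homEntropy_le_entropy_homFloor_ediv {n N a : ℕ} (hy : 0 < y) (h : 2 ^ a ≤ y ^ N) :
    homEntropy y t n ≤
      entropy (uniformLaw Finset.univ fun ω : Fin n → ι => homFloor y t N ω / 2 ^ a) + log 2 := by
  simp_rw [homFloor_ediv_two_pow]
  have := entropy_uniformLaw_floor_mul_le (s := (Finset.univ : Finset (Fin n → ι)))
    Finset.univ_nonempty (fun ω => homPoint y t ω * y ^ n * (y ^ N / 2 ^ a))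
    (κ := 2 ^ a / y ^ N) (N := 1) (by positivity) (by
      push_cast
      exact div_le_one_of_le₀ h (by positivity))
  have hcancel : ∀ x : ℝ, x * (y ^ N / 2 ^ a) * (2 ^ a / y ^ N) = x := fun x => by field_simp
  simp only [hcancel, Nat.cast_one, one_add_one_eq_two] at this
  exact this

lemma exists_homEntropy_growth (hy : 1 < y) {m k : ℕ} {δ g β : ℝ} (hm : 0 < m) (hk : 0 < k)
    (hδ : 0 < δ) (hg : 0 < g) (hδm : 2 * log 6 ≤ δ * m) (hgm : 6 * log 2 ≤ g * m)
    (hkm : 4 ^ (2 * m + 1) / (δ / (2 * log 2)) * (log (k + 1) / k) ≤ log 2) (hβ : β ≤ log 2 - g)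
    (hgain : ∀ b N : ℕ, (2 : ℝ) ^ ((b + 1) * m) ≤ y ^ N →
      scaleGain m b (homLaw y t N 0) ≤ m * log 2 - β * m) :
    ∃ C, ∀ n N B : ℕ, Function.Injective (homFloor (n := n) y t N) → 2 ^ (B * m) ≤ y ^ N →
      y ^ N ≤ 2 ^ (B * m) * 2 ^ m →
      B * β * m + (n * log (Fintype.card ι) - homEntropy y t n - δ * B * m) * (g / (2 * log 2)) -
          homEntropy y t N ≤
        k * (homEntropy y t (n + N) - homEntropy y t n - homEntropy y t N) + C := by
  have hy₀ : 0 < y := by linarith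
  have : 0 < log 2 := log_pos one_lt_two
  obtain ⟨T, hT⟩ := exists_abs_homPoint_le hy t
  refine ⟨(log 2 * m + log (2 ^ m + 1)) * (g / (2 * log 2)) +
    k * (2 * log 2 + log (2 * (T * 2 ^ m + 1 : ℕ) + 1)), fun n N B hinj hlo hhi => ?_⟩
  have hmain := le_mul_entropy_mul_uniformLaw_sub_ediv (B := B) (K := T * 2 ^ m + 1)
    (Finset.univ_nonempty (α := Fin n → ι)) (homFloor y t N) (isProb_homLaw (y := y) (t := t) N 0)
    hm hk hδ hg hδm hgm hkm hβ
    (fun b hb => hgain b N <| le_trans (by gcongr <;> norm_num; omega) hlo)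
    (fun z hz => abs_le_mul_of_coeff_homLaw_zero_ne_zero hy₀ hT hhi hz)
  have hle := entropy_homFloor_ediv_le (t := t) (n := n) hy₀ hhi
  have hge := homEntropy_le_entropy_homFloor_ediv (t := t) (n := n) hy₀ hlo
  rw [← homLaw, entropy_homLaw_of_injective hinj, ← homEntropy] at hmain
  set J := entropy (uniformLaw Finset.univ fun ω : Fin n → ι => homFloor y t N ω / 2 ^ (B * m))
  have hleft := mul_le_mul_of_nonneg_right hle (by positivity : 0 ≤ g / (2 * log 2))
  have hright : k * (entropy (homLaw y t n N * homLaw y t N 0) - J) ≤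
      k * (homEntropy y t (n + N) + log 2 - (homEntropy y t n - log 2)) := by
    gcongr
    · exact entropy_homLaw_mul_homLaw_le hy₀.ne' n N
    · linarith
  linarith

omit [Nonempty ι] in
lemma tendsto_homEntropy_mul_div {α : ℝ}
    (hα : Tendsto (fun n : ℕ => homEntropy y t n / n) atTop (𝓝 α)) (q : ℕ) :
    Tendsto (fun n : ℕ => homEntropy y t (q * n) / n) atTop (𝓝 (q * α)) := by
  rcases q.eq_zero_or_pos with rfl | hq
  · simpa using tendsto_const_div_atTop_nhds_zero_nat (homEntropy y t 0)
  · have hq' : (q : ℝ) ≠ 0 := by positivity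
    refine ((hα.comp (tendsto_id.const_mul_atTop' hq)).const_mul (q : ℝ)).congr fun n => ?_
    simp only [Function.comp_apply, id_eq]
    push_cast
    field_simp

lemma entropy_growth_limit_le (hy : 1 < y) {m k r : ℕ} {δ g β α : ℝ} (hm : 0 < m) (hk : 0 < k)
    (hδ : 0 < δ) (hg : 0 < g) (hδm : 2 * log 6 ≤ δ * m) (hgm : 6 * log 2 ≤ g * m)
    (hkm : 4 ^ (2 * m + 1) / (δ / (2 * log 2)) * (log (k + 1) / k) ≤ log 2) (hβ : β ≤ log 2 - g)
    (hgain : ∀ b N : ℕ, (2 : ℝ) ^ ((b + 1) * m) ≤ y ^ N →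
      scaleGain m b (homLaw y t N 0) ≤ m * log 2 - β * m)
    (hα : Tendsto (fun n : ℕ => homEntropy y t n / n) atTop (𝓝 α))
    (hinj : ∃ᶠ n in atTop, Function.Injective (homFloor (n := n) y t (r * n))) :
    r * (log y / log 2) * β +
      (log (Fintype.card ι) - α - δ * (r * (log y / log 2))) * (g / (2 * log 2)) ≤ r * α := by
  obtain ⟨C, hC⟩ := exists_homEntropy_growth hy hm hk hδ hg hδm hgm hkm hβ hgain
  set G := g / (2 * log 2)
  set c := log y / log 2
  have hr := tendsto_homEntropy_mul_div hα r
  have hr' := tendsto_homEntropy_mul_div hα (r + 1)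
  have hlim := ((((tendsto_const_nhds (x := r * c * β)).add
    (((tendsto_const_nhds (x := log (Fintype.card ι))).sub hα).sub_const (δ * (r * c)) |>.mul_const
      G)).sub hr).sub (((hr'.sub hα).sub hr).const_mul (k : ℝ))).sub
    (tendsto_const_div_atTop_nhds_zero_nat (C + m * |β - δ * G|))
  have hfreq : ∃ᶠ n : ℕ in atTop, r * c * β + (log (Fintype.card ι) - homEntropy y t n / n -
      δ * (r * c)) * G - homEntropy y t (r * n) / n - k * (homEntropy y t ((r + 1) * n) / n -
      homEntropy y t n / n - homEntropy y t (r * n) / n) - (C + m * |β - δ * G|) / n ≤ 0 := by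
    refine (hinj.and_eventually (eventually_gt_atTop 0)).mono fun n ⟨hn, hn₀⟩ => ?_
    obtain ⟨B, hlo, hhi, hB⟩ := exists_two_pow_mul_near hy hm (r * n)
    have hgrowth := hC n (r * n) B hn hlo hhi
    have herror : |(B * m - r * n * c) * (β - δ * G)| ≤ m * |β - δ * G| := by
      rw [abs_mul]
      gcongr
      exact_mod_cast hB
    have hn' : (0 : ℝ) < n := by exact_mod_cast hn₀
    refine le_of_mul_le_mul_right (a := (n : ℝ)) ?_ hn'
    rw [show n + r * n = (r + 1) * n by ring] at hgrowth
    field_simp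
    linarith [neg_abs_le ((B * m - r * n * c) * (β - δ * G))]
  have := le_of_tendsto_of_frequently hlim hfreq
  push_cast at this
  linarith

lemma pow_floor_le_two_pow (hy : 1 < y) (m : ℕ) : y ^ ⌊log 2 / log y * m⌋₊ ≤ 2 ^ m := by
  have hlog : 0 < log y := log_pos hy
  have : 0 < log 2 := log_pos one_lt_two
  rw [← log_le_log_iff (by positivity) (by positivity), log_pow, log_pow, ← le_div_iff₀ hlog]
  refine (Nat.floor_le (by positivity)).trans_eq ?_
  ring

lemma eventually_scaleGain_homLaw_le (hy : 1 < y) {α β : ℝ}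
    (hα : Tendsto (fun n : ℕ => homEntropy y t n / n) atTop (𝓝 α))
    (hβ : β < log 2 / log y * α) :
    ∀ᶠ m : ℕ in atTop, ∀ b N : ℕ, (2 : ℝ) ^ ((b + 1) * m) ≤ y ^ N →
      scaleGain m b (homLaw y t N 0) ≤ m * log 2 - β * m := by
  obtain ⟨C, hC⟩ := exists_scaleGain_homLaw_le hy t
  have hratio : 0 < log 2 / log y := div_pos (log_pos one_lt_two) (log_pos hy)
  have hfloor : Tendsto (fun m : ℕ => ⌊log 2 / log y * m⌋₊) atTop atTop :=
    tendsto_nat_floor_atTop.comp (tendsto_natCast_atTop_atTop.const_mul_atTop hratio)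
  have hscale : Tendsto (fun m : ℕ => (⌊log 2 / log y * m⌋₊ : ℝ) / m) atTop
      (𝓝 (log 2 / log y)) :=
    (tendsto_nat_floor_mul_div_atTop hratio.le).comp tendsto_natCast_atTop_atTop
  have hlim := (hscale.mul (hα.comp hfloor)).sub (tendsto_const_div_atTop_nhds_zero_nat C)
  rw [sub_zero] at hlim
  filter_upwards [hlim.eventually_const_lt hβ, hfloor.eventually_gt_atTop 0,
    eventually_gt_atTop 0] with m hm hp hm₀ b N hN
  have hm' : (0 : ℝ) < m := by exact_mod_cast hm₀
  have hp' : (0 : ℝ) < ⌊log 2 / log y * m⌋₊ := by exact_mod_cast hp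
  rw [Function.comp_apply, div_mul_div_cancel₀' hp'.ne', ← sub_div, lt_div_iff₀ hm'] at hm
  linarith [hC m _ b N (pow_floor_le_two_pow hy m) hN]

lemma mul_le_of_frequently_injective (hy : 1 < y) {r : ℕ} {α ε : ℝ} (hε : 0 < ε)
    (hα : Tendsto (fun n : ℕ => homEntropy y t n / n) atTop (𝓝 α)) (hαy : α < log y)
    (hinj : ∃ᶠ n in atTop, Function.Injective (homFloor (n := n) y t (r * n))) :
    (log (Fintype.card ι) - α) * (1 - α / log y) ≤
      ε * (r * (log y / log 2) * (3 - α / log y)) := by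
  have hlog : 0 < log y := log_pos hy
  have hlog2 : 0 < log 2 := log_pos one_lt_two
  have hg : 0 < log 2 * (1 - α / log y) :=
    mul_pos hlog2 (sub_pos.2 ((div_lt_one hlog).2 hαy))
  have hcast := tendsto_natCast_atTop_atTop (R := ℝ)
  obtain ⟨m, hgain, hδm, hgm, hm⟩ := ((eventually_scaleGain_homLaw_le hy hα (sub_lt_self _ hε)).and
    (((hcast.const_mul_atTop hε).eventually_ge_atTop (2 * log 6)).and
      (((hcast.const_mul_atTop hg).eventually_ge_atTop (6 * log 2)).and
        (eventually_gt_atTop 0)))).exists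
  obtain ⟨k, hk, hkm⟩ := exists_mul_log_div_le (4 ^ (2 * m + 1) / (ε / (2 * log 2))) hlog2
  have hlimit := entropy_growth_limit_le hy hm hk hε hg hδm hgm hkm (by
    rw [mul_one_sub, div_mul_eq_mul_div, mul_div_assoc]
    linarith) hgain hα hinj
  have hcancel : r * (log y / log 2) * (log 2 / log y * α - ε) =
      r * α - ε * (r * (log y / log 2)) := by
    field_simp
  have hratio : log 2 * (1 - α / log y) / (2 * log 2) = (1 - α / log y) / 2 := by
    field_simp
  rw [hratio, hcancel] at hlimit
  linarith

/-- Hochman's theorem for homogeneous systems, with exponential separation expressed by `hinj`. -/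
theorem tendsto_homEntropy_div (hy : 1 < y) (hcard : log (Fintype.card ι) < log y) {r : ℕ}
    (hinj : ∃ᶠ n in atTop, Function.Injective (homFloor (n := n) y t (r * n))) :
    Tendsto (fun n : ℕ => homEntropy y t n / n) atTop (𝓝 (log (Fintype.card ι))) := by
  obtain ⟨α, hα⟩ := exists_tendsto_homEntropy_div hy t
  have hle : α ≤ log (Fintype.card ι) := le_of_tendsto' hα homEntropy_div_le
  have hαy := hle.trans_lt hcard
  have hlim : Tendsto (fun ε : ℝ => ε * (r * (log y / log 2) * (3 - α / log y))) (𝓝[>] 0) (𝓝 0) :=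
    tendsto_nhdsWithin_of_tendsto_nhds (Continuous.tendsto' (by fun_prop) _ _ (zero_mul _))
  have hmul := ge_of_tendsto hlim <| eventually_nhdsWithin_of_forall fun ε hε =>
    mul_le_of_frequently_injective hy hε hα hαy hinj
  have hge := nonpos_of_mul_nonpos_left hmul (sub_pos.2 ((div_lt_one (log_pos hy)).2 hαy))
  rwa [le_antisymm (sub_nonpos.1 hge) hle]

end EntropyGrowth

/-! ### Hausdorff dimension of sets invariant under a homogeneous system -/

section Coding

variable {ι : Type*} {y : ℝ} {t : ι → ℝ} {K : Set ℝ}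

/-- The point coded by the infinite word `d` for the self-similar system of the maps
`x ↦ y⁻¹ * x + t i`. -/
def homLimit (y : ℝ) (t : ι → ℝ) (d : ℕ → ι) : ℝ := ∑' k : ℕ, (y ^ k)⁻¹ * t (d k)

lemma summable_inv_pow_mul [Finite ι] (hy : 1 < y) (t : ι → ℝ) (d : ℕ → ι) :
    Summable fun k : ℕ => (y ^ k)⁻¹ * t (d k) := by
  obtain ⟨D, hD⟩ := (Set.finite_range fun i => |t i|).bddAbove
  have : 0 < y := by linarith
  refine ((summable_geometric_of_lt_one (by positivity) (inv_lt_one_of_one_lt₀ hy)).mul_right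
    D).of_norm_bounded fun k => ?_
  rw [norm_mul, norm_of_nonneg (by positivity), inv_pow, Real.norm_eq_abs]
  gcongr
  exact hD ⟨d k, rfl⟩

lemma homLimit_eq_add [Finite ι] (hy : 1 < y) (t : ι → ℝ) (d : ℕ → ι) :
    homLimit y t d = t (d 0) + y⁻¹ * homLimit y t fun k => d (k + 1) := by
  rw [homLimit, (summable_inv_pow_mul hy t d).tsum_eq_zero_add, homLimit, ← tsum_mul_left]
  simp [pow_succ, mul_assoc]

lemma inv_pow_mul_add_homPoint_mem (hK : ∀ i, MapsTo (fun x => y⁻¹ * x + t i) K K) {n : ℕ}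
    (ω : Fin n → ι) {x : ℝ} (hx : x ∈ K) : (y ^ n)⁻¹ * x + homPoint y t ω ∈ K := by
  induction n with
  | zero => simpa [homPoint] using hx
  | succ n ih =>
    convert hK (ω 0) (ih fun k => ω k.succ) using 1
    simp only [homPoint, Fin.sum_univ_succ, Fin.val_zero, Fin.val_succ, pow_zero, inv_one, one_mul,
      mul_add, Finset.mul_sum, pow_succ', mul_inv, mul_assoc]
    ring

lemma homLimit_mem [Finite ι] (hy : 1 < y) (hKc : IsClosed K) (hKn : K.Nonempty)
    (hK : ∀ i, MapsTo (fun x => y⁻¹ * x + t i) K K) (d : ℕ → ι) : homLimit y t d ∈ K := by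
  obtain ⟨x, hx⟩ := hKn
  have hpow : Tendsto (fun n : ℕ => (y ^ n)⁻¹ * x) atTop (𝓝 0) := by
    simpa using (tendsto_pow_atTop_atTop_of_one_lt hy).inv_tendsto_atTop.mul_const x
  have hlim := hpow.add (summable_inv_pow_mul hy t d).hasSum.tendsto_sum_nat
  rw [zero_add] at hlim
  refine hKc.mem_of_tendsto hlim (Eventually.of_forall fun n => ?_)
  simpa only [homPoint, Finset.sum_range] using
    inv_pow_mul_add_homPoint_mem hK (fun k : Fin n => d k) hx

lemma one_le_abs_homLimit_sub_mul [Finite ι] (hy : 1 < y) {D : ℝ} (hD : ∀ d, |homLimit y t d| ≤ D)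
    (hsep : Pairwise fun i i' => 2 * D + 1 ≤ |t i - t i'| * y) {j : ℕ} {d d' : ℕ → ι}
    (heq : ∀ i < j, d i = d' i) (hne : d j ≠ d' j) :
    1 ≤ |homLimit y t d - homLimit y t d'| * y ^ (j + 1) := by
  have hy₀ : 0 < y := by linarith
  induction j generalizing d d' with
  | zero =>
    have hfirst := hsep hne
    rw [homLimit_eq_add hy t d, homLimit_eq_add hy t d', zero_add, pow_one]
    set u := homLimit y t fun k => d (k + 1)
    set v := homLimit y t fun k => d' (k + 1)
    have htail : |v - u| ≤ 2 * D := by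
      refine (abs_sub _ _).trans ?_
      linarith [hD fun k => d (k + 1), hD fun k => d' (k + 1)]
    calc 1 ≤ |t (d 0) - t (d' 0)| * y - |v - u| := by linarith
      _ = |(t (d 0) - t (d' 0)) * y| - |v - u| := by rw [abs_mul, abs_of_pos hy₀]
      _ ≤ |(t (d 0) - t (d' 0)) * y - (v - u)| := abs_sub_abs_le_abs_sub _ _
      _ = |t (d 0) + y⁻¹ * u - (t (d' 0) + y⁻¹ * v)| * y := by
          rw [← abs_of_pos hy₀, ← abs_mul, abs_of_pos hy₀]
          congr 1
          field_simp
          ring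
  | succ j ih =>
    have hshift := ih (d := fun k => d (k + 1)) (d' := fun k => d' (k + 1))
      (fun i hi => heq (i + 1) (by omega)) hne
    rw [homLimit_eq_add hy t d, homLimit_eq_add hy t d', heq 0 (by omega),
      add_sub_add_left_eq_sub, ← mul_sub, abs_mul, abs_of_pos (inv_pos.2 hy₀), pow_succ]
    field_simp
    linarith

lemma abs_ofDigits_sub_le_mul_rpow {b : ℕ} {t : Fin b → ℝ} (hb : 1 < b) (hy : 1 < y) {D : ℝ}
    (hD : ∀ d, |homLimit y t d| ≤ D)
    (hsep : Pairwise fun i i' => 2 * D + 1 ≤ |t i - t i'| * y) (d d' : ℕ → Fin b) :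
    |ofDigits d - ofDigits d'| ≤ b * |homLimit y t d - homLimit y t d'| ^ (log b / log y) := by
  have hb₀ : (1 : ℝ) < b := by exact_mod_cast hb
  have hs : 0 < log b / log y := div_pos (log_pos hb₀) (log_pos hy)
  have hy₀ : 0 < y := by linarith
  rcases eq_or_ne d d' with rfl | hne
  · rw [sub_self, abs_zero]
    positivity
  set j := PiNat.firstDiff d d'
  have heq : ∀ i < j, d i = d' i := fun i => PiNat.apply_eq_of_lt_firstDiff
  have hlower := one_le_abs_homLimit_sub_mul hy hD hsep heq (PiNat.apply_firstDiff_ne hne)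
  have hpow : (y ^ (j + 1)) ^ (log b / log y) = (b : ℝ) ^ (j + 1) := by
    rw [← rpow_natCast, ← rpow_mul hy₀.le, mul_comm, rpow_mul hy₀.le, rpow_natCast,
      rpow_def_of_pos hy₀, mul_div_cancel₀ _ (log_pos hy).ne', exp_log (by positivity)]
  have hrpow := rpow_le_rpow zero_le_one hlower hs.le
  rw [one_rpow, mul_rpow (abs_nonneg _) (by positivity), hpow, pow_succ'] at hrpow
  refine (abs_ofDigits_sub_ofDigits_le heq).trans ?_
  rw [inv_le_iff_one_le_mul₀ (by positivity)]
  linarith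

lemma dimH_range_le_of_edist_le {A X Y : Type*} [EMetricSpace X] [EMetricSpace Y] {F : A → X}
    {G : A → Y} {C s : NNReal} (hs : 0 < s)
    (h : ∀ a a', edist (G a) (G a') ≤ C * edist (F a) (F a') ^ (s : ℝ)) :
    dimH (range G) ≤ dimH (range F) / s := by
  rcases isEmpty_or_nonempty A with hA | ⟨⟨a₀⟩⟩
  · rw [range_eq_empty, dimH_empty]
    exact zero_le
  have hfactor : G.FactorsThrough F := fun a a' haa' => by
    simpa [haa', hs] using h a a'
  have hholder : HolderOnWith C s (Function.extend F G fun _ => G a₀) (range F) := by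
    rintro _ ⟨a, rfl⟩ _ ⟨a', rfl⟩
    simpa only [hfactor.extend_apply] using h a a'
  refine (dimH_mono ?_).trans (hholder.dimH_image_le hs)
  rintro _ ⟨a, rfl⟩
  exact ⟨F a, mem_range_self a, hfactor.extend_apply _ a⟩

lemma ofReal_log_div_log_le_dimH {b : ℕ} {t : Fin b → ℝ} (hb : 1 < b) (hy : 1 < y)
    (hKc : IsClosed K) (hKn : K.Nonempty) (hK : ∀ i, MapsTo (fun x => y⁻¹ * x + t i) K K)
    {D : ℝ} (hD : ∀ x ∈ K, |x| ≤ D) (hsep : Pairwise fun i i' => 2 * D + 1 ≤ |t i - t i'| * y) :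
    ENNReal.ofReal (log b / log y) ≤ dimH K := by
  have hmem := homLimit_mem hy hKc hKn hK
  have hb₀ : (1 : ℝ) < b := by exact_mod_cast hb
  have hs : 0 < log b / log y := div_pos (log_pos hb₀) (log_pos hy)
  have hdim := dimH_range_le_of_edist_le (F := homLimit y t) (G := ofDigits) (C := b)
    (s := (log b / log y).toNNReal) (Real.toNNReal_pos.2 hs) fun d d' => by
      rw [edist_dist, edist_dist, Real.dist_eq, Real.dist_eq, Real.coe_toNNReal _ hs.le,
        ENNReal.ofReal_rpow_of_nonneg (abs_nonneg _) hs.le, ENNReal.coe_natCast,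
        ← ENNReal.ofReal_natCast, ← ENNReal.ofReal_mul (by positivity)]
      exact ENNReal.ofReal_le_ofReal
        (abs_ofDigits_sub_le_mul_rpow hb hy (fun d => hD _ (hmem d)) hsep d d')
  have hIcc : dimH (Icc (0 : ℝ) 1) = 1 := by
    rw [Real.dimH_of_nonempty_interior (by simp), Module.finrank_self, Nat.cast_one]
  have hone : 1 ≤ dimH K / ENNReal.ofReal (log b / log y) := by
    rw [← hIcc]
    refine (dimH_mono fun x hx => ?_).trans
      (hdim.trans (ENNReal.div_le_div_right (dimH_mono (range_subset_iff.2 hmem)) _))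
    obtain ⟨d, -, hd⟩ := ofDigits_SurjOn hb hx
    exact ⟨d, hd⟩
  rwa [ENNReal.le_div_iff_mul_le (Or.inl (ENNReal.ofReal_pos.2 hs).ne')
    (Or.inl ENNReal.ofReal_ne_top), one_mul] at hone

lemma exists_subset_separated (V : Finset ℤ) {g : ℕ} (hg : 0 < g) :
    ∃ V' ⊆ V, V.card ≤ g * V'.card ∧ ∀ x ∈ V', ∀ z ∈ V', x ≠ z → (g : ℤ) ≤ |x - z| := by
  have hg' : (0 : ℤ) < g := by exact_mod_cast hg
  by_contra! h
  have hfiber : ∀ c ∈ Finset.Ico (0 : ℤ) g,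
      g * (V.filter fun x => x % g = c).card < V.card := fun c _ => by
    by_contra! hc
    obtain ⟨x, hx, z, hz, hne, hlt⟩ := h _ (Finset.filter_subset _ V) hc
    have hmod := (Finset.mem_filter.1 hx).2.trans (Finset.mem_filter.1 hz).2.symm
    have hzero := Int.eq_zero_of_abs_lt_dvd (Int.ModEq.dvd hmod.symm) hlt
    exact hne (sub_eq_zero.1 hzero)
  have hcard := Finset.card_eq_sum_card_fiberwise (s := V) (t := Finset.Ico (0 : ℤ) g)
    (f := fun x : ℤ => x % g) fun x _ => by
      rw [Finset.coe_Ico]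
      exact ⟨Int.emod_nonneg _ hg'.ne', Int.emod_lt_of_pos _ hg'⟩
  have hsum := Finset.sum_lt_sum_of_nonempty ⟨0, Finset.mem_Ico.2 ⟨le_rfl, hg'⟩⟩ hfiber
  rw [← Finset.mul_sum, ← hcard] at hsum
  simp at hsum

lemma abs_floor_sub_floor_le (x z : ℝ) : |(⌊x⌋ : ℝ) - ⌊z⌋| ≤ |x - z| + 1 := by
  have hx := Int.floor_le x
  have hx' := Int.lt_floor_add_one x
  have hz := Int.floor_le z
  have hz' := Int.lt_floor_add_one z
  rw [abs_le]
  constructor <;> linarith [neg_abs_le (x - z), le_abs_self (x - z)]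

lemma le_abs_homPoint_sub_mul_pow {g n : ℕ} (hy : 0 < y) {ω ω' : Fin n → ι}
    (h : (g : ℤ) ≤ |homFloor y t 0 ω - homFloor y t 0 ω'|) :
    (g : ℝ) ≤ |homPoint y t ω - homPoint y t ω'| * y ^ n + 1 := by
  have hcast : (g : ℝ) ≤ |(homFloor y t 0 ω : ℝ) - homFloor y t 0 ω'| := by exact_mod_cast h
  refine hcast.trans ((abs_floor_sub_floor_le _ _).trans_eq ?_)
  rw [add_zero, ← sub_mul, abs_mul, abs_of_pos (pow_pos hy n)]

lemma ofReal_log_card_div_le_dimH [Finite ι] (hy : 1 < y) (hKc : IsClosed K) (hKn : K.Nonempty)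
    (hK : ∀ i, MapsTo (fun x => y⁻¹ * x + t i) K K) {D : ℝ} (hD : ∀ x ∈ K, |x| ≤ D) {g n : ℕ}
    (hg : 2 * D + 2 ≤ g) (hn : 0 < n) {V : Finset ℤ}
    (hV : ∀ v ∈ V, ∃ ω : Fin n → ι, homFloor y t 0 ω = v)
    (hsep : ∀ v ∈ V, ∀ v' ∈ V, v ≠ v' → (g : ℤ) ≤ |v - v'|) :
    ENNReal.ofReal (log V.card / (n * log y)) ≤ dimH K := by
  rcases le_or_gt V.card 1 with hone | hone
  · have hlog : log V.card ≤ 0 := log_nonpos (by positivity) (by exact_mod_cast hone)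
    have := log_pos hy
    rw [ENNReal.ofReal_of_nonpos (div_nonpos_of_nonpos_of_nonneg hlog (by positivity))]
    exact zero_le
  choose W hW using fun d => hV _ (V.equivFin.symm d).2
  rw [← log_pow]
  refine ofReal_log_div_log_le_dimH (t := fun d => homPoint y t (W d)) hone
    (one_lt_pow₀ hy hn.ne') hKc hKn (fun d x hx => inv_pow_mul_add_homPoint_mem hK (W d) hx) hD
    fun d d' hne => ?_
  have hne' : (V.equivFin.symm d : ℤ) ≠ V.equivFin.symm d' := fun h =>
    hne (V.equivFin.symm.injective (Subtype.ext h))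
  have hgap := hsep _ (V.equivFin.symm d).2 _ (V.equivFin.symm d').2 hne'
  rw [← hW d, ← hW d'] at hgap
  linarith [le_abs_homPoint_sub_mul_pow (by linarith) hgap]

variable [Fintype ι] [Nonempty ι]

lemma exists_ofReal_homEntropy_sub_div_le_dimH (hy : 1 < y) (hKc : IsCompact K) (hKn : K.Nonempty)
    (hK : ∀ i, MapsTo (fun x => y⁻¹ * x + t i) K K) :
    ∃ C : ℝ, ∀ n : ℕ, 0 < n →
      ENNReal.ofReal ((homEntropy y t n - C) / (n * log y)) ≤ dimH K := by
  obtain ⟨D, hD⟩ : ∃ D : ℝ, ∀ x ∈ K, |x| ≤ D := hKc.isBounded.exists_norm_le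
  have hD₀ : 0 ≤ D := hKn.elim fun x hx => (abs_nonneg x).trans (hD x hx)
  obtain ⟨g, hg⟩ := exists_nat_ge (2 * D + 2)
  have hg₀ : (0 : ℝ) < g := by linarith
  refine ⟨log g, fun n hn => ?_⟩
  obtain ⟨V, hVsub, hVcard, hVsep⟩ := exists_subset_separated
    (Finset.univ.image (homFloor (n := n) y t 0)) (by exact_mod_cast hg₀ : 0 < g)
  have hpos := (Finset.univ_nonempty.image (homFloor (n := n) y t 0)).card_pos
  have hV₀ : (V.card : ℝ) ≠ 0 := by
    rw [Nat.cast_ne_zero]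
    exact fun h => by simp [h, hpos.ne'] at hVcard
  have hentropy : homEntropy y t n - log g ≤ log V.card := by
    rw [sub_le_iff_le_add', ← log_mul hg₀.ne' hV₀]
    exact (homEntropy_le_log_card_image n).trans
      (log_le_log (by exact_mod_cast hpos) (by exact_mod_cast hVcard))
  refine le_trans (ENNReal.ofReal_le_ofReal ?_)
    (ofReal_log_card_div_le_dimH hy hKc.isClosed hKn hK hD hg hn (V := V) (fun v hv => ?_) hVsep)
  · have := log_pos hy
    gcongr
  · simpa using hVsub hv

theorem ofReal_log_card_div_log_le_dimH (hy : 1 < y) (hcard : log (Fintype.card ι) < log y) {r : ℕ}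
    (hinj : ∃ᶠ n in atTop, Function.Injective (homFloor (n := n) y t (r * n)))
    (hKc : IsCompact K) (hKn : K.Nonempty) (hK : ∀ i, MapsTo (fun x => y⁻¹ * x + t i) K K) :
    ENNReal.ofReal (log (Fintype.card ι) / log y) ≤ dimH K := by
  obtain ⟨C, hC⟩ := exists_ofReal_homEntropy_sub_div_le_dimH hy hKc hKn hK
  have hlim : Tendsto (fun n : ℕ => (homEntropy y t n - C) / (n * log y)) atTop
      (𝓝 (log (Fintype.card ι) / log y)) := by
    refine (((tendsto_homEntropy_div hy hcard hinj).sub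
      (tendsto_const_div_atTop_nhds_zero_nat C)).div_const (log y)).congr' ?_ |>.trans_eq ?_
    · exact Eventually.of_forall fun n => by simp only [← sub_div, div_div]
    · rw [sub_zero]
  exact le_of_tendsto (ENNReal.tendsto_ofReal hlim) ((eventually_gt_atTop 0).mono hC)

end Coding

/-! ### The lower bound under exponential separation -/

section Words

variable {N : ℕ} {lam t : Fin N → ℝ}

lemma psiWord_append (w w' : List (Fin N)) (x : ℝ) :
    psiWord lam t (w ++ w') x = psiWord lam t w (psiWord lam t w' x) := by
  induction w with
  | nil => rfl
  | cons i w ih => simp only [List.cons_append, psiWord, ih]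

lemma psiWord_eq_prod_mul_add (w : List (Fin N)) (x : ℝ) :
    psiWord lam t w x = (w.map lam).prod * x + psiWord lam t w 0 := by
  induction w with
  | nil => simp [psiWord]
  | cons i w ih =>
    simp only [psiWord, List.map_cons, List.prod_cons]
    rw [ih]
    ring

lemma mapsTo_psiWord {K : Set ℝ} (hK : ∀ i, MapsTo (fun x => lam i * x + t i) K K)
    (w : List (Fin N)) : MapsTo (psiWord lam t w) K K := by
  induction w with
  | nil => exact mapsTo_id K
  | cons i w ih => exact (hK i).comp ih

lemma psiWord_append_sub_psiWord_append {w w' : List (Fin N)}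
    (h : (w.map lam).prod = (w'.map lam).prod) (v : List (Fin N)) (x : ℝ) :
    psiWord lam t (w ++ v) x - psiWord lam t (w' ++ v) x =
      psiWord lam t w 0 - psiWord lam t w' 0 := by
  rw [psiWord_append, psiWord_append, psiWord_eq_prod_mul_add w, psiWord_eq_prod_mul_add w', h,
    add_sub_add_left_eq_sub]

/-- All words of length `m` with equal linear parts have translation parts at distance at least
`δ`: one scale of the exponential separation condition. -/
def SeparatedAt (lam t : Fin N → ℝ) (m : ℕ) (δ : ℝ) : Prop :=
  ∀ w w' : List (Fin N), w.length = m → w'.length = m → w ≠ w' →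
    (w.map lam).prod = (w'.map lam).prod → δ ≤ |psiWord lam t w 0 - psiWord lam t w' 0|

lemma HochmanESC.exists_frequently_separatedAt (h : HochmanESC N lam t) :
    ∃ ε : ℝ, 0 < ε ∧ ε ≤ 1 ∧ ∃ᶠ m in atTop, SeparatedAt lam t m (ε ^ m) := by
  obtain ⟨ε, hε, nk, hnk, hsep⟩ := h
  refine ⟨min ε 1, lt_min hε one_pos, min_le_right _ _,
    hnk.tendsto_atTop.frequently (Eventually.of_forall fun k => ?_).frequently⟩
  intro w w' hw hw' hne hprod
  obtain ⟨a, rfl⟩ : ∃ a : Fin (nk k) → Fin N, List.ofFn a = w := by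
    rw [← hw]
    exact ⟨w.get, List.ofFn_get w⟩
  obtain ⟨a', rfl⟩ : ∃ a' : Fin (nk k) → Fin N, List.ofFn a' = w' := by
    rw [← hw']
    exact ⟨w'.get, List.ofFn_get w'⟩
  rw [List.map_ofFn, List.map_ofFn, List.prod_ofFn, List.prod_ofFn] at hprod
  exact (pow_le_pow_left₀ (le_min hε.le zero_le_one) (min_le_left _ _) _).trans
    (hsep k a a' (fun heq => hne (by rw [heq])) hprod).le

/-- The word obtained by concatenating the blocks `word (ω 0)`, `word (ω 1)`, …. -/
def concatBlocks {ι α : Type*} (word : ι → List α) {n : ℕ} (ω : Fin n → ι) : List α :=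
  (List.ofFn (word ∘ ω)).flatten

section Blocks

variable {ι α : Type*} {word : ι → List α} {ℓ n : ℕ}

lemma length_concatBlocks (hlen : ∀ i, (word i).length = ℓ) (ω : Fin n → ι) :
    (concatBlocks word ω).length = n * ℓ := by
  simp [concatBlocks, List.length_flatten, List.map_ofFn, Function.comp_def, hlen]

lemma concatBlocks_injective (hlen : ∀ i, (word i).length = ℓ) (hinj : Function.Injective word) :
    Function.Injective (concatBlocks word (n := n)) := by
  intro ω ω' h
  have hofFn : List.ofFn (word ∘ ω) = List.ofFn (word ∘ ω') :=
    List.eq_iff_flatten_eq.2 ⟨h, by simp [List.map_ofFn, Function.comp_def, hlen]⟩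
  exact hinj.comp_left (List.ofFn_injective hofFn)

end Blocks

section HomogeneousBlocks

variable {ι : Type*} {word : ι → List (Fin N)} {y : ℝ} {ℓ n : ℕ}

lemma prod_map_concatBlocks (hprod : ∀ i, ((word i).map lam).prod = y⁻¹) (ω : Fin n → ι) :
    ((concatBlocks word ω).map lam).prod = y⁻¹ ^ n := by
  simp [concatBlocks, List.map_flatten, List.prod_flatten, List.map_ofFn, Function.comp_def, hprod]

lemma psiWord_concatBlocks_zero (hprod : ∀ i, ((word i).map lam).prod = y⁻¹) (ω : Fin n → ι) :
    psiWord lam t (concatBlocks word ω) 0 = homPoint y (fun i => psiWord lam t (word i) 0) ω := by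
  induction n with
  | zero => simp [concatBlocks, homPoint, psiWord]
  | succ n ih =>
    have hsplit : concatBlocks word ω =
        word (ω 0) ++ concatBlocks word fun k : Fin n => ω k.succ := by
      simp [concatBlocks, List.ofFn_succ, Function.comp_def]
    rw [hsplit, psiWord_append, psiWord_eq_prod_mul_add, hprod, ih]
    simp only [homPoint, Fin.sum_univ_succ, Fin.val_zero, Fin.val_succ, pow_zero, inv_one, one_mul,
      Finset.mul_sum, pow_succ', mul_inv, mul_assoc]
    ring

lemma SeparatedAt.le_abs_homPoint_sub {m : ℕ} {δ : ℝ} (hsep : SeparatedAt lam t m δ)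
    (hℓ : 0 < ℓ) (hlen : ∀ i, (word i).length = ℓ) (hinj : Function.Injective word)
    (hprod : ∀ i, ((word i).map lam).prod = y⁻¹) {ω ω' : Fin (m / ℓ) → ι} (hne : ω ≠ ω') :
    δ ≤ |homPoint y (fun i => psiWord lam t (word i) 0) ω -
      homPoint y (fun i => psiWord lam t (word i) 0) ω'| := by
  obtain ⟨k, -⟩ := Function.ne_iff.1 hne
  set pad := (word (ω k)).take (m % ℓ) with hpad
  have hlength : ∀ ω : Fin (m / ℓ) → ι, (concatBlocks word ω ++ pad).length = m := fun ω => by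
    rw [List.length_append, length_concatBlocks hlen, hpad, List.length_take, hlen,
      min_eq_left (Nat.mod_lt m hℓ).le, Nat.div_add_mod']
  have hprod' : ((concatBlocks word ω).map lam).prod = ((concatBlocks word ω').map lam).prod := by
    rw [prod_map_concatBlocks hprod, prod_map_concatBlocks hprod]
  rw [← psiWord_concatBlocks_zero hprod, ← psiWord_concatBlocks_zero hprod,
    ← psiWord_append_sub_psiWord_append hprod' pad]
  refine hsep _ _ (hlength ω) (hlength ω') (fun h => ?_) (by
    rw [List.map_append, List.map_append, List.prod_append, List.prod_append, hprod'])
  exact hne (concatBlocks_injective hlen hinj (List.append_cancel_right h))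

lemma HochmanESC.exists_frequently_injective_homFloor (h : HochmanESC N lam t) (hy : 1 < y)
    (hℓ : 0 < ℓ) (hlen : ∀ i, (word i).length = ℓ) (hinj : Function.Injective word)
    (hprod : ∀ i, ((word i).map lam).prod = y⁻¹) :
    ∃ r : ℕ, ∃ᶠ n in atTop, Function.Injective
      (homFloor (n := n) y (fun i => psiWord lam t (word i) 0) (r * n)) := by
  obtain ⟨ε, hε, hε1, hfreq⟩ := h.exists_frequently_separatedAt
  obtain ⟨r, hr⟩ := pow_unbounded_of_one_lt (ε ^ (2 * ℓ))⁻¹ hy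
  refine ⟨r, (Nat.tendsto_div_const_atTop hℓ.ne').frequently ((hfreq.and_eventually
    (eventually_ge_atTop ℓ)).mono fun m hm => homFloor_injective fun ω ω' hne => ?_)⟩
  have hy₀ : 0 < y := by linarith
  have hn : 1 ≤ m / ℓ := (Nat.one_le_div_iff hℓ).2 hm.2
  have hm_le : m ≤ 2 * ℓ * (m / ℓ) := by nlinarith [Nat.div_add_mod m ℓ, Nat.mod_lt m hℓ]
  have hbase : 1 ≤ ε ^ (2 * ℓ) * y ^ r := (inv_le_iff_one_le_mul₀' (by positivity)).1 hr.le
  rw [← sub_mul, abs_mul, abs_of_pos (pow_pos hy₀ _)]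
  calc (1 : ℝ) ≤ (ε ^ (2 * ℓ) * y ^ r) ^ (m / ℓ) := one_le_pow₀ hbase
    _ = ε ^ (2 * ℓ * (m / ℓ)) * y ^ (r * (m / ℓ)) := by rw [mul_pow, ← pow_mul, ← pow_mul]
    _ ≤ ε ^ m * y ^ (m / ℓ + r * (m / ℓ)) := by
        gcongr ?_ * ?_
        · exact pow_le_pow_of_le_one hε.le hε1 hm_le
        · exact pow_le_pow_right₀ hy.le (Nat.le_add_left _ _)
    _ ≤ _ := by
        gcongr
        exact hm.1.le_abs_homPoint_sub hℓ hlen hinj hprod hne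

lemma HochmanESC.ofReal_log_card_div_log_le_dimH [Fintype ι] [Nonempty ι]
    (h : HochmanESC N lam t) (hy : 1 < y) (hcard : log (Fintype.card ι) < log y)
    (hℓ : 0 < ℓ) (hlen : ∀ i, (word i).length = ℓ) (hinj : Function.Injective word)
    (hprod : ∀ i, ((word i).map lam).prod = y⁻¹) {K : Set ℝ} (hKc : IsCompact K)
    (hKn : K.Nonempty) (hK : ∀ i, MapsTo (fun x => lam i * x + t i) K K) :
    ENNReal.ofReal (log (Fintype.card ι) / log y) ≤ dimH K := by
  obtain ⟨r, hr⟩ := h.exists_frequently_injective_homFloor hy hℓ hlen hinj hprod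
  refine _root_.ofReal_log_card_div_log_le_dimH hy hcard hr hKc hKn fun i x hx => ?_
  have := mapsTo_psiWord hK (word i) hx
  rwa [psiWord_eq_prod_mul_add, hprod] at this

end HomogeneousBlocks

end Words

section TypeClass

variable {κ : Type*} [Fintype κ] {c : κ → ℝ}

lemma sum_prod_rpow_eq_pow (hc : ∀ i, 0 ≤ c i) (s : ℝ) (n : ℕ) :
    ∑ w : Fin n → κ, (∏ k, c (w k)) ^ s = (∑ i, c i ^ s) ^ n := by
  rw [Fintype.sum_pow]
  exact Finset.sum_congr rfl fun w _ => (finsetProd_rpow _ _ (fun k _ => hc _) s).symm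

/-- The product of `c` along a word depends only on the number of occurrences of each letter. -/
lemma exists_prod_eq_const_and_pow_le (hc : ∀ i, 0 ≤ c i) (s : ℝ) (n : ℕ) :
    ∃ (W : Finset (Fin n → κ)) (r : ℝ), (∀ w ∈ W, ∏ k, c (w k) = r) ∧
      (∑ i, c i ^ s) ^ n ≤ (n + 1) ^ Fintype.card κ * (W.card * r ^ s) := by
  classical
  let count (w : Fin n → κ) (i : κ) : Fin (n + 1) :=
    ⟨(Finset.univ.filter fun k => w k = i).card,
      Nat.lt_succ_of_le ((Finset.card_filter_le _ _).trans_eq (by simp))⟩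
  obtain ⟨m, -, hm⟩ := Finset.exists_le_sum_fiber_of_maps_to_of_nsmul_le_sum
    (s := (Finset.univ : Finset (Fin n → κ))) (t := Finset.univ) (f := count)
    (w := fun w => (∏ k, c (w k)) ^ s) (b := (∑ i, c i ^ s) ^ n / (n + 1) ^ Fintype.card κ)
    (fun _ _ => Finset.mem_univ _) ⟨fun _ => 0, Finset.mem_univ _⟩ (by
      rw [sum_prod_rpow_eq_pow hc, nsmul_eq_mul]
      simp [mul_div_cancel₀, Nat.cast_add_one_ne_zero])
  have hconst : ∀ w ∈ Finset.univ.filter (count · = m), ∏ k, c (w k) = ∏ i, c i ^ (m i : ℕ) := by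
    intro w hw
    rw [← (Finset.mem_filter.1 hw).2, ← Finset.prod_fiberwise' Finset.univ w c]
    exact Finset.prod_congr rfl fun i _ => Finset.prod_const _
  refine ⟨_, _, hconst, ?_⟩
  rwa [div_le_iff₀' (by positivity), Finset.sum_congr rfl fun w hw =>
    congrArg (· ^ s) (hconst w hw), Finset.sum_const, nsmul_eq_mul] at hm

lemma log_card_lt_log_inv_of_prod_eq (hc : ∀ i, 0 < c i) (hsum : ∑ i, c i < 1) {n : ℕ} (hn : 0 < n)
    {W : Finset (Fin n → κ)} (hW : W.Nonempty) {r : ℝ} (hr : ∀ w ∈ W, ∏ k, c (w k) = r) :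
    log W.card < log r⁻¹ := by
  have hprod : ∀ w : Fin n → κ, 0 < ∏ k, c (w k) := fun w => Finset.prod_pos fun k _ => hc _
  obtain ⟨w₀, hw₀⟩ := id hW
  have hr₀ : 0 < r := hr w₀ hw₀ ▸ hprod w₀
  have hcard : (0 : ℝ) < W.card := by exact_mod_cast hW.card_pos
  refine log_lt_log hcard ((lt_inv_comm₀ hcard hr₀).2 ?_)
  rw [← one_div, lt_div_iff₀' hcard]
  calc W.card * r = ∑ w ∈ W, ∏ k, c (w k) := by
        rw [Finset.sum_congr rfl hr, Finset.sum_const, nsmul_eq_mul]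
    _ ≤ ∑ w : Fin n → κ, ∏ k, c (w k) :=
        Finset.sum_le_sum_of_subset_of_nonneg (Finset.subset_univ _) fun w _ _ => (hprod w).le
    _ = (∑ i, c i) ^ n := (Fintype.sum_pow _ _).symm
    _ < 1 := pow_lt_one₀ (Finset.sum_nonneg fun i _ => (hc i).le) hsum hn.ne'

end TypeClass

lemma sub_log_div_le_log_div_log_inv {s P M r a : ℝ} (hP : 1 ≤ P) (hM : 0 < M) (hr : 0 < r)
    (h : 1 ≤ P * (M * r ^ s)) (ha : 0 < a) (har : a ≤ log r⁻¹) :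
    s - log P / a ≤ log M / log r⁻¹ := by
  have hlog : 0 ≤ log P + (log M + s * log r) := by
    rw [← log_rpow hr, ← log_mul hM.ne' (by positivity), ← log_mul (by positivity) (by positivity)]
    exact log_nonneg h
  have hdiv : log P / log r⁻¹ ≤ log P / a := div_le_div_of_nonneg_left (log_nonneg hP) ha har
  calc s - log P / a ≤ s - log P / log r⁻¹ := by linarith
    _ = (s * log r⁻¹ - log P) / log r⁻¹ := by
        rw [sub_div, mul_div_cancel_right₀ _ (ha.trans_le har).ne']
    _ ≤ log M / log r⁻¹ := by
        refine div_le_div_of_nonneg_right ?_ (ha.le.trans har)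
        rw [log_inv]
        linarith

lemma tendsto_log_pow_div_mul (a : ℝ) (ha : a ≠ 0) (k : ℕ) :
    Tendsto (fun n : ℕ => log ((n + 1 : ℝ) ^ k) / (n * a)) atTop (𝓝 0) := by
  have hlog := ((tendsto_pow_log_div_mul_add_atTop a (-a) 1 ha).comp
    (tendsto_natCast_atTop_atTop.atTop_add (tendsto_const_nhds (x := 1)))).const_mul (k : ℝ)
  rw [mul_zero] at hlog
  refine hlog.congr fun n => ?_
  simp only [Function.comp_apply, pow_one, log_pow]
  ring_nf

section LowerBound

variable {N : ℕ} {lam t : Fin N → ℝ}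

lemma HochmanESC.ofReal_sub_le_dimH (h : HochmanESC N lam t) (hlam : ∀ i, 0 < lam i)
    (hsum : ∑ i, lam i < 1) {s : ℝ} (hs : ∑ i, lam i ^ s = 1) {K : Set ℝ} (hKc : IsCompact K)
    (hKn : K.Nonempty) (hK : ∀ i, MapsTo (fun x => lam i * x + t i) K K) {n : ℕ} (hn : 0 < n) :
    ENNReal.ofReal (s - log ((n + 1 : ℝ) ^ N) / (n * log (∑ i, lam i)⁻¹)) ≤ dimH K := by
  set c := ∑ i, lam i
  have hlc : ∀ i, lam i ≤ c := fun i =>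
    Finset.single_le_sum (fun i _ => (hlam i).le) (Finset.mem_univ i)
  obtain ⟨W, r, hr, hW⟩ := exists_prod_eq_const_and_pow_le (fun i => (hlam i).le) s n
  rw [hs, one_pow, Fintype.card_fin] at hW
  have hWn : W.Nonempty := by
    rw [Finset.nonempty_iff_ne_empty]
    rintro rfl
    norm_num at hW
  have hcard := log_card_lt_log_inv_of_prod_eq hlam hsum hn hWn hr
  obtain ⟨w₀, hw₀⟩ := id hWn
  have hr₀ : 0 < r := hr w₀ hw₀ ▸ Finset.prod_pos fun k _ => hlam _
  have hc₀ : 0 < c := (hlam _).trans_le (hlc (w₀ ⟨0, hn⟩))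
  have hrc : r ≤ c ^ n := by
    rw [← hr w₀ hw₀]
    exact (Finset.prod_le_prod (fun k _ => (hlam _).le) fun k _ => hlc _).trans_eq (by simp)
  have hloginv : n * log c⁻¹ ≤ log r⁻¹ := by
    rw [← log_pow, inv_pow]
    gcongr
  have hlogc : 0 < n * log c⁻¹ :=
    mul_pos (by exact_mod_cast hn) (log_pos ((one_lt_inv₀ hc₀).2 hsum))
  have : Nonempty W := hWn.to_subtype
  have hblock := h.ofReal_log_card_div_log_le_dimH (ι := W) (word := fun w => List.ofFn w.1)
    ((log_pos_iff (inv_nonneg.2 hr₀.le)).1 (hlogc.trans_le hloginv))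
    (by rwa [Fintype.card_coe]) hn
    (fun w => List.length_ofFn) (List.ofFn_injective.comp Subtype.val_injective)
    (fun w => by
      rw [inv_inv, List.map_ofFn, List.prod_ofFn]
      exact hr w.1 w.2) hKc hKn hK
  rw [Fintype.card_coe] at hblock
  exact (ENNReal.ofReal_le_ofReal <| sub_log_div_le_log_div_log_inv
    (one_le_pow₀ (by linarith [n.cast_nonneg (α := ℝ)])) (by exact_mod_cast hWn.card_pos) hr₀ hW
    hlogc hloginv).trans hblock

theorem HochmanESC.ofReal_le_dimH (h : HochmanESC N lam t) (hlam : ∀ i, 0 < lam i)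
    (hsum : ∑ i, lam i < 1) {s : ℝ} (hs : ∑ i, lam i ^ s = 1) {K : Set ℝ} (hKc : IsCompact K)
    (hKn : K.Nonempty) (hK : ∀ i, MapsTo (fun x => lam i * x + t i) K K) :
    ENNReal.ofReal s ≤ dimH K := by
  have hc₀ : 0 < ∑ i, lam i := 
    Finset.sum_pos (fun i _ => hlam i) (Finset.nonempty_of_sum_ne_zero (hs ▸ one_ne_zero))
  have hlim := (tendsto_log_pow_div_mul (log (∑ i, lam i)⁻¹)
    (log_pos ((one_lt_inv₀ hc₀).2 hsum)).ne' N).const_sub s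
  rw [sub_zero] at hlim
  refine le_of_tendsto (ENNReal.tendsto_ofReal hlim) ((eventually_gt_atTop 0).mono fun n hn => ?_)
  exact h.ofReal_sub_le_dimH hlam hsum hs hKc hKn hK hn

end LowerBound

/-! ### The upper bound from the natural covers -/

/-- The composition `f (w 0) ∘ f (w 1) ∘ ⋯` along a finite word `w`. -/
def wordMap {ι X : Type*} (f : ι → X → X) : {n : ℕ} → (Fin n → ι) → X → X
  | 0, _ => id
  | _ + 1, w => f (w 0) ∘ wordMap f fun k => w k.succ

section IteratedFunctionSystem

variable {ι X : Type*} {f : ι → X → X} {Λ : Set X}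

lemma subset_iUnion_wordMap_image (hΛ : Λ ⊆ ⋃ i, f i '' Λ) (n : ℕ) :
    Λ ⊆ ⋃ w : Fin n → ι, wordMap f w '' Λ := by
  induction n with
  | zero => exact fun p hp => mem_iUnion.2 ⟨Fin.elim0, p, hp, rfl⟩
  | succ n ih =>
    intro p hp
    obtain ⟨i, q, hq, rfl⟩ := mem_iUnion.1 (hΛ hp)
    obtain ⟨w, z, hz, rfl⟩ := mem_iUnion.1 (ih hq)
    exact mem_iUnion.2 ⟨Fin.cons i w, z, hz, by simp [wordMap]⟩

variable [EMetricSpace X] {L : ι → NNReal}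

lemma lipschitzWith_wordMap (hf : ∀ i, LipschitzWith (L i) (f i)) {n : ℕ} (w : Fin n → ι) :
    LipschitzWith (∏ k, L (w k)) (wordMap f w) := by
  induction n with
  | zero => simpa [wordMap] using LipschitzWith.id
  | succ n ih =>
    rw [Fin.prod_univ_succ]
    exact (hf (w 0)).comp (ih fun k => w k.succ)

variable [Fintype ι]

lemma sum_prod_rpow_eq_pow_nnreal (L : ι → NNReal) (s : ℝ) (n : ℕ) :
    ∑ w : Fin n → ι, (∏ k, L (w k)) ^ s = (∑ i, L i ^ s) ^ n := by
  rw [Fintype.sum_pow]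
  exact Finset.sum_congr rfl fun w _ => (NNReal.finsetProd_rpow _ _ s).symm

theorem dimH_le_of_sum_rpow_lt_one (hf : ∀ i, LipschitzWith (L i) (f i)) (hΛ : Λ ⊆ ⋃ i, f i '' Λ)
    (hbdd : Metric.ediam Λ ≠ ⊤) {s : NNReal} (hs : 0 < s) (hL : ∑ i, L i ^ (s : ℝ) < 1) :
    dimH Λ ≤ s := by
  borelize X
  set θ := ∑ i, L i ^ (s : ℝ)
  lift Metric.ediam Λ to NNReal using hbdd with A hA
  have hdiam : ∀ (n : ℕ) (w : Fin n → ι),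
      Metric.ediam (wordMap f w '' Λ) ^ (s : ℝ) ≤
        ((∏ k, L (w k)) ^ (s : ℝ) * A ^ (s : ℝ) : NNReal) := by
    intro n w
    rw [← NNReal.mul_rpow, ENNReal.coe_rpow_of_nonneg _ s.coe_nonneg, ENNReal.coe_mul, hA]
    exact ENNReal.rpow_le_rpow ((lipschitzWith_wordMap hf w).ediam_image_le Λ) s.coe_nonneg
  have hsum : ∀ n, ∑ w : Fin n → ι, Metric.ediam (wordMap f w '' Λ) ^ (s : ℝ) ≤
      (θ ^ n * A ^ (s : ℝ) : NNReal) := by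
    intro n
    refine (Finset.sum_le_sum fun w _ => hdiam n w).trans_eq ?_
    rw [← ENNReal.ofNNReal_finsetSum, ← Finset.sum_mul, sum_prod_rpow_eq_pow_nnreal]
  have hlim : Tendsto (fun n : ℕ => ((θ ^ n * A ^ (s : ℝ) : NNReal) : ℝ≥0∞)) atTop (𝓝 0) := by
    have := (tendsto_pow_atTop_nhds_zero_of_lt_one zero_le hL).mul_const (A ^ (s : ℝ))
    rw [zero_mul] at this
    exact ENNReal.tendsto_coe.2 this
  have hmesh : Tendsto (fun n : ℕ => ((θ ^ n * A ^ (s : ℝ) : NNReal) : ℝ≥0∞) ^ (s : ℝ)⁻¹) atTop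
      (𝓝 0) := by
    have hs' : 0 < (s : ℝ)⁻¹ := by positivity
    simpa only [ENNReal.zero_rpow_of_pos hs'] using hlim.ennrpow_const (s : ℝ)⁻¹
  have hmeasure : μH[s] Λ ≤ 0 := by
    refine (Measure.hausdorffMeasure_le_liminf_sum (s : ℝ) Λ _ hmesh (fun n w => wordMap f w '' Λ)
      (Eventually.of_forall fun n w => ?_)
      (Eventually.of_forall (subset_iUnion_wordMap_image hΛ))).trans
      ((liminf_le_liminf (Eventually.of_forall hsum)).trans_eq hlim.liminf_eq)
    rw [ENNReal.le_rpow_inv_iff (by exact_mod_cast hs)]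
    exact (Finset.single_le_sum (fun _ _ => zero_le) (Finset.mem_univ w)).trans (hsum n)
  exact dimH_le_of_hausdorffMeasure_ne_top (ne_top_of_le_ne_top ENNReal.zero_ne_top hmeasure)

end IteratedFunctionSystem

/-! ### Triangular affine maps of the plane -/

/-- The affine map of the plane with linear part the lower triangular matrix `[[a, 0], [e, b]]` and
translation part `(u, v)`. -/
def triangularMap (a b u v e : ℝ) (p : ℝ × ℝ) : ℝ × ℝ :=
  (a * p.1 + u, e * p.1 + b * p.2 + v)

lemma triangularMap_comp (a b u v e a' b' u' v' e' : ℝ) :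
    triangularMap a b u v e ∘ triangularMap a' b' u' v' e' =
      triangularMap (a * a') (b * b') (a * u' + u) (e * u' + b * v' + v) (e * a' + b * e') := by
  funext p
  ext <;> simp only [triangularMap, Function.comp_apply] <;> ring

lemma exists_wordMap_SmapGen_eq {N n : ℕ} (cv bv u v d : Fin N → ℝ) (w : Fin n → Fin N) :
    ∃ U V D, wordMap (SmapGen cv bv u v d) w =
      triangularMap (∏ k, cv (w k)) (∏ k, bv (w k)) U V D := by
  induction n with
  | zero => exact ⟨0, 0, 0, by funext p; simp [wordMap, triangularMap]⟩
  | succ n ih =>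
    obtain ⟨U, V, D, hw⟩ := ih fun k => w k.succ
    rw [Fin.prod_univ_succ, Fin.prod_univ_succ, wordMap, hw]
    exact ⟨_, _, _, triangularMap_comp (cv (w 0)) (bv (w 0)) (u (w 0)) (v (w 0)) (d (w 0))
      _ _ U V D⟩

lemma lipschitzWith_triangularMap (a b u v e : ℝ) :
    LipschitzWith (max ‖a‖₊ (‖b‖₊ + ‖e‖₊)) (triangularMap a b u v e) := by
  have hfst : LipschitzWith ‖a‖₊ fun p : ℝ × ℝ => a * p.1 + u := by
    simpa using ((lipschitzWith_smul a).comp LipschitzWith.prod_fst).add (LipschitzWith.const u)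
  have hsnd : LipschitzWith (‖b‖₊ + ‖e‖₊) fun p : ℝ × ℝ => e * p.1 + b * p.2 + v := by
    simpa [add_comm ‖b‖₊] using (((lipschitzWith_smul e).comp LipschitzWith.prod_fst).add
      ((lipschitzWith_smul b).comp LipschitzWith.prod_snd)).add (LipschitzWith.const v)
  exact hfst.prodMk hsnd

lemma triangularMap_conj_rescaling (δ a b u v e : ℝ) :
    triangularMap 1 δ 0 0 0 ∘ triangularMap a b u v e =
      triangularMap a b u (δ * v) (δ * e) ∘ triangularMap 1 δ 0 0 0 := by
  simp only [triangularMap_comp]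
  congr 1 <;> ring

lemma dimH_le_dimH_rescaling_image {δ : ℝ} (hδ : δ ≠ 0) (Λ : Set (ℝ × ℝ)) :
    dimH Λ ≤ dimH (triangularMap 1 δ 0 0 0 '' Λ) := by
  have hinv : triangularMap 1 δ⁻¹ 0 0 0 ∘ triangularMap 1 δ 0 0 0 = id := by
    funext p
    simp [triangularMap, hδ]
  calc dimH Λ = dimH (triangularMap 1 δ⁻¹ 0 0 0 '' (triangularMap 1 δ 0 0 0 '' Λ)) := by
        rw [← image_comp, hinv, image_id]
    _ ≤ _ := (lipschitzWith_triangularMap 1 δ⁻¹ 0 0 0).dimH_image_le _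

lemma exists_pos_sum_max_add_rpow_lt_one {κ : Type*} [Fintype κ] {a b : κ → NNReal} {s : NNReal}
    (hsum : ∑ w, max (a w) (b w) ^ (s : ℝ) < 1) (e : κ → NNReal) :
    ∃ δ : NNReal, 0 < δ ∧ ∑ w, max (a w) (b w + δ * e w) ^ (s : ℝ) < 1 := by
  have hcont : Continuous fun δ : NNReal => ∑ w, max (a w) (b w + δ * e w) ^ (s : ℝ) :=
    continuous_finsetSum _ fun w _ => (NNReal.continuous_rpow_const s.coe_nonneg).comp (by fun_prop)
  have hnear : ∀ᶠ δ in 𝓝 (0 : NNReal), ∑ w, max (a w) (b w + δ * e w) ^ (s : ℝ) < 1 :=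
    hcont.continuousAt.eventually_lt_const (by simpa using hsum)
  exact ((eventually_mem_nhdsWithin (s := Ioi 0)).and
    (hnear.filter_mono nhdsWithin_le_nhds)).exists

/-- Rescaling the second coordinate multiplies the off-diagonal entries by an arbitrarily small
factor and fixes the diagonal ones. -/
theorem dimH_le_of_sum_max_nnnorm_rpow_lt_one {κ : Type*} [Fintype κ] {a b u v e : κ → ℝ}
    {Λ : Set (ℝ × ℝ)} (hΛ : Λ ⊆ ⋃ w, triangularMap (a w) (b w) (u w) (v w) (e w) '' Λ)
    (hbdd : Bornology.IsBounded Λ) {s : NNReal} (hs : 0 < s)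
    (hsum : ∑ w, max ‖a w‖₊ ‖b w‖₊ ^ (s : ℝ) < 1) : dimH Λ ≤ s := by
  obtain ⟨δ, hδ, hδsum⟩ := exists_pos_sum_max_add_rpow_lt_one hsum fun w => ‖e w‖₊
  have hδ' : (δ : ℝ) ≠ 0 := NNReal.coe_ne_zero.2 hδ.ne'
  refine (dimH_le_dimH_rescaling_image hδ' Λ).trans (dimH_le_of_sum_rpow_lt_one
    (fun w => lipschitzWith_triangularMap (a w) (b w) (u w) (δ * v w) (δ * e w)) ?_ ?_ hs ?_)
  · rintro _ ⟨p, hp, rfl⟩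
    obtain ⟨w, q, hq, rfl⟩ := mem_iUnion.1 (hΛ hp)
    exact mem_iUnion.2 ⟨w, _, mem_image_of_mem _ hq,
      (congrFun (triangularMap_conj_rescaling δ _ _ _ _ _) q).symm⟩
  · exact ((lipschitzWith_triangularMap 1 δ 0 0 0).isBounded_image hbdd).ediam_ne_top
  · simpa only [nnnorm_mul, NNReal.nnnorm_eq] using hδsum

theorem dimH_le_of_sum_nnnorm_rpow_lt_one {N : ℕ} {cv bv u v d : Fin N → ℝ} {Λ : Set (ℝ × ℝ)}
    (hΛ : Λ ⊆ ⋃ i, SmapGen cv bv u v d i '' Λ) (hbdd : Bornology.IsBounded Λ) {s : NNReal}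
    (hs : 0 < s) (hcv : ∑ i, ‖cv i‖₊ ^ (s : ℝ) < 1) (hbv : ∑ i, ‖bv i‖₊ ^ (s : ℝ) < 1) :
    dimH Λ ≤ s := by
  obtain ⟨n, hn⟩ : ∃ n : ℕ, (∑ i, ‖cv i‖₊ ^ (s : ℝ)) ^ n + (∑ i, ‖bv i‖₊ ^ (s : ℝ)) ^ n < 1 := by
    have := (tendsto_pow_atTop_nhds_zero_of_lt_one zero_le hcv).add
      (tendsto_pow_atTop_nhds_zero_of_lt_one zero_le hbv)
    exact (this.eventually_lt_const (by norm_num)).exists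
  choose U V D hw using exists_wordMap_SmapGen_eq (n := n) cv bv u v d
  have hcover := subset_iUnion_wordMap_image hΛ n
  simp only [hw] at hcover
  refine dimH_le_of_sum_max_nnnorm_rpow_lt_one hcover hbdd hs (lt_of_le_of_lt ?_ hn)
  simp only [← sum_prod_rpow_eq_pow_nnreal, ← Finset.sum_add_distrib, nnnorm_prod]
  refine Finset.sum_le_sum fun w _ => ?_
  rw [(NNReal.monotone_rpow_of_nonneg s.coe_nonneg).map_max]
  exact max_le_add_of_nonneg zero_le zero_le

/-! ### Comparison of the similarity dimensions -/

section SimilarityDimension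

variable {ι : Type*} [Fintype ι] [Nonempty ι] {a b : ι → ℝ} {s σ : ℝ}

lemma strictAnti_sum_mul_rpow {w : ι → ℝ} (hw : ∀ i, 0 < w i) (ha : ∀ i, a i ∈ Ioo 0 1) :
    StrictAnti fun x : ℝ => ∑ i, w i * a i ^ x := fun _ _ hxy =>
  Finset.sum_lt_sum_of_nonempty Finset.univ_nonempty fun i _ =>
    mul_lt_mul_of_pos_left (rpow_lt_rpow_of_exponent_gt (ha i).1 (ha i).2 hxy) (hw i)

lemma strictAnti_sum_rpow (ha : ∀ i, a i ∈ Ioo 0 1) :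
    StrictAnti fun x : ℝ => ∑ i, a i ^ x := by
  simpa only [one_mul] using strictAnti_sum_mul_rpow (fun _ => one_pos) ha

lemma lt_one_of_sum_rpow_eq_one (ha : ∀ i, a i ∈ Ioo 0 1) (hsum : ∑ i, a i < 1)
    (hs : ∑ i, a i ^ s = 1) : s < 1 :=
  (strictAnti_sum_rpow ha).lt_iff_gt.1 (by simpa only [rpow_one, hs] using hsum)

lemma nonneg_of_sum_rpow_eq_one (ha : ∀ i, a i ∈ Ioo 0 1) (hs : ∑ i, a i ^ s = 1) : 0 ≤ s := by
  refine (strictAnti_sum_rpow ha).le_iff_ge.1 ?_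
  simp only [hs, rpow_zero, Finset.sum_const, nsmul_eq_mul, mul_one]
  exact_mod_cast Finset.card_pos.2 Finset.univ_nonempty

lemma eq_of_sum_rpow_mul_rpow_sub_eq_one (ha : ∀ i, a i ∈ Ioo 0 1) (hb : ∀ i, b i ∈ Ioo 0 1)
    (hs : ∑ i, a i ^ s = 1) (hσ : ∑ i, a i ^ s * b i ^ (σ - s) = 1) : σ = s := by
  refine sub_eq_zero.1 ((strictAnti_sum_mul_rpow (fun i => rpow_pos_of_pos (ha i).1 s)
    hb).injective ?_)
  simpa only [rpow_zero, mul_one, hs] using hσ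

lemma le_of_sum_rpow_min_one_mul_rpow_sub_eq_one (ha : ∀ i, a i ∈ Ioo 0 1)
    (hb : ∀ i, b i ∈ Ioo 0 1) (hs : ∑ i, a i ^ s = 1)
    (hσ : ∑ i, a i ^ min s 1 * b i ^ (σ - min s 1) = 1) (hσ1 : σ < 1) : s ≤ σ := by
  have hmin : min s 1 ≤ σ := by
    refine sub_nonneg.1 ((strictAnti_sum_mul_rpow
      (fun i => rpow_pos_of_pos (ha i).1 (min s 1)) hb).le_iff_ge.1 ?_)
    simpa only [hσ, rpow_zero, mul_one, hs] using
      (strictAnti_sum_rpow ha).antitone (min_le_left s 1)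
  exact (min_le_iff.1 hmin).resolve_right hσ1.not_ge

lemma sum_nnnorm_rpow_lt_one (ha : ∀ i, a i ∈ Ioo 0 1) (hs : ∑ i, a i ^ s = 1) (hsσ : s < σ) :
    ∑ i, ‖a i‖₊ ^ σ < 1 := by
  have hcoe : ((∑ i, ‖a i‖₊ ^ σ : NNReal) : ℝ) = ∑ i, a i ^ σ := by
    push_cast
    exact Finset.sum_congr rfl fun i _ => by rw [Real.norm_of_nonneg (ha i).1.le]
  rw [← NNReal.coe_lt_coe, hcoe, NNReal.coe_one, ← hs]
  exact strictAnti_sum_rpow ha hsσ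

end SimilarityDimension

theorem dimH_le_ofReal_of_sum_rpow_eq_one {N : ℕ} [NeZero N] {cv bv u v d : Fin N → ℝ}
    {Λ : Set (ℝ × ℝ)} (hc : ∀ i, cv i ∈ Ioo 0 1) (hb : ∀ i, bv i ∈ Ioo 0 1)
    (hΛ : Λ ⊆ ⋃ i, SmapGen cv bv u v d i '' Λ) (hbdd : Bornology.IsBounded Λ) {sx sy : ℝ}
    (hsx : ∑ i, cv i ^ sx = 1) (hsy : ∑ i, bv i ^ sy = 1) (hsyx : sy ≤ sx) :
    dimH Λ ≤ ENNReal.ofReal sx := by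
  have hlim : Tendsto ENNReal.ofReal (𝓝[>] sx) (𝓝 (ENNReal.ofReal sx)) :=
    (ENNReal.continuous_ofReal.tendsto sx).mono_left nhdsWithin_le_nhds
  refine ge_of_tendsto hlim (eventually_mem_nhdsWithin.mono fun s (hs : sx < s) => ?_)
  have hs0 : 0 < s := (nonneg_of_sum_rpow_eq_one hc hsx).trans_lt hs
  lift s to NNReal using hs0.le
  rw [ENNReal.ofReal_coe_nnreal]
  exact dimH_le_of_sum_nnnorm_rpow_lt_one hΛ hbdd (by exact_mod_cast hs0)
    (sum_nnnorm_rpow_lt_one hc hsx hs) (sum_nnnorm_rpow_lt_one hb hsy (hsyx.trans_lt hs))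

lemma mapsTo_fst_image_of_mapsTo_SmapGen {N : ℕ} {cv bv u v d : Fin N → ℝ} {Λ : Set (ℝ × ℝ)}
    {i : Fin N} (hΛ : MapsTo (SmapGen cv bv u v d i) Λ Λ) :
    MapsTo (fun x => cv i * x + u i) (Prod.fst '' Λ) (Prod.fst '' Λ) := by
  rintro _ ⟨p, hp, rfl⟩
  exact ⟨_, hΛ hp, rfl⟩

theorem HochmanESC.ofReal_le_dimH_of_mapsTo {N : ℕ} {cv bv u v d : Fin N → ℝ} {Λ : Set (ℝ × ℝ)}
    (h : HochmanESC N cv u) (hc : ∀ i, 0 < cv i) (hsum : ∑ i, cv i < 1) {s : ℝ}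
    (hs : ∑ i, cv i ^ s = 1) (hΛc : IsCompact Λ) (hΛne : Λ.Nonempty)
    (hΛ : ∀ i, MapsTo (SmapGen cv bv u v d i) Λ Λ) : ENNReal.ofReal s ≤ dimH Λ :=
  calc ENNReal.ofReal s ≤ dimH (Prod.fst '' Λ) :=
        h.ofReal_le_dimH hc hsum hs (hΛc.image continuous_fst) (hΛne.image _) fun i =>
          mapsTo_fst_image_of_mapsTo_SmapGen (hΛ i)
    _ ≤ dimH Λ := LipschitzWith.prod_fst.dimH_image_le Λ

end

/-- if direction-`x` dominates, the horizontal similarity dimension is at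
most one (`∑ cᵢ < 1`), and the horizontal IFS satisfies Hochman's exponential separation
condition, then the Hausdorff dimension of the attractor is `s_x`. -/
theorem statement2 (N : ℕ) (hN : 2 ≤ N) (cv bv u v d : Fin N → ℝ)
    (hc : ∀ i, cv i ∈ Set.Ioo (0 : ℝ) 1) (hb : ∀ i, bv i ∈ Set.Ioo (0 : ℝ) 1)
    (Λ : Set (ℝ × ℝ)) (hΛne : Λ.Nonempty) (hΛc : IsCompact Λ)
    (hΛ : Λ = ⋃ i, SmapGen cv bv u v d i '' Λ)
    (sx sy sxh syh dx dy : ℝ)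
    (hsx : ∑ i, cv i ^ sx = 1) (hsy : ∑ i, bv i ^ sy = 1)
    (hsxh : sxh = min sx 1) (hsyh : syh = min sy 1)
    (hdx : ∑ i, cv i ^ sxh * bv i ^ (dx - sxh) = 1)
    (hdy : ∑ i, bv i ^ syh * cv i ^ (dy - syh) = 1)
    (hdom : dy ≤ dx)
    (hsum : ∑ i, cv i < 1)
    (hH : HochmanESC N cv u) :
    dimH Λ = ENNReal.ofReal sx := by
  have : NeZero N := ⟨by omega⟩
  have hsx1 : sx < 1 := lt_one_of_sum_rpow_eq_one hc hsum hsx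
  have hdx_eq : dx = sx := by
    rw [hsxh, min_eq_left hsx1.le] at hdx
    exact eq_of_sum_rpow_mul_rpow_sub_eq_one hc hb hsx hdx
  have hdy_le : dy ≤ sx := hdom.trans_eq hdx_eq
  have hsyx : sy ≤ sx := by
    refine le_trans ?_ hdy_le
    exact le_of_sum_rpow_min_one_mul_rpow_sub_eq_one hb hc hsy (hsyh ▸ hdy)
      (hdy_le.trans_lt hsx1)
  have hmaps : ∀ i, MapsTo (SmapGen cv bv u v d i) Λ Λ := fun i p hp => by
    rw [hΛ]
    exact mem_iUnion_of_mem i (mem_image_of_mem _ hp)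
  exact le_antisymm (dimH_le_ofReal_of_sum_rpow_eq_one hc hb hΛ.subset hΛc.isBounded hsx hsy hsyx)
    (hH.ofReal_le_dimH_of_mapsTo (fun i => (hc i).1) hsum hsx hΛc hΛne hmaps)

end
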